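/- Let c be a negative integer and suppose that c = L_n − 2^x·3^y = L_{n₁} − 2^{x₁}·3^{y₁} = L_{n₂} − 2^{x₂}·3^{y₂} for nonnegative integers with n > n₁ > n₂ and n₁ > 500. If n ≥ 60000, then min(x, x₁) < 2.4·10^17 · (log n)⁴ and min(y, y₁) < 2.4·10^17 · (log n)⁴. -/

import Mathlib

/-- The Lucas sequence: L 0 = 2, L 1 = 1, L (n+2) = L (n+1) + L n. -/
def lucas : ℕ → ℤ
  | 0 => 2
  | 1 => 1
  | n + 2 => lucas (n + 1) + lucas n

/-!
The number `min x x₁` is at most the `2`-adic valuation of `L_n - L_{n₁} = 2^x 3^y - 2^x₁ 3^y₁`,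
and `min y y₁` is at most its `3`-adic valuation. With `d = n - n₁`, both valuations are
`O(d (log n) ^ 2)`: in `ℤ[φ]` the difference `L_n - L_{n₁}` divides
`(ψ ^ d - 1) ^ t - (φ ^ t) ^ (2 n₁) (φ ^ d - 1) ^ t`, where `ψ` is the conjugate of `φ`, and a
high power of `p` dividing this makes an interpolation determinant in `φ ^ t` and `φ ^ d - 1`,
`ψ ^ d - 1` divisible by more than its size allows unless it vanishes, which a zero estimate
excludes.

It remains to see that `d = O((log n) ^ 2)`. Two Baker lower bounds `exp (-O((log n) ^ 2))` for
linear forms in `log 2`, `log 3`, `log φ` do this: the gap between `2^x₁ 3^y₁` and `2^x₂ 3^y₂`,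
which is `O(φ ^ n₁)`, gives `|c| ≤ φ ^ n₁ exp (O((log n) ^ 2))`, and then the gap between
`2^x 3^y` and `φ ^ n`, which is at most `|c| + 1`, gives `φ ^ n ≤ φ ^ n₁ exp (O((log n) ^ 2))`.
The lower bound itself comes from Baker's auxiliary function: Siegel's lemma provides an
exponential sum vanishing to high order at many integers, the Schwarz lemma and Liouville's
inequality propagate the zeros to half integers, and the linear independence of the square roots
of `2`, `3` and `φ` over `ℚ(√5)` splits the sum by the parity of the exponents, descending to a
sum with half the range until a single term is left.
-/

section ZeroEstimate

open Finset Polynomial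

theorem natDegree_det_le {n R : Type*} [Fintype n] [DecidableEq n] [CommRing R]
    {M : Matrix n n R[X]} {d : ℕ} (h : ∀ i j, (M i j).natDegree ≤ d) :
    M.det.natDegree ≤ Fintype.card n * d := by
  rw [Matrix.det_apply]
  refine natDegree_sum_le_of_forall_le _ _ fun τ _ ↦
    (natDegree_smul_le _ _).trans ((natDegree_prod_le _ _).trans ?_)
  exact Finset.sum_le_card_nsmul _ _ d fun i _ ↦ h _ _

theorem coeff_det_of_natDegree_le {n R : Type*} [Fintype n] [DecidableEq n] [CommRing R]
    {M : Matrix n n R[X]} {d : ℕ} (h : ∀ i j, (M i j).natDegree ≤ d) :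
    M.det.coeff (Fintype.card n * d) = (M.map (coeff · d)).det := by
  simp only [Matrix.det_apply, finsetSum_coeff, Polynomial.coeff_smul, Matrix.map_apply]
  refine Finset.sum_congr rfl fun τ _ ↦ ?_
  rw [← Finset.card_univ, coeff_prod_of_natDegree_le _ _ _ fun i _ ↦ h _ _]

theorem injOn_add_mul {R S : ℕ} (hRS : R ≤ S) (T : Set ℕ) :
    Set.InjOn (fun p : ℕ × ℕ ↦ p.1 + p.2 * S) (Set.Iio R ×ˢ T) := by
  rintro ⟨r, s⟩ ⟨hr, -⟩ ⟨r', s'⟩ ⟨hr', -⟩ heq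
  simp only [Set.mem_Iio] at hr hr' heq
  have hmod : r = r' := by
    simpa [Nat.mod_eq_of_lt (hr.trans_le hRS), Nat.mod_eq_of_lt (hr'.trans_le hRS)]
      using congrArg (· % S) heq
  subst hmod
  rw [Nat.eq_of_mul_eq_mul_right (by omega) (Nat.add_left_cancel heq)]

/-- The square matrix of translates of an exponential polynomial `∑ l, P l (x) * α l ^ x`. The
powers of `X` bring every entry to degree exactly `d`, so that the leading coefficient of the
determinant is a multiple of a Vandermonde determinant. -/
noncomputable def translateMatrix {F : Type*} [CommRing F] {N : ℕ} (d : ℕ) (α : Fin N → F)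
    (P : Fin N → F[X]) : Matrix (Fin N) (Fin N) F[X] :=
  Matrix.of fun i l ↦ X ^ (d - (P l).natDegree) * taylor (i : F) (P l) * C (α l ^ (i : ℕ))

section

variable {F : Type*} [CommRing F] {N d : ℕ} {α : Fin N → F} {P : Fin N → F[X]}

theorem natDegree_translateMatrix_le (hd : ∀ l, (P l).natDegree ≤ d) (i l : Fin N) :
    (translateMatrix d α P i l).natDegree ≤ d := by
  simp only [translateMatrix, Matrix.of_apply]
  refine (natDegree_mul_C_le _ _).trans (natDegree_mul_le.trans ?_)
  have hX := natDegree_X_pow_le (R := F) (d - (P l).natDegree)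
  have hl := hd l
  rw [natDegree_taylor]
  omega

theorem coeff_translateMatrix (hd : ∀ l, (P l).natDegree ≤ d) (i l : Fin N) :
    (translateMatrix d α P i l).coeff d = (P l).leadingCoeff * α l ^ (i : ℕ) := by
  obtain ⟨e, rfl⟩ := Nat.exists_eq_add_of_le (hd l)
  simp only [translateMatrix, Matrix.of_apply, Nat.add_sub_cancel_left, coeff_mul_C]
  rw [mul_comm (X ^ e), coeff_mul_X_pow, coeff_taylor_natDegree]

theorem eval_det_translateMatrix (x : F) :
    (translateMatrix d α P).det.eval x =
      (Matrix.of fun i l : Fin N ↦ (P l).eval (x + (i : ℕ)) * α l ^ (i : ℕ)).det *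
        ∏ l, x ^ (d - (P l).natDegree) := by
  rw [← Matrix.det_diagonal, ← Matrix.det_mul, ← coe_evalRingHom, RingHom.map_det]
  congr 1
  ext i l
  simp only [translateMatrix, RingHom.mapMatrix_apply, Matrix.map_apply, Matrix.of_apply,
    Matrix.mul_diagonal, coe_evalRingHom, eval_mul, eval_pow, eval_X, eval_C, taylor_eval]
  ring

variable [IsDomain F]

theorem det_translateMatrix_ne_zero (hd : ∀ l, (P l).natDegree ≤ d) (hP : ∀ l, P l ≠ 0)
    (hα : Function.Injective α) : (translateMatrix d α P).det ≠ 0 := by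
  intro hdet
  have hcoeff := coeff_det_of_natDegree_le (natDegree_translateMatrix_le (α := α) hd)
  have hfactor : (translateMatrix d α P).map (coeff · d) =
      (Matrix.vandermonde α).transpose * Matrix.diagonal fun l ↦ (P l).leadingCoeff := by
    ext i l
    rw [Matrix.map_apply, coeff_translateMatrix hd, Matrix.mul_diagonal, Matrix.transpose_apply,
      Matrix.vandermonde_apply, mul_comm]
  rw [hdet, coeff_zero, hfactor, Matrix.det_mul, Matrix.det_transpose, Matrix.det_diagonal]
    at hcoeff
  refine mul_ne_zero (Matrix.det_vandermonde_ne_zero_iff.mpr hα) ?_ hcoeff.symm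
  exact Finset.prod_ne_zero_iff.mpr fun l _ ↦ leadingCoeff_ne_zero.mpr (hP l)

/-- At a point `r + s * S` all of whose `N` translates are zeros of the exponential polynomial, the
vector `(α l ^ r * β l ^ s)` lies in the kernel of the evaluated translate matrix. -/
theorem eval_det_translateMatrix_eq_zero {β : Fin N → F} {r s S : ℕ} (hN : 0 < N)
    (hα : ∀ l, α l ≠ 0) (hβ : ∀ l, β l ≠ 0)
    (h : ∀ i < N, ∑ l, (P l).eval ((r + i + s * S : ℕ) : F) * α l ^ (r + i) * β l ^ s = 0) :
    (translateMatrix d α P).det.eval ((r + s * S : ℕ) : F) = 0 := by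
  rw [eval_det_translateMatrix]
  refine mul_eq_zero_of_left (Matrix.exists_mulVec_eq_zero_iff.mp
    ⟨fun l ↦ α l ^ r * β l ^ s, ?_, ?_⟩) _
  · exact Function.ne_iff.mpr
      ⟨⟨0, hN⟩, mul_ne_zero (pow_ne_zero _ (hα _)) (pow_ne_zero _ (hβ _))⟩
  · ext i
    rw [Matrix.mulVec, Pi.zero_apply, dotProduct, ← h i i.2]
    refine Finset.sum_congr rfl fun l _ ↦ ?_
    rw [Matrix.of_apply, show r + (i : ℕ) + s * S = r + s * S + i by ring, pow_add]
    push_cast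
    ring

theorem mul_le_of_forall_sum_eval_mul_pow_eq_zero [CharZero F] {β : Fin N → F} {R S S₀ : ℕ}
    (hN : 0 < N) (hd : ∀ l, (P l).natDegree ≤ d) (hP : ∀ l, P l ≠ 0)
    (hα : Function.Injective α) (hα₀ : ∀ l, α l ≠ 0) (hβ : ∀ l, β l ≠ 0) (hRS : R ≤ S)
    (h : ∀ r < R + N, ∀ s < S₀,
      ∑ l, (P l).eval ((r + s * S : ℕ) : F) * α l ^ r * β l ^ s = 0) : R * S₀ ≤ N * d := by
  classical
  set Z : Finset F := (range R ×ˢ range S₀).image fun p ↦ ((p.1 + p.2 * S : ℕ) : F)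
  have hcard : #Z = R * S₀ := by
    rw [card_image_of_injOn, card_product, card_range, card_range]
    rw [coe_product, coe_range, coe_range]
    exact Nat.cast_injective.comp_injOn (injOn_add_mul hRS (Set.Iio S₀))
  have hroots : Z.val ⊆ (translateMatrix d α P).det.roots := by
    intro x hx
    obtain ⟨⟨r, s⟩, hp, rfl⟩ := Finset.mem_image.mp hx
    simp only [mem_product, mem_range] at hp
    refine (mem_roots (det_translateMatrix_ne_zero hd hP hα)).mpr
      (eval_det_translateMatrix_eq_zero hN hα₀ hβ fun i hi ↦ h (r + i) (by omega) s hp.2)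
  calc R * S₀ = #Z := hcard.symm
    _ ≤ (translateMatrix d α P).det.natDegree := card_le_degree_of_subset_roots hroots
    _ ≤ N * d := by
      simpa using natDegree_det_le (natDegree_translateMatrix_le (α := α) hd)

theorem eq_zero_of_forall_sum_eval_mul_pow_eq_zero [CharZero F] {ι : Type*} [Fintype ι]
    {P : ι → F[X]} {α β : ι → F} {R S S₀ : ℕ} (hd : ∀ l, (P l).natDegree ≤ d)
    (hα : Function.Injective α) (hα₀ : ∀ l, α l ≠ 0) (hβ : ∀ l, β l ≠ 0) (hRS : R ≤ S)
    (hcard : d * Fintype.card ι < R * S₀)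
    (h : ∀ r < R + Fintype.card ι, ∀ s < S₀,
      ∑ l, (P l).eval ((r + s * S : ℕ) : F) * α l ^ r * β l ^ s = 0) : P = 0 := by
  classical
  by_contra hne
  obtain ⟨l₀, hl₀⟩ := Function.ne_iff.mp hne
  let e : {l // P l ≠ 0} ≃ Fin (Fintype.card {l // P l ≠ 0}) := Fintype.equivFin _
  have hle := Fintype.card_subtype_le fun l ↦ P l ≠ 0
  refine hcard.not_ge ((mul_le_of_forall_sum_eval_mul_pow_eq_zero (P := fun i ↦ P (e.symm i))
    (α := fun i ↦ α (e.symm i)) (β := fun i ↦ β (e.symm i)) (Fintype.card_pos_iff.mpr ⟨⟨l₀, hl₀⟩⟩)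
    (fun _ ↦ hd _) (fun i ↦ (e.symm i).2) (fun i j hij ↦ e.symm.injective (Subtype.ext (hα hij)))
    (fun _ ↦ hα₀ _) (fun _ ↦ hβ _) hRS fun r hr s hs ↦ ?_).trans ?_)
  · rw [e.symm.sum_comp fun l : {l // P l ≠ 0} ↦
      (P l).eval ((r + s * S : ℕ) : F) * α l ^ r * β l ^ s, ← h r (by omega) s hs,
      ← Finset.sum_subtype (univ.filter fun l ↦ P l ≠ 0) (by simp) fun l ↦
        (P l).eval ((r + s * S : ℕ) : F) * α l ^ r * β l ^ s]
    exact Finset.sum_subset (subset_univ _) fun l _ hl ↦ by simp_all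
  · rw [mul_comm d]
    exact Nat.mul_le_mul_right _ hle

end

end ZeroEstimate

section InterpolationMatrix

open Finset Polynomial

/-- Laurent's interpolation matrix: the row `(k, l)` is the function
`(r, s) ↦ k! * choose (r + s * S) k * (A ^ r * (V / U) ^ s) ^ l`, its columns are the points
`z j = (r, s)`, and the column of `(r, s)` is multiplied by `U ^ ((L - 1) * s)` to clear
denominators. -/
def interpolationMatrix {O ι : Type*} [CommRing O] (K L S : ℕ) (A U V : O) (z : ι → ℕ × ℕ) :
    Matrix (Fin K × Fin L) ι O :=
  Matrix.of fun i j ↦ (((z j).1 + (z j).2 * S).descFactorial i.1 : O) *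
    A ^ ((i.2 : ℕ) * (z j).1) * V ^ ((i.2 : ℕ) * (z j).2) * U ^ ((L - 1 - i.2) * (z j).2)

theorem map_det_interpolationMatrix {O O' : Type*} [CommRing O] [CommRing O'] (f : O →+* O')
    (K L S : ℕ) (A U V : O) (z : Fin K × Fin L → ℕ × ℕ) :
    f (interpolationMatrix K L S A U V z).det =
      (interpolationMatrix K L S (f A) (f U) (f V) z).det := by
  rw [RingHom.map_det]
  congr 1
  ext i j
  simp [interpolationMatrix]

theorem linearIndependent_descPochhammer (R : Type*) [CommRing R] [IsDomain R] :
    LinearIndependent R (descPochhammer R) := by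
  let T : Polynomial.Sequence R := ⟨descPochhammer R, fun i ↦ by
    rw [degree_eq_natDegree (monic_descPochhammer R i).ne_zero, descPochhammer_natDegree]⟩
  exact T.linearIndependent

theorem linearIndependent_row_interpolationMatrix {F : Type*} [CommRing F] [IsDomain F]
    [CharZero F] {K L R S S₀ : ℕ} {A U V : F} (hA : Function.Injective fun l : ℕ ↦ A ^ l)
    (hU : U ≠ 0) (hV : V ≠ 0) (hRS : R ≤ S) (hcard : (K - 1) * L < R * S₀) :
    LinearIndependent F (interpolationMatrix K L S A U V
      fun j : Fin (R + L) × Fin S₀ ↦ ((j.1 : ℕ), (j.2 : ℕ))).row := by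
  have hA₀ : A ≠ 0 := by
    rintro rfl
    exact absurd (hA (by simp : (0 : F) ^ 1 = 0 ^ 2)) (by norm_num)
  rw [Fintype.linearIndependent_iff]
  rintro c hc ⟨k, l⟩
  let P : Fin L → F[X] := fun l ↦ ∑ k : Fin K, C (c (k, l)) * descPochhammer F k
  have hP : P = 0 := by
    refine eq_zero_of_forall_sum_eval_mul_pow_eq_zero (d := K - 1) (α := fun l ↦ A ^ (l : ℕ))
      (β := fun l ↦ V ^ (l : ℕ) * U ^ (L - 1 - l)) ?_ (hA.comp Fin.val_injective)
      (fun l ↦ pow_ne_zero _ hA₀) (fun l ↦ mul_ne_zero (pow_ne_zero _ hV) (pow_ne_zero _ hU))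
      hRS (by simpa using hcard) fun r hr s hs ↦ ?_
    · refine fun l ↦ natDegree_sum_le_of_forall_le _ _ fun k _ ↦ (natDegree_C_mul_le _ _).trans ?_
      rw [descPochhammer_natDegree]
      omega
    · have hrs := congrFun hc (⟨r, by simpa using hr⟩, ⟨s, hs⟩)
      rw [Finset.sum_apply, Fintype.sum_prod_type_right, Pi.zero_apply] at hrs
      rw [← hrs]
      refine Finset.sum_congr rfl fun l _ ↦ ?_
      simp only [P, eval_finsetSum, Finset.sum_mul, eval_mul, eval_C,
        descPochhammer_eval_eq_descFactorial, Matrix.row_def, interpolationMatrix, Matrix.of_apply,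
        Pi.smul_apply, smul_eq_mul]
      refine Finset.sum_congr rfl fun k _ ↦ ?_
      rw [mul_pow, pow_mul, pow_mul, pow_mul]
      ring
  have hind := (linearIndependent_descPochhammer F).comp (fun k : Fin K ↦ (k : ℕ)) Fin.val_injective
  exact Fintype.linearIndependent_iff.mp hind (fun k ↦ c (k, l))
    (by simpa [P, smul_eq_C_mul] using congrFun hP l) k

theorem exists_submatrix_det_ne_zero {F m n : Type*} [Field F] [Fintype m] [DecidableEq m]
    [Finite n] {A : Matrix m n F} (h : LinearIndependent F A.row) :
    ∃ f : m → n, (A.submatrix id f).det ≠ 0 := by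
  have := Fintype.ofFinite n
  have hrank := h.rank_matrix
  rw [Matrix.rank_eq_finrank_span_cols] at hrank
  obtain ⟨g, hg, -, hind⟩ := Submodule.exists_fun_fin_finrank_span_eq F (Set.range A.col)
  choose c hc using hg
  let e : m ≃ Fin (Module.finrank F (Submodule.span F (Set.range A.col))) :=
    Fintype.equivFinOfCardEq hrank.symm
  refine ⟨c ∘ e, ?_⟩
  have hrow : LinearIndependent F (A.submatrix id (c ∘ e)).transpose.row := by
    have hcol : (A.submatrix id (c ∘ e)).transpose.row = g ∘ e := by
      ext i j
      exact congrFun (hc (e i)) j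
    exact hcol ▸ hind.comp _ e.injective
  rw [Matrix.linearIndependent_rows_iff_isUnit, Matrix.isUnit_iff_isUnit_det,
    Matrix.det_transpose] at hrow
  exact hrow.ne_zero

theorem exists_det_interpolationMatrix_ne_zero {F : Type*} [Field F] [CharZero F]
    {K L R S S₀ : ℕ} {A U V : F} (hA : Function.Injective fun l : ℕ ↦ A ^ l)
    (hU : U ≠ 0) (hV : V ≠ 0) (hRS : R ≤ S) (hcard : (K - 1) * L < R * S₀) :
    ∃ z : Fin K × Fin L → ℕ × ℕ, (∀ j, (z j).1 ≤ R + L ∧ (z j).2 ≤ S₀) ∧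
      (interpolationMatrix K L S A U V z).det ≠ 0 := by
  obtain ⟨f, hf⟩ := exists_submatrix_det_ne_zero
    (linearIndependent_row_interpolationMatrix hA hU hV hRS hcard)
  exact ⟨fun j ↦ ((f j).1, (f j).2), fun j ↦ ⟨(f j).1.2.le, (f j).2.2.le⟩, hf⟩

end InterpolationMatrix

section Divisibility

open Finset

theorem pow_dvd_det_of_forall_eq_sum {O n ι : Type*} [CommRing O] [Fintype n] [DecidableEq n]
    [Fintype ι] {q : O} {G : ℕ} {e : ι → ℕ} {C : n → ι → O} {B : ι → n → O} {M : Matrix n n O}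
    (hG : ∀ σ : n → ι, Function.Injective σ → G ≤ ∑ i, e (σ i))
    (hM : ∀ i j, M i j = ∑ t, C i t * (q ^ e t * B t j)) : q ^ G ∣ M.det := by
  have hrows : M = fun i ↦ ∑ t, (C i t * q ^ e t) • B t := by
    ext i j
    rw [hM, Finset.sum_apply]
    exact Finset.sum_congr rfl fun t _ ↦ by simp [mul_assoc]
  have hexpand : M.det = ∑ σ : n → ι, Matrix.detRowAlternating
      (fun i ↦ (C i (σ i) * q ^ e (σ i)) • B (σ i)) := by
    rw [hrows]
    exact MultilinearMap.map_sum (Matrix.detRowAlternating (n := n) (R := O)).toMultilinearMap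
      (fun (i : n) (t : ι) ↦ (C i t * q ^ e t) • B t)
  rw [hexpand]
  refine Finset.dvd_sum fun σ _ ↦ ?_
  have hsmul : Matrix.detRowAlternating (fun i ↦ (C i (σ i) * q ^ e (σ i)) • B (σ i)) =
      (∏ i, (C i (σ i) * q ^ e (σ i))) • Matrix.detRowAlternating (fun i ↦ B (σ i)) :=
    MultilinearMap.map_smul_univ
      (Matrix.detRowAlternating (n := n) (R := O)).toMultilinearMap _ _
  rw [hsmul, Finset.prod_mul_distrib, Finset.prod_pow_eq_pow_sum, smul_eq_mul]
  by_cases hσ : Function.Injective σ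
  · exact ((pow_dvd_pow q (hG σ hσ)).mul_left _).mul_right _
  · obtain ⟨i, j, hij, hne⟩ : ∃ i j, σ i = σ j ∧ i ≠ j := by
      simpa [Function.Injective] using hσ
    rw [AlternatingMap.map_eq_zero_of_eq _ (fun i ↦ B (σ i)) (congrArg B hij) hne, mul_zero]
    exact dvd_zero _

theorem card_mul_pred_div_two_le_sum {n : Type*} [Fintype n] {w : n → ℕ}
    (h : ∀ k < Fintype.card n, #{i | w i ≤ k} ≤ k + 1) :
    Fintype.card n * (Fintype.card n - 1) / 2 ≤ ∑ i, w i := by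
  set N := Fintype.card n with hN
  calc N * (N - 1) / 2 = ∑ k ∈ range N, (N - 1 - k) := by
        rw [Finset.sum_range_reflect (fun j ↦ j), Finset.sum_range_id]
    _ ≤ ∑ k ∈ range N, #{i | k < w i} := by
        refine Finset.sum_le_sum fun k hk ↦ ?_
        have hcompl := Finset.card_filter_add_card_filter_not (s := (univ : Finset n)) (k < w ·)
        have hle := h k (mem_range.mp hk)
        simp only [not_lt, card_univ, ← hN] at hcompl
        omega
    _ = ∑ i, #{k ∈ range N | k < w i} := by
        simp only [Finset.card_filter]
        exact Finset.sum_comm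
    _ ≤ ∑ i, w i := by
        refine Finset.sum_le_sum fun i _ ↦ ?_
        calc #{k ∈ range N | k < w i} ≤ #(range (w i)) := by
              refine Finset.card_le_card fun k hk ↦ ?_
              exact mem_range.mpr (mem_filter.mp hk).2
          _ = w i := card_range _

theorem le_sum_of_injective {n ι : Type*} [Fintype n] {Z K : ℕ} {e : Fin Z ⊕ ι → ℕ}
    (hl : ∀ j, e (Sum.inl j) = j - K) (hr : ∀ c, Fintype.card n ≤ e (Sum.inr c))
    {σ : n → Fin Z ⊕ ι} (hσ : Function.Injective σ) :
    Fintype.card n * (Fintype.card n - 1) / 2 - Fintype.card n * K ≤ ∑ i, e (σ i) := by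
  have hcount : ∀ k < Fintype.card n, #{i | e (σ i) + K ≤ k} ≤ k + 1 := by
    intro k hk
    have hsmall : ∀ i, e (σ i) + K ≤ k → ∃ j : Fin Z, σ i = Sum.inl j ∧ (j : ℕ) ≤ k := by
      intro i hi
      rcases hs : σ i with j | c
      · exact ⟨j, rfl, by rw [hs, hl] at hi; omega⟩
      · exact absurd (hr c) (by rw [hs] at hi; omega)
    rw [← card_range (k + 1)]
    refine Finset.card_le_card_of_injOn
      (fun i ↦ Sum.elim (fun j : Fin Z ↦ (j : ℕ)) (fun _ ↦ 0) (σ i)) ?_ ?_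
    · intro i hi
      obtain ⟨j, hj, hjk⟩ := hsmall i (by simpa using hi)
      simp only [hj, Sum.elim_inl, coe_range, Set.mem_Iio]
      omega
    · intro i hi i' hi' heq
      obtain ⟨j, hj, -⟩ := hsmall i (by simpa using hi)
      obtain ⟨j', hj', -⟩ := hsmall i' (by simpa using hi')
      simp only [hj, hj', Sum.elim_inl] at heq
      exact hσ (by rw [hj, hj', Fin.ext heq])
  have hsum := card_mul_pred_div_two_le_sum hcount
  simp only [Finset.sum_add_distrib, sum_const, card_univ, smul_eq_mul] at hsum
  omega

theorem fwdDiff_descFactorial_mul_pow {O : Type*} [CommRing O] (B : O) (k : ℕ) :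
    fwdDiff 1 (fun z : ℕ ↦ (z.descFactorial k : O) * B ^ z) =
      (B - 1) • (fun z : ℕ ↦ (z.descFactorial k : O) * B ^ z) +
      (k * B) • (fun z : ℕ ↦ (z.descFactorial (k - 1) : O) * B ^ z) := by
  ext z
  simp only [fwdDiff, Pi.add_apply, Pi.smul_apply, smul_eq_mul]
  cases k with
  | zero => simp [pow_succ]; ring
  | succ k =>
    have hsucc : (z + 1).descFactorial (k + 1) =
        z.descFactorial (k + 1) + (k + 1) * z.descFactorial k := by
      rw [Nat.succ_descFactorial_succ, Nat.descFactorial_succ]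
      rcases lt_or_ge z k with hlt | hge
      · simp [Nat.descFactorial_of_lt hlt]
      · rw [← add_mul]
        congr 1
        omega
    rw [hsucc]
    push_cast
    ring

theorem pow_dvd_fwdDiff_iter {O : Type*} [CommRing O] {q B : O} (hB : q ∣ B - 1) (j k ζ : ℕ) :
    q ^ (j - k) ∣ (fwdDiff 1)^[j] (fun z : ℕ ↦ (z.descFactorial k : O) * B ^ z) ζ := by
  induction j generalizing k with
  | zero => simp
  | succ j ih =>
    rw [Function.iterate_succ_apply, fwdDiff_descFactorial_mul_pow, fwdDiff_iter_add,
      fwdDiff_iter_const_smul, fwdDiff_iter_const_smul]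
    simp only [Pi.add_apply, Pi.smul_apply, smul_eq_mul]
    refine dvd_add ?_ ?_
    · refine (pow_dvd_pow q (by omega : j + 1 - k ≤ 1 + (j - k))).trans ?_
      rw [pow_add, pow_one]
      exact mul_dvd_mul hB (ih k)
    · cases k with
      | zero => simp
      | succ k => simpa using (ih k).mul_left _

/-- The Gregory-Newton expansion turns the congruence `B ≡ 1 mod q` into divisibility of the
coefficients. -/
theorem exists_descFactorial_mul_pow_eq_sum_choose {O : Type*} [CommRing O] {q B : O}
    (hB : q ∣ B - 1) {k K : ℕ} (hk : k ≤ K) :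
    ∃ D : ℕ → O, ∀ Z, ∀ ζ < Z, (ζ.descFactorial k : O) * B ^ ζ =
      ∑ j : Fin Z, D j * (q ^ ((j : ℕ) - K) * (ζ.choose j : O)) := by
  choose D hD using fun j ↦
    (pow_dvd_pow q (Nat.sub_le_sub_left hk j)).trans (pow_dvd_fwdDiff_iter hB j k 0)
  refine ⟨D, fun Z ζ hζ ↦ ?_⟩
  have hnewton := shift_eq_sum_fwdDiff_iter (1 : ℕ)
    (fun z : ℕ ↦ (z.descFactorial k : O) * B ^ z) ζ 0
  simp only [smul_eq_mul, mul_one, zero_add] at hnewton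
  rw [hnewton, Fin.sum_univ_eq_sum_range (fun j ↦ D j * (q ^ (j - K) * (ζ.choose j : O))) Z]
  refine (Finset.sum_subset (Finset.range_subset_range.mpr hζ) fun j _ hj ↦ ?_).trans
    (Finset.sum_congr rfl fun j _ ↦ ?_)
  · rw [Nat.choose_eq_zero_of_lt (by simpa using hj), zero_smul]
  · rw [hD, nsmul_eq_mul]
    ring

/-- Writing `V ≡ A ^ S * U mod q ^ m` and `ζ = r + s * S`, the entry of row `(k, l)` is
`k! * choose ζ k * (A ^ l) ^ ζ * U ^ ((L - 1) * s)` up to a multiple of `q ^ m`. -/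
theorem pow_dvd_det_interpolationMatrix {O : Type*} [CommRing O] {q A U V : O} {K L S m : ℕ}
    (hA : q ∣ A - 1) (hUV : q ^ m ∣ V - A ^ S * U) (hm : K * L ≤ m)
    (z : Fin K × Fin L → ℕ × ℕ) :
    q ^ (K * L * (K * L - 1) / 2 - K * L * K) ∣ (interpolationMatrix K L S A U V z).det := by
  have hV : ∀ t : ℕ, ∃ y, V ^ t = (A ^ S * U) ^ t + q ^ m * y := by
    intro t
    obtain ⟨y, hy⟩ := hUV.trans (sub_dvd_pow_sub_pow V (A ^ S * U) t)
    exact ⟨y, by rw [← hy]; ring⟩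
  choose y hy using hV
  choose D hD using fun i : Fin K × Fin L ↦ exists_descFactorial_mul_pow_eq_sum_choose
    (hA.trans (by simpa using sub_dvd_pow_sub_pow A 1 i.2)) i.1.2.le
  set ζ : Fin K × Fin L → ℕ := fun j ↦ (z j).1 + (z j).2 * S with hζ
  set Z := (univ.sup ζ) + 1
  have hZ : ∀ j, ζ j < Z := fun j ↦ Nat.lt_succ_of_le (Finset.le_sup (mem_univ j))
  let e : Fin Z ⊕ (Fin K × Fin L) → ℕ := Sum.elim (fun j ↦ j - K) (fun _ ↦ m)
  refine pow_dvd_det_of_forall_eq_sum (e := e)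
    (C := fun i ↦ Sum.elim (fun j ↦ D i j) (fun c ↦ ((ζ c).descFactorial i.1 : O) *
      A ^ ((i.2 : ℕ) * (z c).1) * y ((i.2 : ℕ) * (z c).2) * U ^ ((L - 1 - i.2) * (z c).2)))
    (B := Sum.elim (fun j c ↦ ((ζ c).choose j : O) * U ^ ((L - 1) * (z c).2))
      (fun c c' ↦ if c = c' then 1 else 0)) (fun σ hσ ↦ ?_) fun i c ↦ ?_
  · simpa using le_sum_of_injective (K := K) (e := e) (fun j ↦ rfl)
      (fun c ↦ by simpa [e] using hm) hσ
  · have hmain : ∑ j : Fin Z, D i j * (q ^ ((j : ℕ) - K) * (((ζ c).choose j : O) *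
        U ^ ((L - 1) * (z c).2))) =
        ((ζ c).descFactorial i.1 : O) * (A ^ (i.2 : ℕ)) ^ ζ c * U ^ ((L - 1) * (z c).2) := by
      rw [hD i Z _ (hZ c), Finset.sum_mul]
      exact Finset.sum_congr rfl fun j _ ↦ by ring
    have hU : U ^ ((L - 1) * (z c).2) =
        U ^ ((i.2 : ℕ) * (z c).2) * U ^ ((L - 1 - i.2) * (z c).2) := by
      rw [← pow_add, ← add_mul, Nat.add_sub_cancel' (Nat.le_sub_one_of_lt i.2.2)]
    rw [Fintype.sum_sum_type, Finset.sum_eq_single c (fun c' _ h ↦ by simp [h]) (by simp)]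
    simp only [Sum.elim_inl, Sum.elim_inr, e, if_pos]
    rw [hmain, hU]
    simp only [interpolationMatrix, Matrix.of_apply, hy, mul_pow, ← pow_mul A, hζ]
    ring

end Divisibility

section InterpolationInequality

open Finset Real

theorem absoluteValue_det_le_factorial_mul_prod {n R S : Type*} [Fintype n] [DecidableEq n]
    [CommRing R] [Nontrivial R] [CommRing S] [LinearOrder S] [IsStrictOrderedRing S]
    (abv : AbsoluteValue R S) {M : Matrix n n R} {b : n → S} (hb : ∀ i j, abv (M i j) ≤ b i) :
    abv M.det ≤ (Fintype.card n).factorial * ∏ i, b i := by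
  rw [← Matrix.det_transpose, Matrix.det_apply]
  calc abv (∑ σ : Equiv.Perm n, Equiv.Perm.sign σ • ∏ i, M.transpose (σ i) i)
      ≤ ∑ σ : Equiv.Perm n, ∏ i, abv (M i (σ i)) := by
        refine (abv.sum_le _ _).trans_eq (Finset.sum_congr rfl fun σ _ ↦ ?_)
        rw [abv.map_units_int_smul, abv.map_prod]
        rfl
    _ ≤ ∑ _σ : Equiv.Perm n, ∏ i, b i := by
        gcongr with σ _ i _
        exact hb _ _
    _ = (Fintype.card n).factorial * ∏ i, b i := by simp [Fintype.card_perm]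

theorem sum_fin_prod_linear (K L : ℕ) (x y w : ℝ) :
    ∑ i : Fin K × Fin L, ((i.1 : ℕ) * x + (i.2 : ℕ) * y + w) =
      K * L * ((K - 1) / 2 * x + (L - 1) / 2 * y + w) := by
  have hid : ∀ n : ℕ, ∑ i : Fin n, ((i : ℕ) : ℝ) = n * (n - 1) / 2 := by
    intro n
    induction n with
    | zero => simp
    | succ n ih =>
      rw [Fin.sum_univ_castSucc]
      simp only [Fin.val_castSucc, ih, Fin.val_last]
      push_cast
      ring
  rw [Fintype.sum_prod_type]
  simp only [Finset.sum_add_distrib, ← Finset.sum_mul, hid, Finset.sum_const, Finset.card_univ,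
    Fintype.card_fin, nsmul_eq_mul, ← Finset.mul_sum]
  ring

section

variable {K L S R S₀ : ℕ} {A U V a u : ℝ} {z : Fin K × Fin L → ℕ × ℕ}

theorem abs_interpolationMatrix_le (hR : 0 < R) (hz : ∀ j, (z j).1 ≤ R ∧ (z j).2 ≤ S₀)
    (ha : 1 ≤ a) (hu : 0 ≤ u) (hA : |A| ≤ a) (hU : |U| ≤ exp u) (hV : |V| ≤ exp u)
    (i j : Fin K × Fin L) :
    |interpolationMatrix K L S A U V z i j| ≤
      exp ((i.1 : ℕ) * log (R + S₀ * S) + (i.2 : ℕ) * (R * log a) + (L - 1) * S₀ * u) := by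
  obtain ⟨hr, hs⟩ := hz j
  have hL : 1 ≤ L := i.2.pos
  have hdesc : (((z j).1 + (z j).2 * S).descFactorial i.1 : ℝ) ≤
      exp ((i.1 : ℕ) * log (R + S₀ * S)) := by
    rw [exp_nat_mul, exp_log (by positivity)]
    calc (((z j).1 + (z j).2 * S).descFactorial i.1 : ℝ)
        ≤ ((((z j).1 + (z j).2 * S) ^ (i.1 : ℕ) : ℕ) : ℝ) := by
          exact_mod_cast Nat.descFactorial_le_pow _ _
      _ ≤ _ := by push_cast; gcongr
  have hApow : |A| ^ ((i.2 : ℕ) * (z j).1) ≤ exp ((i.2 : ℕ) * (R * log a)) := by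
    rw [exp_nat_mul, exp_nat_mul, exp_log (by linarith), ← pow_mul, mul_comm R]
    calc |A| ^ ((i.2 : ℕ) * (z j).1) ≤ a ^ ((i.2 : ℕ) * (z j).1) := by gcongr
      _ ≤ a ^ ((i.2 : ℕ) * R) := by gcongr
  have hUV : |V| ^ ((i.2 : ℕ) * (z j).2) * |U| ^ ((L - 1 - i.2) * (z j).2) ≤
      exp ((L - 1) * S₀ * u) := by
    calc |V| ^ ((i.2 : ℕ) * (z j).2) * |U| ^ ((L - 1 - i.2) * (z j).2)
        ≤ exp u ^ ((i.2 : ℕ) * (z j).2) * exp u ^ ((L - 1 - i.2) * (z j).2) := by gcongr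
      _ = exp u ^ ((L - 1) * (z j).2) := by
        rw [← pow_add, ← add_mul, Nat.add_sub_cancel' (Nat.le_sub_one_of_lt i.2.2)]
      _ ≤ exp u ^ ((L - 1) * S₀) := by gcongr; exact one_le_exp hu
      _ = exp ((L - 1) * S₀ * u) := by
        rw [← exp_nat_mul]
        push_cast [Nat.cast_sub hL]
        rfl
  simp only [interpolationMatrix, Matrix.of_apply, abs_mul, abs_pow, Nat.abs_cast]
  rw [mul_assoc (_ * _), exp_add, exp_add]
  gcongr

theorem log_abs_det_interpolationMatrix_le (hR : 0 < R)
    (hz : ∀ j, (z j).1 ≤ R ∧ (z j).2 ≤ S₀) (ha : 1 ≤ a) (hu : 0 ≤ u) (hA : |A| ≤ a)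
    (hU : |U| ≤ exp u) (hV : |V| ≤ exp u) (hdet : (interpolationMatrix K L S A U V z).det ≠ 0) :
    log |(interpolationMatrix K L S A U V z).det| ≤ K * L * (log (K * L) +
      ((K - 1) / 2 * log (R + S₀ * S) + (L - 1) / 2 * (R * log a) + (L - 1) * S₀ * u)) := by
  have hbound := absoluteValue_det_le_factorial_mul_prod AbsoluteValue.abs
    (abs_interpolationMatrix_le hR hz ha hu hA hU hV (S := S))
  rw [← exp_sum, sum_fin_prod_linear, Fintype.card_prod, Fintype.card_fin, Fintype.card_fin]
    at hbound
  have hfact : log ((K * L).factorial : ℝ) ≤ K * L * log (K * L) := by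
    calc log ((K * L).factorial : ℝ) ≤ log (((K * L) ^ (K * L) : ℕ) : ℝ) :=
          log_le_log (by positivity) (by exact_mod_cast Nat.factorial_le_pow _)
      _ = _ := by rw [Nat.cast_pow, log_pow, Nat.cast_mul]
  calc log |(interpolationMatrix K L S A U V z).det|
      ≤ log ((K * L).factorial * exp _) := log_le_log (abs_pos.mpr hdet) hbound
    _ = _ := log_mul (by positivity) (exp_ne_zero _)
    _ ≤ _ := by
      rw [log_exp, mul_add]
      linarith

end

theorem two_mul_log_le_of_pow_dvd {O : Type*} [CommRing O] {ι ι' : O →+* ℝ}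
    (hnorm : ∀ x : O, x ≠ 0 → 1 ≤ |ι x| * |ι' x|) {q G : ℕ} (hq : 0 < q) {x : O} (hx : x ≠ 0)
    (h : (q : O) ^ G ∣ x) : 2 * G * log q ≤ log |ι x| + log |ι' x| := by
  obtain ⟨y, rfl⟩ := h
  have hy := hnorm y (right_ne_zero_of_mul hx)
  have hy₀ : 0 < |ι y| * |ι' y| := by linarith
  have hyι : |ι y| ≠ 0 := left_ne_zero_of_mul hy₀.ne'
  have hyι' : |ι' y| ≠ 0 := right_ne_zero_of_mul hy₀.ne'
  have hlog := log_nonneg hy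
  rw [log_mul hyι hyι'] at hlog
  simp only [map_mul, map_pow, map_natCast, abs_mul, abs_pow, Nat.abs_cast]
  rw [log_mul (by positivity) hyι, log_mul (by positivity) hyι', log_pow]
  linarith

/-- Compare the divisibility of the interpolation determinant by a power of `q` with its
archimedean size at both embeddings. -/
theorem log_mul_le_of_pow_dvd_sub {O : Type*} [CommRing O] {ι ι' : O →+* ℝ}
    (hnorm : ∀ x : O, x ≠ 0 → 1 ≤ |ι x| * |ι' x|) {q : ℕ} (hq : 0 < q) {A U V : O}
    {K L R S S₀ m : ℕ} {u : ℝ} (hu : 0 ≤ u) (hA : (q : O) ∣ A - 1)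
    (hUV : (q : O) ^ m ∣ V - A ^ S * U) (hιA : 1 < ι A) (hι'A : |ι' A| ≤ 1)
    (hU : |ι U| ≤ exp u) (hU' : |ι' U| ≤ exp u) (hV : |ι V| ≤ exp u) (hV' : |ι' V| ≤ exp u)
    (hU₀ : ι U ≠ 0) (hV₀ : ι V ≠ 0) (hRS : R ≤ S) (hcard : (K - 1) * L < R * S₀)
    (hm : K * L ≤ m) (hK : 0 < K) (hL : 0 < L) :
    log q * (K * L - 1 - 2 * K) ≤ 2 * log (K * L) + (K - 1) * log (R + L + S₀ * S) +
      (L - 1) / 2 * (R + L) * log (ι A) + 2 * (L - 1) * S₀ * u := by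
  obtain ⟨z, hz, hdet⟩ := exists_det_interpolationMatrix_ne_zero
    (pow_right_strictMono₀ hιA).injective hU₀ hV₀ hRS hcard
  set Δ := (interpolationMatrix K L S A U V z).det with hΔ
  have hΔι := map_det_interpolationMatrix ι K L S A U V z
  have hΔι' := map_det_interpolationMatrix ι' K L S A U V z
  have hΔ₀ : Δ ≠ 0 := fun h ↦ hdet (by rw [← hΔι, ← hΔ, h, map_zero])
  have hdvd := two_mul_log_le_of_pow_dvd hnorm hq hΔ₀ (pow_dvd_det_interpolationMatrix hA hUV hm z)
  have hnorm₀ := zero_lt_one.trans_le (hnorm Δ hΔ₀)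
  rw [← hΔ] at hΔι hΔι'
  have hup := log_abs_det_interpolationMatrix_le (by omega) hz hιA.le hu
    (abs_of_pos (zero_lt_one.trans hιA)).le hU hV hdet
  have hup' := log_abs_det_interpolationMatrix_le (by omega) hz le_rfl hu hι'A hU' hV'
    (hΔι' ▸ abs_ne_zero.mp (right_ne_zero_of_mul hnorm₀.ne'))
  rw [← hΔι] at hup
  rw [← hΔι', log_one] at hup'
  have hG : ((K * L : ℕ) : ℝ) * (K * L - 1 - 2 * K) ≤
      2 * ((K * L * (K * L - 1) / 2 - K * L * K : ℕ) : ℝ) := by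
    have heven : 2 * (K * L * (K * L - 1) / 2) = K * L * (K * L - 1) :=
      Nat.mul_div_cancel' (Nat.even_mul_pred_self _).two_dvd
    have hle : K * L * (K * L - 1) ≤
        2 * (K * L * (K * L - 1) / 2 - K * L * K) + 2 * (K * L * K) := by omega
    have hcast := (Nat.cast_le (α := ℝ)).mpr hle
    push_cast [Nat.cast_sub (Nat.mul_pos hK hL : 1 ≤ K * L)] at hcast ⊢
    linarith
  have hlogq : 0 ≤ log q := log_natCast_nonneg q
  refine le_of_mul_le_mul_left ?_ (by positivity : (0 : ℝ) < K * L)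
  have hmain := mul_le_mul_of_nonneg_right hG hlogq
  push_cast at hmain hup hup' hdvd
  linarith

end InterpolationInequality

section Lucas

theorem lucas_eq_pow_add_pow {O : Type*} [CommRing O] {a b : O} (hadd : a + b = 1)
    (hmul : a * b = -1) (n : ℕ) : (lucas n : O) = a ^ n + b ^ n := by
  have ha : a ^ 2 = a + 1 := by linear_combination a * hadd - hmul
  have hb : b ^ 2 = b + 1 := by linear_combination b * hadd - hmul
  induction n using Nat.twoStepInduction with
  | zero => norm_num [lucas]
  | one => simp [lucas, hadd]
  | more n h0 h1 =>
    rw [lucas, Int.cast_add, h0, h1]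
    linear_combination (-a ^ n) * ha - b ^ n * hb

/-- Multiplying `lucas (n + d) - lucas n` by `a ^ n` gives
`a ^ (2 * n) * (a ^ d - 1) ± (b ^ d - 1)`, and the even exponent removes the sign. -/
theorem lucas_sub_lucas_dvd {O : Type*} [CommRing O] {a b : O} (hadd : a + b = 1)
    (hmul : a * b = -1) {t : ℕ} (ht : Even t) (n d : ℕ) :
    ((lucas (n + d) - lucas n : ℤ) : O) ∣
      (b ^ d - 1) ^ t - (a ^ t) ^ (2 * n) * (a ^ d - 1) ^ t := by
  have hab : a ^ n * b ^ n = (-1) ^ n := by rw [← mul_pow, hmul]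
  have hdvd : ((lucas (n + d) - lucas n : ℤ) : O) ∣
      a ^ (2 * n) * (a ^ d - 1) - -((-1) ^ n * (b ^ d - 1)) := by
    refine ⟨a ^ n, ?_⟩
    rw [Int.cast_sub, lucas_eq_pow_add_pow hadd hmul, lucas_eq_pow_add_pow hadd hmul]
    linear_combination (-(b ^ d - 1)) * hab
  have hpow := hdvd.trans (sub_dvd_pow_sub_pow _ _ t)
  rw [ht.neg_pow, mul_pow, mul_pow, ← pow_mul (-1 : O), (ht.mul_left n).neg_one_pow, one_mul,
    ← pow_mul a, mul_comm (2 * n), pow_mul a t] at hpow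
  exact (dvd_sub_comm).mp hpow

end Lucas

section GoldenRatio

open Real

theorem log_goldenRatio_lt : log goldenRatio < 0.4814 := by
  have hpow : goldenRatio ^ 36 < 2 ^ 25 := by
    have hsqrt : √5 < 2.23607 := (Real.sqrt_lt' (by norm_num)).mpr (by norm_num)
    calc goldenRatio ^ 36 < 1.618035 ^ 36 := by
          refine pow_lt_pow_left₀ ?_ goldenRatio_pos.le (by norm_num)
          rw [goldenRatio]
          linarith
      _ < 2 ^ 25 := by norm_num
  have hlog := log_lt_log (pow_pos goldenRatio_pos _) hpow
  rw [log_pow, log_pow] at hlog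
  push_cast at hlog
  linarith [log_two_lt_d9]

theorem lt_log_goldenRatio : 0.4798 < log goldenRatio := by
  have hpow : 2 ^ 9 < goldenRatio ^ 13 := by
    have hsqrt : 2.236 < √5 := (Real.lt_sqrt (by norm_num)).mpr (by norm_num)
    calc (2 : ℝ) ^ 9 < 1.618 ^ 13 := by norm_num
      _ < goldenRatio ^ 13 := by
        refine pow_lt_pow_left₀ ?_ (by norm_num) (by norm_num)
        rw [goldenRatio]
        linarith
  have hlog := log_lt_log (by norm_num) hpow
  rw [log_pow, log_pow] at hlog
  push_cast at hlog
  linarith [log_two_gt_d9]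

theorem abs_goldenConj_lt_one : |goldenConj| < 1 :=
  abs_lt.mpr ⟨neg_one_lt_goldenConj, by linarith [goldenConj_neg]⟩

theorem abs_goldenRatio_pow_sub_one_le (d : ℕ) : |goldenRatio ^ d - 1| ≤ goldenRatio ^ (d + 1) := by
  have hone : 1 ≤ goldenRatio ^ d := one_le_pow₀ one_lt_goldenRatio.le
  have hsucc : goldenRatio ^ d ≤ goldenRatio ^ (d + 1) :=
    pow_le_pow_right₀ one_lt_goldenRatio.le d.le_succ
  rw [abs_of_nonneg (by linarith)]
  linarith

theorem abs_goldenConj_pow_sub_one_le (d : ℕ) : |goldenConj ^ d - 1| ≤ goldenRatio ^ (d + 1) := by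
  rcases Nat.eq_zero_or_pos d with rfl | hd
  · simpa using goldenRatio_pos.le
  · have hconj : |goldenConj ^ d| ≤ 1 := by
      rw [abs_pow]
      exact pow_le_one₀ (abs_nonneg _) abs_goldenConj_lt_one.le
    have hratio : goldenRatio ^ 2 ≤ goldenRatio ^ (d + 1) :=
      pow_le_pow_right₀ one_lt_goldenRatio.le (by omega)
    have hsq := goldenRatio_sq
    have hone := one_lt_goldenRatio
    rw [abs_le] at hconj ⊢
    constructor <;> linarith

theorem goldenConj_pow_ne_one {d : ℕ} (hd : d ≠ 0) : goldenConj ^ d ≠ 1 := fun h ↦ by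
  have hlt := pow_lt_one₀ (abs_nonneg _) abs_goldenConj_lt_one hd
  rw [← abs_pow, h, abs_one] at hlt
  exact lt_irrefl _ hlt

theorem abs_pow_le_exp_mul_log_goldenRatio {x : ℝ} {d : ℕ} (hx : |x| ≤ goldenRatio ^ (d + 1))
    (t : ℕ) : |x ^ t| ≤ exp (t * (d + 1) * log goldenRatio) := by
  have hexp : exp (t * (d + 1) * log goldenRatio) = (goldenRatio ^ (d + 1)) ^ t := by
    rw [← pow_mul, ← exp_log goldenRatio_pos, ← exp_nat_mul, log_exp]
    push_cast
    ring_nf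
  rw [hexp, abs_pow]
  exact pow_le_pow_left₀ (abs_nonneg _) hx _

/-- The ring of integers `ℤ[φ]` of `ℚ(√5)`, with `ω` in the role of the golden ratio `φ`. -/
abbrev GoldenInt := QuadraticAlgebra ℤ 1 1

namespace GoldenInt

open QuadraticAlgebra

/-- The ring homomorphism `ℤ[φ] → ℝ` sending `ω` to a root `u` of `X ^ 2 - X - 1`; the two real
embeddings are the cases `u = goldenRatio` and `u = goldenConj`. -/
noncomputable def toReal (u : ℝ) (hu : u ^ 2 = u + 1) : GoldenInt →+* ℝ :=
  (lift (R := ℤ) (a := 1) (b := 1) ⟨u, by simp [← sq, hu, add_comm]⟩ : GoldenInt →ₐ[ℤ] ℝ)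

theorem toReal_apply (u : ℝ) (hu : u ^ 2 = u + 1) (z : GoldenInt) :
    toReal u hu z = z.re + z.im * u := by
  simp [toReal]

theorem toReal_omega (u : ℝ) (hu : u ^ 2 = u + 1) : toReal u hu ω = u := by
  simp [toReal_apply]

theorem one_le_abs_toReal_mul_abs_toReal (z : GoldenInt) (hz : z ≠ 0) :
    1 ≤ |toReal goldenRatio goldenRatio_sq z| * |toReal goldenConj goldenConj_sq z| := by
  have hnorm : toReal goldenRatio goldenRatio_sq z * toReal goldenConj goldenConj_sq z =
      ((z.re ^ 2 + z.re * z.im - z.im ^ 2 : ℤ) : ℝ) := by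
    rw [toReal_apply, toReal_apply]
    push_cast
    linear_combination (z.re * z.im : ℝ) * goldenRatio_add_goldenConj +
      (z.im ^ 2 : ℝ) * goldenRatio_mul_goldenConj
  have hirr : ∀ u : ℝ, Irrational u → (z.re : ℝ) + z.im * u ≠ 0 := by
    intro u hu hzero
    by_cases him : z.im = 0
    · rw [him] at hzero
      exact hz (QuadraticAlgebra.ext (by simpa using hzero) him)
    · exact (hu.intCast_mul him).intCast_add z.re |>.ne_zero hzero
  have hne : (z.re ^ 2 + z.re * z.im - z.im ^ 2 : ℤ) ≠ 0 := by
    intro hzero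
    rw [hzero, Int.cast_zero, toReal_apply, toReal_apply] at hnorm
    exact mul_ne_zero (hirr _ goldenRatio_irrational) (hirr _ goldenConj_irrational) hnorm
  rw [← abs_mul, hnorm]
  exact_mod_cast Int.one_le_abs hne

theorem omega_pow_sub_one_eq : (ω : GoldenInt) ^ 24 - 1 = ⟨28656, 46368⟩ := by
  have h3 : (ω : GoldenInt) ^ 3 = ⟨1, 2⟩ := by ext <;> simp [pow_succ]
  have h6 : (ω : GoldenInt) ^ 6 = ⟨5, 8⟩ := by
    rw [show 6 = 3 * 2 by norm_num, pow_mul, h3]; ext <;> simp [pow_succ]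
  have h12 : (ω : GoldenInt) ^ 12 = ⟨89, 144⟩ := by
    rw [show 12 = 6 * 2 by norm_num, pow_mul, h6]; ext <;> simp [pow_succ]
  rw [show 24 = 12 * 2 by norm_num, pow_mul, h12]; ext <;> simp [pow_succ]

/-- `24` is a multiple of the orders of `ω` modulo `16` and modulo `9`. -/
theorem exists_pow_dvd_omega_pow_sub_one {p : ℕ} (hp : p = 2 ∨ p = 3) :
    ∃ e, 0 < e ∧ e ≤ 4 ∧ ((p ^ e : ℕ) : GoldenInt) ∣ ω ^ 24 - 1 ∧ 2.19 ≤ log (p ^ e : ℕ) := by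
  rcases hp with rfl | rfl
  · refine ⟨4, by norm_num, by norm_num, ⟨⟨1791, 2898⟩, ?_⟩, ?_⟩
    · rw [omega_pow_sub_one_eq]; ext <;> norm_num [QuadraticAlgebra.re_natCast]
    · rw [Nat.cast_pow, log_pow]
      push_cast
      linarith [log_two_gt_d9]
  · refine ⟨2, by norm_num, by norm_num, ⟨⟨3184, 5152⟩, ?_⟩, ?_⟩
    · rw [omega_pow_sub_one_eq]; ext <;> norm_num
    · rw [Nat.cast_pow, log_pow]
      push_cast
      linarith [log_three_gt_d9]

/-- The interpolation inequality for the congruence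
`(ψ ^ d - 1) ^ 24 ≡ (φ ^ 24) ^ (2 * n) * (φ ^ d - 1) ^ 24` in `ℤ[φ]`. -/
theorem log_mul_le_of_pow_dvd_lucas_sub {q n d m K L R S₀ : ℕ} (hq : 0 < q) (hd : 0 < d)
    (hω : (q : GoldenInt) ∣ ω ^ 24 - 1) (hdvd : ((q ^ m : ℕ) : ℤ) ∣ lucas (n + d) - lucas n)
    (hRS : R ≤ 2 * n) (hcard : (K - 1) * L < R * S₀) (hm : K * L ≤ m) (hK : 0 < K) (hL : 0 < L) :
    log q * (K * L - 1 - 2 * K) ≤ 2 * log (K * L) + (K - 1) * log (R + L + S₀ * (2 * n)) +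
      (L - 1) / 2 * (R + L) * (24 * log goldenRatio) +
      2 * (L - 1) * S₀ * (24 * (d + 1) * log goldenRatio) := by
  set φ : GoldenInt →+* ℝ := toReal goldenRatio goldenRatio_sq
  set ψ : GoldenInt →+* ℝ := toReal goldenConj goldenConj_sq
  have hφω : φ ω = goldenRatio := toReal_omega _ _
  have hψω : ψ ω = goldenConj := toReal_omega _ _
  have hφω' : φ (1 - ω) = goldenConj := by rw [map_sub, map_one, hφω, one_sub_goldenConj]
  have hψω' : ψ (1 - ω) = goldenRatio := by rw [map_sub, map_one, hψω, one_sub_goldenRatio]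
  have hmul : (ω : GoldenInt) * (1 - ω) = -1 := by ext <;> simp
  have hcongr : (q : GoldenInt) ^ m ∣
      ((1 - ω) ^ d - 1) ^ 24 - (ω ^ 24) ^ (2 * n) * (ω ^ d - 1) ^ 24 := by
    refine dvd_trans ?_ (lucas_sub_lucas_dvd (add_sub_cancel _ _) hmul (by decide) n d)
    simpa using map_dvd (Int.castRingHom GoldenInt) hdvd
  have hlog := log_nonneg one_lt_goldenRatio.le
  have hU := abs_pow_le_exp_mul_log_goldenRatio (abs_goldenRatio_pow_sub_one_le d) 24
  have hV := abs_pow_le_exp_mul_log_goldenRatio (abs_goldenConj_pow_sub_one_le d) 24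
  have key := log_mul_le_of_pow_dvd_sub (ι := φ) (ι' := ψ) one_le_abs_toReal_mul_abs_toReal hq
    (u := (24 : ℕ) * (d + 1) * log goldenRatio) (by positivity) hω hcongr
    (by rw [map_pow, hφω]; exact one_lt_pow₀ one_lt_goldenRatio (by norm_num))
    (by rw [map_pow, hψω, abs_pow]; exact pow_le_one₀ (abs_nonneg _) abs_goldenConj_lt_one.le)
    (by simpa only [map_pow, map_sub _ _ (1 : GoldenInt), map_one, hφω] using hU)
    (by simpa only [map_pow, map_sub _ _ (1 : GoldenInt), map_one, hψω] using hV)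
    (by simpa only [map_pow, map_sub _ (_ ^ _) (1 : GoldenInt), map_one, hφω'] using hV)
    (by simpa only [map_pow, map_sub _ (_ ^ _) (1 : GoldenInt), map_one, hψω'] using hU)
    (by
      simp only [map_pow, map_sub, map_one, hφω]
      exact pow_ne_zero _ (sub_ne_zero.mpr (one_lt_pow₀ one_lt_goldenRatio hd.ne').ne'))
    (by
      simp only [map_pow, map_sub _ (_ ^ _) (1 : GoldenInt), map_one, hφω']
      exact pow_ne_zero _ (sub_ne_zero.mpr (goldenConj_pow_ne_one hd.ne')))
    hRS hcard hm hK hL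
  rw [map_pow, hφω, log_pow] at key
  exact_mod_cast key

end GoldenInt

end GoldenRatio

section InterpolationParameters

open Real

/-- With `K = 512 * D * k`, `L = 2 * k`, `R = 64 * D * k` and `S₀ = 16 * k`, the combinatorial
logarithms of the interpolation inequality are smaller than its main terms by a factor `k`. -/
theorem log_interpolation_le {D k a b : ℝ} (hk : 56 ≤ k) (hD : 2 ≤ D)
    (hDa : 64 * D * k ≤ 2 * a) (hab : a ≤ b) (hb : log b ≤ k) :
    log (64 * D * k + 2 * k + 16 * k * (2 * a)) ≤ 1.14 * k := by
  have ha : 0 < a := by nlinarith [mul_le_mul hD hk (by norm_num) (by linarith)]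
  have hlog36 : log (36 * k) ≤ 0.14 * k := by
    have h2016 : log 2016 ≤ 11 * log 2 := by
      rw [← log_rpow two_pos]
      exact log_le_log (by norm_num) (by norm_num)
    have hsmall := log_le_sub_one_of_pos (show 0 < k / 56 by positivity)
    rw [show 36 * k = 2016 * (k / 56) by ring, log_mul (by norm_num) (by positivity)]
    linarith [log_two_lt_d9]
  calc _ ≤ log (36 * k * b) := by
        refine log_le_log (by positivity) ?_
        have hka : k * a ≤ k * b := by gcongr
        have hkD : 2 * k ≤ 64 * D * k := by nlinarith
        have hak : a * 56 ≤ a * k := by gcongr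
        linarith
    _ = log (36 * k) + log b := log_mul (by positivity) (by linarith)
    _ ≤ _ := by linarith

theorem interpolation_parameters_lt {D k a b H v : ℝ} (hk : 56 ≤ k) (hD : 2 ≤ D)
    (hDa : 64 * D * k ≤ 2 * a) (hab : a ≤ b) (hb : log b ≤ k) (hH : 2.19 ≤ H) (hv : 0 ≤ v)
    (hv' : v ≤ 0.4814) :
    2 * log (512 * D * k * (2 * k)) +
      (512 * D * k - 1) * log (64 * D * k + 2 * k + 16 * k * (2 * a)) +
      (2 * k - 1) / 2 * (64 * D * k + 2 * k) * (24 * v) +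
      2 * (2 * k - 1) * (16 * k) * (24 * D * v) <
    H * (512 * D * k * (2 * k) - 1 - 2 * (512 * D * k)) := by
  have hlog := log_interpolation_le hk hD hDa hab hb
  have hlogKL : log (512 * D * k * (2 * k)) ≤ 1.14 * k := by
    refine le_trans (log_le_log (by positivity) ?_) hlog
    have hnonneg : 0 ≤ 64 * D * k + 2 * k := by positivity
    have hmul : 16 * k * (64 * D * k) ≤ 16 * k * (2 * a) := by gcongr
    linarith
  have hDk : D * k * 56 ≤ D * k ^ 2 := by rw [sq, ← mul_assoc]; gcongr
  have hkDk : 2 * k ≤ D * k := by gcongr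
  have hkk : 2 * k ^ 2 ≤ D * k ^ 2 := by gcongr
  have hmain : 2.19 * (1024 * (D * k ^ 2) - 1 - 1024 * (D * k)) ≤
      H * (512 * D * k * (2 * k) - 1 - 2 * (512 * D * k)) := by
    rw [show 512 * D * k * (2 * k) - 1 - 2 * (512 * D * k) =
      1024 * (D * k ^ 2) - 1 - 1024 * (D * k) by ring]
    exact mul_le_mul_of_nonneg_right hH (by linarith)
  have hcomb : (512 * D * k - 1) * log (64 * D * k + 2 * k + 16 * k * (2 * a)) ≤
      512 * 1.14 * (D * k ^ 2) := by
    refine (mul_le_mul_of_nonneg_left hlog (by linarith)).trans ?_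
    linarith
  have hrows : (2 * k - 1) / 2 * (64 * D * k + 2 * k) * (24 * v) ≤
      65 * 24 * 0.4814 * (D * k ^ 2) := by
    calc _ ≤ (2 * k) / 2 * (64 * D * k + 2 * k) * (24 * 0.4814) := by gcongr; linarith
      _ ≤ _ := by linarith
  have hcols : 2 * (2 * k - 1) * (16 * k) * (24 * D * v) ≤ 64 * 24 * 0.4814 * (D * k ^ 2) := by
    calc _ ≤ 2 * (2 * k) * (16 * k) * (24 * D * 0.4814) := by gcongr; linarith
      _ = _ := by ring
  linarith

theorem lt_of_pow_dvd_lucas_sub {p n d m k : ℕ} (hp : p = 2 ∨ p = 3) (hd : 0 < d)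
    (hdvd : (p : ℤ) ^ m ∣ lucas (n + d) - lucas n) (hk : 56 ≤ k) (hlog : log (n + d) ≤ k)
    (hn : 64 * (d + 1) * k ≤ 2 * n) : m < 4096 * (d + 1) * k ^ 2 + 4 := by
  obtain ⟨e, he, he4, hω, hloge⟩ := GoldenInt.exists_pow_dvd_omega_pow_sub_one hp
  by_contra! hm
  have hKL : 512 * (d + 1) * k * (2 * k) ≤ m / e := by
    rw [Nat.le_div_iff_mul_le he]
    calc _ ≤ 512 * (d + 1) * k * (2 * k) * 4 := by gcongr
      _ ≤ m := by linarith
  have hcard : (512 * (d + 1) * k - 1) * (2 * k) < 64 * (d + 1) * k * (16 * k) := by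
    calc _ < 512 * (d + 1) * k * (2 * k) := by
          refine Nat.mul_lt_mul_of_pos_right (Nat.sub_lt ?_ one_pos) ?_ <;> positivity
      _ = _ := by ring
  have hdvd' : (((p ^ e) ^ (m / e) : ℕ) : ℤ) ∣ lucas (n + d) - lucas n := by
    refine dvd_trans ?_ hdvd
    rw [← pow_mul]
    exact_mod_cast pow_dvd_pow p (Nat.mul_div_le m e)
  have hle := GoldenInt.log_mul_le_of_pow_dvd_lucas_sub
    (by rcases hp with rfl | rfl <;> positivity) hd hω hdvd' hn hcard hKL
    (by positivity) (by positivity)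
  have hlt := interpolation_parameters_lt (D := d + 1) (a := n) (by exact_mod_cast hk)
    (by exact_mod_cast Nat.succ_le_succ hd) (by exact_mod_cast hn) (by simp) hlog hloge
    (log_nonneg one_lt_goldenRatio.le) log_goldenRatio_lt.le
  push_cast at hle hlt
  exact absurd hle (not_le.mpr hlt)

end InterpolationParameters

section QuadraticExtension

variable {F : Type*} [Field F] {K : Subfield F} {r : F}

/-- The field `K(r)`, where `r` is a square root of an element of `K`, realised inside the ambient
field as the set of all `x + y * r` with `x` and `y` in `K`. -/
def quadExt (K : Subfield F) (r : F) (hr : r ^ 2 ∈ K) : Subfield F where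
  carrier := {z | ∃ x ∈ K, ∃ y ∈ K, z = x + y * r}
  mul_mem' := by
    rintro _ _ ⟨x, hx, y, hy, rfl⟩ ⟨x', hx', y', hy', rfl⟩
    exact ⟨x * x' + y * y' * r ^ 2, add_mem (mul_mem hx hx') (mul_mem (mul_mem hy hy') hr),
      x * y' + y * x', add_mem (mul_mem hx hy') (mul_mem hy hx'), by ring⟩
  one_mem' := ⟨1, one_mem _, 0, zero_mem _, by ring⟩
  add_mem' := by
    rintro _ _ ⟨x, hx, y, hy, rfl⟩ ⟨x', hx', y', hy', rfl⟩
    exact ⟨x + x', add_mem hx hx', y + y', add_mem hy hy', by ring⟩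
  zero_mem' := ⟨0, zero_mem _, 0, zero_mem _, by ring⟩
  neg_mem' := by
    rintro _ ⟨x, hx, y, hy, rfl⟩
    exact ⟨-x, neg_mem hx, -y, neg_mem hy, by ring⟩
  inv_mem' := by
    rintro _ ⟨x, hx, y, hy, rfl⟩
    by_cases hconj : x - y * r = 0
    · exact ⟨(2 * x)⁻¹, inv_mem (mul_mem (ofNat_mem _ _) hx), 0, zero_mem _,
        by rw [show x + y * r = 2 * x by linear_combination -hconj]; ring⟩
    · have hnorm : x ^ 2 - y ^ 2 * r ^ 2 ∈ K :=
        sub_mem (pow_mem hx 2) (mul_mem (pow_mem hy 2) hr)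
      refine ⟨x * (x ^ 2 - y ^ 2 * r ^ 2)⁻¹, mul_mem hx (inv_mem hnorm),
        -y * (x ^ 2 - y ^ 2 * r ^ 2)⁻¹, mul_mem (neg_mem hy) (inv_mem hnorm), ?_⟩
      rw [show x ^ 2 - y ^ 2 * r ^ 2 = (x + y * r) * (x - y * r) by ring]
      by_cases hz : x + y * r = 0
      · simp [hz]
      · field_simp
        ring

theorem le_quadExt (hr : r ^ 2 ∈ K) : K ≤ quadExt K r hr :=
  fun z hz ↦ ⟨z, hz, 0, zero_mem _, by ring⟩

theorem add_mul_mem_quadExt (hr : r ^ 2 ∈ K) {x y : F} (hx : x ∈ K) (hy : y ∈ K) :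
    x + y * r ∈ quadExt K r hr :=
  ⟨x, hx, y, hy, rfl⟩

theorem eq_zero_of_add_mul_eq_zero (hrK : r ∉ K) {x y : F} (hx : x ∈ K) (hy : y ∈ K)
    (h : x + y * r = 0) : x = 0 ∧ y = 0 := by
  have hy0 : y = 0 := by
    by_contra hne
    refine hrK ?_
    rw [show r = -x * y⁻¹ by field_simp; linear_combination h]
    exact mul_mem (neg_mem hx) (inv_mem hy)
  subst hy0
  exact ⟨by simpa using h, rfl⟩

theorem notMem_quadExt [NeZero (2 : F)] {hr : r ^ 2 ∈ K} (hrK : r ∉ K) {z : F}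
    (hz2 : z ^ 2 ∈ K) (hz : z ∉ K) (hzr : z * r ∉ K) : z ∉ quadExt K r hr := by
  rintro ⟨x, hx, y, hy, rfl⟩
  have hcoeff := eq_zero_of_add_mul_eq_zero hrK
    (x := x ^ 2 + y ^ 2 * r ^ 2 - (x + y * r) ^ 2) (y := 2 * x * y)
    (sub_mem (add_mem (pow_mem hx 2) (mul_mem (pow_mem hy 2) hr)) hz2)
    (mul_mem (mul_mem (ofNat_mem K 2) hx) hy) (by ring)
  rcases mul_eq_zero.mp hcoeff.2 with hx0 | hy0
  · refine hzr ?_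
    rw [(mul_eq_zero.mp hx0).resolve_left two_ne_zero, zero_add, mul_assoc, ← sq]
    exact mul_mem hy hr
  · exact hz (by simpa [hy0] using hx)

end QuadraticExtension

section KummerTower

open Real

theorem sqrt_ofNat_sq_mem (K : Subfield ℝ) (n : ℕ) [n.AtLeastTwo] : √(ofNat(n) : ℝ) ^ 2 ∈ K := by
  rw [sq_sqrt (Nat.ofNat_nonneg n)]
  exact ofNat_mem K n

/-- The field `ℚ(√5) = ℚ(φ)`, the base of the tower of square roots of `2`, `3` and `φ`. -/
noncomputable def goldenField : Subfield ℝ :=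
  quadExt (algebraMap ℚ ℝ).fieldRange √5 (sqrt_ofNat_sq_mem _ 5)

/-- The field `ℚ(√5, √2)`. -/
noncomputable def goldenFieldSqrtTwo : Subfield ℝ :=
  quadExt goldenField √2 (sqrt_ofNat_sq_mem _ 2)

/-- The field `ℚ(√5, √2, √3)`. -/
noncomputable def goldenFieldSqrtTwoThree : Subfield ℝ :=
  quadExt goldenFieldSqrtTwo √3 (sqrt_ofNat_sq_mem _ 3)

theorem sqrt_five_notMem_fieldRange : √5 ∉ (algebraMap ℚ ℝ).fieldRange :=
  irrational_sqrt_ofNat_iff.mpr (by decide +kernel)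

theorem sqrt_natCast_notMem_goldenField {n : ℕ} (hn : ¬ IsSquare n) (hn5 : ¬ IsSquare (n * 5)) :
    √n ∉ goldenField := by
  refine notMem_quadExt sqrt_five_notMem_fieldRange ?_ (irrational_sqrt_natCast_iff.mpr hn) ?_
  · rw [sq_sqrt n.cast_nonneg]
    exact natCast_mem _ n
  · rw [← sqrt_mul n.cast_nonneg]
    exact_mod_cast irrational_sqrt_natCast_iff.mpr hn5

theorem sqrt_two_notMem_goldenField : √2 ∉ goldenField := by
  exact_mod_cast sqrt_natCast_notMem_goldenField (n := 2) (by decide +kernel) (by decide +kernel)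

theorem sqrt_three_notMem_goldenFieldSqrtTwo : √3 ∉ goldenFieldSqrtTwo := by
  refine notMem_quadExt sqrt_two_notMem_goldenField (sqrt_ofNat_sq_mem _ 3) ?_ ?_
  · exact_mod_cast sqrt_natCast_notMem_goldenField (n := 3) (by decide +kernel) (by decide +kernel)
  · rw [← sqrt_mul zero_le_three, show (3 : ℝ) * 2 = (6 : ℕ) by norm_num]
    exact sqrt_natCast_notMem_goldenField (by decide +kernel) (by decide +kernel)

theorem goldenRatio_mem_goldenField : goldenRatio ∈ goldenField :=
  ⟨1 / 2, ⟨1 / 2, by simp⟩, 1 / 2, ⟨1 / 2, by simp⟩, by rw [goldenRatio]; ring⟩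

/-- The norm of `n * φ` from `ℚ(√5)` to `ℚ` is `-n ^ 2 < 0`, so `n * φ` is not a square. -/
theorem sq_ne_natCast_mul_goldenRatio {z : ℝ} (hz : z ∈ goldenField) {n : ℕ} (hn : n ≠ 0) :
    z ^ 2 ≠ n * goldenRatio := by
  obtain ⟨x, hx, y, hy, rfl⟩ := hz
  intro h
  have hsq : √5 ^ 2 = 5 := sq_sqrt (by norm_num)
  have hn2 : (n / 2 : ℝ) ∈ (algebraMap ℚ ℝ).fieldRange := ⟨n / 2, by simp⟩
  obtain ⟨hone, hsqrt⟩ := eq_zero_of_add_mul_eq_zero sqrt_five_notMem_fieldRange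
    (x := x ^ 2 + 5 * y ^ 2 - n / 2) (y := 2 * x * y - n / 2)
    (sub_mem (add_mem (pow_mem hx 2) (mul_mem (ofNat_mem _ 5) (pow_mem hy 2))) hn2)
    (sub_mem (mul_mem (mul_mem (ofNat_mem _ 2) hx) hy) hn2) (by
      rw [goldenRatio] at h
      linear_combination h - y ^ 2 * hsq)
  have hnorm : (x ^ 2 - 5 * y ^ 2) ^ 2 = -(n : ℝ) ^ 2 := by
    linear_combination (x ^ 2 + 5 * y ^ 2 + n / 2) * hone - 5 * (2 * x * y + n / 2) * hsqrt
  have hpos : 0 < (n : ℝ) ^ 2 := by positivity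
  linarith [sq_nonneg (x ^ 2 - 5 * y ^ 2)]

theorem sqrt_goldenRatio_notMem : √goldenRatio ∉ goldenFieldSqrtTwoThree := by
  have hsq : √goldenRatio ^ 2 = goldenRatio := sq_sqrt goldenRatio_pos.le
  have hbase {r : ℝ} {n : ℕ} (hn : n ≠ 0) (hr : r ^ 2 = n) : √goldenRatio * r ∉ goldenField :=
    fun h ↦ sq_ne_natCast_mul_goldenRatio h hn (by rw [mul_pow, hsq, hr, mul_comm])
  have hsqrtTwo {r : ℝ} {n : ℕ} (hn : n ≠ 0) (hr : r ^ 2 = n) :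
      √goldenRatio * r ∉ goldenFieldSqrtTwo := by
    refine notMem_quadExt sqrt_two_notMem_goldenField ?_ (hbase hn hr) ?_
    · rw [mul_pow, hsq, hr]
      exact mul_mem goldenRatio_mem_goldenField (natCast_mem _ n)
    · rw [mul_assoc]
      exact hbase (n := n * 2) (by positivity) (by simp [mul_pow, hr])
  refine notMem_quadExt sqrt_three_notMem_goldenFieldSqrtTwo ?_ ?_ ?_
  · rw [hsq]
    exact le_quadExt _ goldenRatio_mem_goldenField
  · simpa using hsqrtTwo one_ne_zero (r := 1) (by simp)
  · exact hsqrtTwo three_ne_zero (by simp)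

theorem eq_zero_of_sum_sqrt_eq_zero {C : Fin 2 → Fin 2 → Fin 2 → ℝ}
    (hC : ∀ i j k, C i j k ∈ goldenField)
    (h : ∑ i, ∑ j, ∑ k, C i j k * (√2 ^ (i : ℕ) * √3 ^ (j : ℕ) * √goldenRatio ^ (k : ℕ)) = 0)
    (i j k : Fin 2) : C i j k = 0 := by
  have hmem j k : C 0 j k + C 1 j k * √2 ∈ goldenFieldSqrtTwo :=
    add_mul_mem_quadExt _ (hC ..) (hC ..)
  have hmem' k : (C 0 0 k + C 1 0 k * √2) + (C 0 1 k + C 1 1 k * √2) * √3 ∈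
      goldenFieldSqrtTwoThree := add_mul_mem_quadExt _ (hmem ..) (hmem ..)
  have hφ := eq_zero_of_add_mul_eq_zero sqrt_goldenRatio_notMem (hmem' 0) (hmem' 1) (by
    rw [← h]
    simp only [Fin.sum_univ_two, Fin.isValue, Fin.val_zero, Fin.val_one, pow_zero, pow_one]
    ring)
  have hthree : ∀ k, C 0 0 k + C 1 0 k * √2 = 0 ∧ C 0 1 k + C 1 1 k * √2 = 0 :=
    Fin.forall_fin_two.mpr
      ⟨eq_zero_of_add_mul_eq_zero sqrt_three_notMem_goldenFieldSqrtTwo (hmem ..) (hmem ..) hφ.1,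
        eq_zero_of_add_mul_eq_zero sqrt_three_notMem_goldenFieldSqrtTwo (hmem ..) (hmem ..) hφ.2⟩
  have htwo : ∀ j, C 0 j k = 0 ∧ C 1 j k = 0 := Fin.forall_fin_two.mpr
    ⟨eq_zero_of_add_mul_eq_zero sqrt_two_notMem_goldenField (hC ..) (hC ..) (hthree k).1,
      eq_zero_of_add_mul_eq_zero sqrt_two_notMem_goldenField (hC ..) (hC ..) (hthree k).2⟩
  exact (Fin.forall_fin_two (p := (C · j k = 0))).mpr (htwo j) i

end KummerTower

section Liouville

open Real IntermediateField

theorem one_le_norm_mul_pow_of_isIntegral {E : Type*} [Field E] [NumberField E] {x : E}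
    (hx : IsIntegral ℤ x) (hx0 : x ≠ 0) {M : ℝ} (hM : ∀ σ : E →ₐ[ℚ] ℂ, ‖σ x‖ ≤ M)
    (σ : E →ₐ[ℚ] ℂ) : 1 ≤ ‖σ x‖ * M ^ (Module.finrank ℚ E - 1) := by
  classical
  obtain ⟨z, hz⟩ := IsIntegrallyClosed.isIntegral_iff.mp (Algebra.isIntegral_norm ℚ hx)
  have hz0 : z ≠ 0 := by
    rintro rfl
    exact Algebra.norm_ne_zero_iff.mpr hx0 (by rw [← hz, map_zero])
  calc (1 : ℝ) ≤ |(z : ℝ)| := by exact_mod_cast Int.one_le_abs hz0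
    _ = ‖algebraMap ℚ ℂ (Algebra.norm ℚ x)‖ := by rw [← hz]; simp
    _ = ‖σ x‖ * ∏ τ ∈ Finset.univ.erase σ, ‖τ x‖ := by
      rw [Algebra.norm_eq_prod_embeddings, ← Finset.mul_prod_erase _ _ (Finset.mem_univ σ),
        norm_mul, norm_prod]
    _ ≤ ‖σ x‖ * ∏ _τ ∈ Finset.univ.erase σ, M := by
      gcongr
      exact hM _
    _ = _ := by
      rw [Finset.prod_const, Finset.card_erase_of_mem (Finset.mem_univ _), Finset.card_univ,
        AlgHom.card]

theorem finrank_adjoin_simple_le_natDegree {K L : Type*} [Field K] [Field L] [Algebra K L] {x : L}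
    {p : Polynomial K} (hp : p ≠ 0) (hx : p.aeval x = 0) :
    Module.finrank K K⟮x⟯ ≤ p.natDegree := by
  rw [adjoin.finrank (isAlgebraic_iff_isIntegral.mp ⟨p, hp, hx⟩)]
  exact Polynomial.natDegree_le_of_dvd (minpoly.dvd K x hx) hp

theorem norm_eq_sqrt_of_sq_eq_natCast {z : ℂ} {n : ℕ} (hz : z ^ 2 = n) : ‖z‖ = √n := by
  rw [← Complex.norm_natCast, ← hz, norm_pow, sqrt_sq (norm_nonneg z)]

theorem norm_le_sqrt_goldenRatio {w : ℂ} (hw : w ^ 4 = w ^ 2 + 1) : ‖w‖ ≤ √goldenRatio := by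
  refine le_sqrt_of_sq_le ?_
  have hadd : (goldenRatio : ℂ) + goldenConj = 1 := by exact_mod_cast goldenRatio_add_goldenConj
  have hmul : (goldenRatio : ℂ) * goldenConj = -1 := by exact_mod_cast goldenRatio_mul_goldenConj
  have hroots : (w ^ 2 - (goldenRatio : ℂ)) * (w ^ 2 - (goldenConj : ℂ)) = 0 := by
    linear_combination hw - w ^ 2 * hadd + hmul
  rw [← norm_pow]
  rcases mul_eq_zero.mp hroots with h | h
  · rw [sub_eq_zero.mp h, Complex.norm_real, norm_of_nonneg goldenRatio_pos.le]
  · rw [sub_eq_zero.mp h, Complex.norm_real, norm_eq_abs, abs_of_neg goldenConj_neg]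
    linarith [neg_one_lt_goldenConj, one_lt_goldenRatio]

theorem sqrt_goldenRatio_pow_four : √goldenRatio ^ 4 = √goldenRatio ^ 2 + 1 := by
  rw [show √goldenRatio ^ 4 = (√goldenRatio ^ 2) ^ 2 by ring, sq_sqrt goldenRatio_pos.le,
    goldenRatio_sq]

theorem isIntegral_of_sq_eq_natCast {A : Type*} [CommRing A] {x : A} {n : ℕ} (hx : x ^ 2 = n) :
    IsIntegral ℤ x :=
  .of_pow two_pos (hx ▸ isIntegral_natCast n)

theorem isIntegral_of_pow_four_eq {A : Type*} [CommRing A] {x : A} (hx : x ^ 4 = x ^ 2 + 1) :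
    IsIntegral ℤ x :=
  ⟨Polynomial.X ^ 4 - Polynomial.X ^ 2 - 1, by monicity!, by simp [hx]⟩

theorem finrank_adjoin_sqrt_natCast_le (n : ℕ) : Module.finrank ℚ ℚ⟮√(n : ℝ)⟯ ≤ 2 :=
  (finrank_adjoin_simple_le_natDegree (p := Polynomial.X ^ 2 - Polynomial.C (n : ℚ))
    (Polynomial.X_pow_sub_C_ne_zero two_pos _) (by simp)).trans (by compute_degree!)

theorem finrank_adjoin_sqrt_goldenRatio_le : Module.finrank ℚ ℚ⟮√goldenRatio⟯ ≤ 4 := by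
  have hmonic : (Polynomial.X ^ 4 - Polynomial.X ^ 2 - 1 : Polynomial ℚ).Monic := by monicity!
  refine (finrank_adjoin_simple_le_natDegree hmonic.ne_zero ?_).trans (by compute_degree!)
  rw [map_sub, map_sub, map_pow, map_pow, map_one, Polynomial.aeval_X, sqrt_goldenRatio_pow_four]
  ring

/-- The field generated by the square roots of the three numbers whose logarithms enter the linear
form. -/
noncomputable def sqrtField : IntermediateField ℚ ℝ :=
  ℚ⟮√((2 : ℕ) : ℝ)⟯ ⊔ ℚ⟮√((3 : ℕ) : ℝ)⟯ ⊔ ℚ⟮√goldenRatio⟯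

instance : NumberField sqrtField where
  to_finiteDimensional := by
    have (n : ℕ) : FiniteDimensional ℚ ℚ⟮√(n : ℝ)⟯ :=
      adjoin.finiteDimensional (isIntegral_of_sq_eq_natCast (sq_sqrt n.cast_nonneg)).tower_top
    have : FiniteDimensional ℚ ℚ⟮√goldenRatio⟯ :=
      adjoin.finiteDimensional (isIntegral_of_pow_four_eq sqrt_goldenRatio_pow_four).tower_top
    unfold sqrtField
    infer_instance

theorem finrank_sqrtField_le : Module.finrank ℚ sqrtField ≤ 16 := by
  calc _ ≤ Module.finrank ℚ
        (ℚ⟮√((2 : ℕ) : ℝ)⟯ ⊔ ℚ⟮√((3 : ℕ) : ℝ)⟯ : IntermediateField ℚ ℝ) *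
        Module.finrank ℚ ℚ⟮√goldenRatio⟯ := finrank_sup_le _ _
    _ ≤ Module.finrank ℚ ℚ⟮√((2 : ℕ) : ℝ)⟯ * Module.finrank ℚ ℚ⟮√((3 : ℕ) : ℝ)⟯ * 4 := by
      gcongr
      exacts [finrank_sup_le _ _, finrank_adjoin_sqrt_goldenRatio_le]
    _ ≤ 2 * 2 * 4 := by
      gcongr <;> exact finrank_adjoin_sqrt_natCast_le _
    _ = 16 := by norm_num

theorem sqrt_two_mem_sqrtField : √2 ∈ sqrtField :=
  le_sup_left.trans le_sup_left (a := ℚ⟮√((2 : ℕ) : ℝ)⟯) (by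
    simpa using mem_adjoin_simple_self ℚ √((2 : ℕ) : ℝ))

theorem sqrt_three_mem_sqrtField : √3 ∈ sqrtField :=
  le_sup_right.trans le_sup_left (a := ℚ⟮√((3 : ℕ) : ℝ)⟯) (by
    simpa using mem_adjoin_simple_self ℚ √((3 : ℕ) : ℝ))

theorem sqrt_goldenRatio_mem_sqrtField : √goldenRatio ∈ sqrtField :=
  (le_sup_right : ℚ⟮√goldenRatio⟯ ≤ sqrtField) (mem_adjoin_simple_self ℚ _)

/-- The absolute value of a conjugate of `√2 ^ a * √3 ^ b * √φ ^ c` is largest at the identity, so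
a bound for the sum of absolute values bounds all conjugates. -/
theorem one_le_abs_sum_mul_pow {I : Type*} {s : Finset I} {q : I → ℤ} {k₂ k₃ k : I → ℕ} {M : ℝ}
    (hM : ∑ i ∈ s, |(q i : ℝ)| * (√2 ^ k₂ i * √3 ^ k₃ i * √goldenRatio ^ k i) ≤ M) (hM1 : 1 ≤ M)
    (h0 : ∑ i ∈ s, (q i : ℝ) * (√2 ^ k₂ i * √3 ^ k₃ i * √goldenRatio ^ k i) ≠ 0) :
    1 ≤ |∑ i ∈ s, (q i : ℝ) * (√2 ^ k₂ i * √3 ^ k₃ i * √goldenRatio ^ k i)| * M ^ 15 := by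
  set a : sqrtField := ⟨√2, sqrt_two_mem_sqrtField⟩
  set b : sqrtField := ⟨√3, sqrt_three_mem_sqrtField⟩
  set c : sqrtField := ⟨√goldenRatio, sqrt_goldenRatio_mem_sqrtField⟩
  have ha : a ^ 2 = (2 : ℕ) := Subtype.ext (sq_sqrt zero_le_two)
  have hb : b ^ 2 = (3 : ℕ) := Subtype.ext (sq_sqrt zero_le_three)
  have hc : c ^ 4 = c ^ 2 + 1 := Subtype.ext sqrt_goldenRatio_pow_four
  set x : sqrtField := ∑ i ∈ s, (q i : sqrtField) * (a ^ k₂ i * b ^ k₃ i * c ^ k i) with hx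
  have hxval : (x : ℝ) = ∑ i ∈ s, (q i : ℝ) * (√2 ^ k₂ i * √3 ^ k₃ i * √goldenRatio ^ k i) := by
    rw [hx]
    push_cast
    rfl
  rw [← hxval] at h0 ⊢
  have hint : IsIntegral ℤ x := IsIntegral.sum _ fun i _ ↦
    (isIntegral_algebraMap (R := ℤ) (x := q i)).mul
      ((((isIntegral_of_sq_eq_natCast ha).pow _).mul ((isIntegral_of_sq_eq_natCast hb).pow _)).mul
        ((isIntegral_of_pow_four_eq hc).pow _))
  have hbound (σ : sqrtField →ₐ[ℚ] ℂ) : ‖σ x‖ ≤ M := by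
    have hσa : ‖σ a‖ = √2 := norm_eq_sqrt_of_sq_eq_natCast
      (by rw [← map_pow, ha, map_natCast])
    have hσb : ‖σ b‖ = √3 := norm_eq_sqrt_of_sq_eq_natCast
      (by rw [← map_pow, hb, map_natCast])
    have hσc : ‖σ c‖ ≤ √goldenRatio := norm_le_sqrt_goldenRatio
      (by rw [← map_pow, hc, map_add, map_pow, map_one])
    rw [hx, map_sum]
    refine (norm_sum_le _ _).trans (le_trans (Finset.sum_le_sum fun i _ ↦ ?_) hM)
    simp only [map_mul, map_pow, map_intCast, norm_mul, norm_pow, hσa, hσb, Complex.norm_intCast]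
    gcongr
  set σ₀ : sqrtField →ₐ[ℚ] ℂ := (Complex.ofRealAm.restrictScalars ℚ).comp sqrtField.val
  calc 1 ≤ ‖σ₀ x‖ * M ^ (Module.finrank ℚ sqrtField - 1) :=
        one_le_norm_mul_pow_of_isIntegral hint (fun h ↦ h0 (by rw [h, ZeroMemClass.coe_zero]))
          hbound σ₀
    _ ≤ ‖σ₀ x‖ * M ^ 15 := by
        gcongr
        have := finrank_sqrtField_le
        omega
    _ = |(x : ℝ)| * M ^ 15 := by rw [show σ₀ x = ((x : ℝ) : ℂ) from rfl, Complex.norm_real]; rfl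

end Liouville

section HermiteInterpolation

open Filter Topology Finset

theorem exists_eq_pow_mul_of_le_analyticOrderAt {s : ℂ} {τ : ℕ} {g : ℂ → ℂ}
    (hg : Differentiable ℂ g) (h : τ ≤ analyticOrderAt g s) :
    ∃ h : ℂ → ℂ, Differentiable ℂ h ∧ ∀ z, g z = (z - s) ^ τ * h z := by
  induction τ generalizing g with
  | zero => exact ⟨g, hg, by simp⟩
  | succ τ ih =>
    have hs : g s = 0 := by
      by_contra hne
      rw [analyticOrderAt_eq_zero.mpr (.inr hne)] at h
      simp at h
    have hd : Differentiable ℂ (dslope g s) := by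
      rw [← differentiableOn_univ, Complex.differentiableOn_dslope univ_mem]
      exact hg.differentiableOn
    have heq : g = (fun z ↦ z - s) * dslope g s := by
      ext z
      simpa [hs] using (sub_smul_dslope g s z).symm
    have hone : analyticOrderAt (fun z ↦ z - s) s = 1 :=
      (analyticAt_id (𝕜 := ℂ)).analyticOrderAt_sub_eq_one_of_deriv_ne_zero (by simp)
    have hord : (τ : ℕ∞) ≤ analyticOrderAt (dslope g s) s := by
      rw [heq, analyticOrderAt_mul (by fun_prop) (hd.analyticAt s), hone, add_comm] at h
      push_cast at h
      exact (ENat.add_le_add_iff_left (by simp)).mp h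
    obtain ⟨k, hk, hkeq⟩ := ih hd hord
    refine ⟨k, hk, fun z ↦ ?_⟩
    rw [congrFun heq z, Pi.mul_apply, hkeq z]
    ring

theorem exists_eq_prod_pow_mul {ι : Type*} {N : Finset ι} {p : ι → ℂ} (hp : Set.InjOn p N)
    {τ : ℕ} {g : ℂ → ℂ} (hg : Differentiable ℂ g)
    (h : ∀ i ∈ N, (τ : ℕ∞) ≤ analyticOrderAt g (p i)) :
    ∃ h : ℂ → ℂ, Differentiable ℂ h ∧ ∀ z, g z = (∏ i ∈ N, (z - p i) ^ τ) * h z := by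
  classical
  induction N using Finset.induction_on generalizing g with
  | empty => exact ⟨g, hg, by simp⟩
  | insert a N ha ih =>
    obtain ⟨k, hk, hkeq⟩ := exists_eq_pow_mul_of_le_analyticOrderAt hg (h a (mem_insert_self _ _))
    obtain ⟨k', hk', hkeq'⟩ := ih (hp.mono (by simp)) hk fun i hi ↦ by
      have hne : p i ≠ p a := fun he ↦
        ha (by rwa [← hp (mem_insert_of_mem hi) (mem_insert_self _ _) he])
      have hzero : analyticOrderAt (fun z ↦ (z - p a) ^ τ) (p i) = 0 :=
        analyticOrderAt_eq_zero.mpr (.inr (pow_ne_zero _ (sub_ne_zero.mpr hne)))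
      have hord := h i (mem_insert_of_mem hi)
      rwa [show g = (fun z ↦ (z - p a) ^ τ) * k from funext hkeq,
        analyticOrderAt_mul (by fun_prop) (hk.analyticAt _), hzero, zero_add] at hord
    refine ⟨k', hk', fun z ↦ ?_⟩
    rw [hkeq z, hkeq' z, prod_insert ha]
    ring

theorem norm_le_pow_mul_of_le_analyticOrderAt {ι : Type*} {N : Finset ι} {p : ι → ℂ}
    (hp : Set.InjOn p N) {τ : ℕ} {g : ℂ → ℂ} (hg : Differentiable ℂ g)
    (h : ∀ i ∈ N, (τ : ℕ∞) ≤ analyticOrderAt g (p i)) {c x : ℂ} {ρ R M : ℝ} (hρR : ρ < R)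
    (hpc : ∀ i ∈ N, ‖p i - c‖ ≤ ρ) (hM : ∀ z ∈ Metric.sphere c R, ‖g z‖ ≤ M)
    (hx : ‖x - c‖ ≤ ρ) :
    ‖g x‖ ≤ (2 * ρ / (R - ρ)) ^ (τ * #N) * M := by
  obtain ⟨k, hk, hgk⟩ := exists_eq_prod_pow_mul hp hg h
  have hρ : 0 ≤ ρ := (norm_nonneg _).trans hx
  have : 0 < R - ρ := sub_pos.mpr hρR
  have hkM : ∀ z ∈ Metric.sphere c R, ‖k z‖ ≤ M / (R - ρ) ^ (τ * #N) := by
    intro z hz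
    rw [le_div_iff₀ (by positivity), mul_comm, pow_mul, ← prod_const]
    refine le_trans ?_ (hM z hz)
    rw [hgk z, norm_mul, norm_prod]
    refine mul_le_mul_of_nonneg_right (prod_le_prod (by intros; positivity) fun i hi ↦ ?_)
      (norm_nonneg _)
    rw [norm_pow]
    gcongr
    have hzi := norm_sub_norm_le (z - c) (p i - c)
    rw [mem_sphere_iff_norm.mp hz, sub_sub_sub_cancel_right] at hzi
    linarith [hpc i hi]
  have hkx : ‖k x‖ ≤ M / (R - ρ) ^ (τ * #N) := by
    refine Complex.norm_le_of_forall_mem_frontier_norm_le (U := Metric.ball c R)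
      Metric.isBounded_ball hk.diffContOnCl (fun z hz ↦ hkM z ?_)
      (subset_closure (mem_ball_iff_norm.mpr (hx.trans_lt hρR)))
    rwa [frontier_ball _ (hρ.trans_lt hρR).ne'] at hz
  have hprod : ‖∏ i ∈ N, (x - p i) ^ τ‖ ≤ (2 * ρ) ^ (τ * #N) := by
    rw [norm_prod, pow_mul, ← prod_const]
    refine prod_le_prod (fun _ _ ↦ norm_nonneg _) fun i hi ↦ ?_
    rw [norm_pow, ← sub_sub_sub_cancel_right x (p i) c]
    gcongr
    exact (norm_sub_le _ _).trans (by linarith [hpc i hi])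
  rw [hgk x, norm_mul, div_pow, div_mul_eq_mul_div, mul_div_assoc]
  gcongr

/-- The Taylor polynomial of `u` at `s` of degree less than `τ`. -/
noncomputable def taylorSum (u : ℂ → ℂ) (s : ℂ) (τ : ℕ) (z : ℂ) : ℂ :=
  ∑ j ∈ range τ, iteratedDeriv j u s / j.factorial * (z - s) ^ j

theorem differentiable_taylorSum (u : ℂ → ℂ) (s : ℂ) (τ : ℕ) :
    Differentiable ℂ (taylorSum u s τ) := by
  unfold taylorSum
  fun_prop

theorem le_analyticOrderAt_sub_taylorSum {u : ℂ → ℂ} {s : ℂ} (hu : AnalyticAt ℂ u s) (τ : ℕ) :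
    τ ≤ analyticOrderAt (u - taylorSum u s τ) s := by
  obtain ⟨F, hF, hFeq⟩ := AnalyticAt.exists_eventuallyEq_sum_add_pow_mul
    (f := fun w ↦ u (w + s)) (.fun_comp (g := u) (by simpa using hu) (by fun_prop)) τ
  rw [natCast_le_analyticOrderAt (hu.sub ((differentiable_taylorSum u s τ).analyticAt s))]
  refine ⟨fun z ↦ F (z - s), .fun_comp (g := F) (by simpa using hF) (by fun_prop), ?_⟩
  have hsub : Tendsto (fun z ↦ z - s) (𝓝 s) (𝓝 0) := by
    simpa using (show ContinuousAt (fun z : ℂ ↦ z - s) s by fun_prop).tendsto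
  filter_upwards [hsub.eventually hFeq] with z hz
  simp only [sub_add_cancel, iteratedDeriv_comp_add_const, zero_add, smul_eq_mul] at hz
  rw [Pi.sub_apply, hz, sub_eq_iff_eq_add', taylorSum, smul_eq_mul]
  congr 1
  exact sum_congr rfl fun j _ ↦ by ring

theorem norm_taylorSum_le {u : ℂ → ℂ} {s z : ℂ} {τ : ℕ} {c r : ℝ}
    (hc : ∀ j < τ, ‖iteratedDeriv j u s / j.factorial‖ ≤ c) (hr : 1 ≤ r) (hz : ‖z - s‖ ≤ r) :
    ‖taylorSum u s τ z‖ ≤ τ * c * r ^ τ := by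
  have hterm : ∀ j ∈ range τ, ‖iteratedDeriv j u s / j.factorial * (z - s) ^ j‖ ≤ c * r ^ τ := by
    intro j hj
    have hj := mem_range.mp hj
    rw [norm_mul, norm_pow]
    exact mul_le_mul (hc j hj) ((pow_le_pow_left₀ (norm_nonneg _) hz j).trans
      (pow_le_pow_right₀ hr hj.le)) (by positivity) ((norm_nonneg _).trans (hc j hj))
  refine (norm_sum_le_of_le _ hterm).trans_eq ?_
  rw [sum_const, card_range, nsmul_eq_mul, mul_assoc]

theorem norm_iteratedDeriv_mul_div_factorial_le {f g : ℂ → ℂ} {s : ℂ} {j : ℕ} {ε B : ℝ}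
    (hf : AnalyticAt ℂ f s) (hg : AnalyticAt ℂ g s) (hε : ∀ a ≤ j, ‖iteratedDeriv a f s‖ ≤ ε)
    (hB : ∀ a ≤ j, ‖iteratedDeriv a g s‖ ≤ a.factorial * B) :
    ‖iteratedDeriv j (f * g) s / j.factorial‖ ≤ (j + 1) * (ε * B) := by
  have hε0 : 0 ≤ ε := (norm_nonneg _).trans (hε 0 j.zero_le)
  have hB0 : 0 ≤ B := by simpa using (norm_nonneg _).trans (hB 0 j.zero_le)
  rw [iteratedDeriv_mul hf.contDiffAt hg.contDiffAt, norm_div, Complex.norm_natCast,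
    div_le_iff₀ (by positivity)]
  have hterm : ∀ a ∈ range (j + 1), ‖(j.choose a : ℂ) * iteratedDeriv a f s *
      iteratedDeriv (j - a) g s‖ ≤ ε * B * j.factorial := by
    intro a ha
    have ha : a ≤ j := Nat.lt_succ_iff.mp (mem_range.mp ha)
    rw [norm_mul, norm_mul, Complex.norm_natCast]
    have hchoose : (j.choose a * (j - a).factorial : ℝ) ≤ j.factorial := by
      rw [← Nat.choose_mul_factorial_mul_factorial ha]
      exact_mod_cast Nat.mul_le_mul_right _ (Nat.le_mul_of_pos_right _ a.factorial_pos)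
    calc (j.choose a : ℝ) * ‖iteratedDeriv a f s‖ * ‖iteratedDeriv (j - a) g s‖
        ≤ j.choose a * ε * ((j - a).factorial * B) := by
          gcongr
          exacts [hε a ha, hB _ (j.sub_le a)]
      _ = ε * B * (j.choose a * (j - a).factorial) := by ring
      _ ≤ ε * B * j.factorial := by gcongr
  refine (norm_sum_le_of_le _ hterm).trans_eq ?_
  rw [sum_const, card_range, nsmul_eq_mul]
  push_cast
  ring

variable {ι : Type*} [DecidableEq ι] {p : ι → ℂ} {N : Finset ι} {τ : ℕ} {i k : ι} {f : ℂ → ℂ}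

/-- The weight of the node `p i` in Hermite interpolation: it equals `1` at `p i` and vanishes to
order `τ` at the other nodes `p k`, `k ∈ N`. -/
noncomputable def hermiteWeight (p : ι → ℂ) (N : Finset ι) (τ : ℕ) (i : ι) (z : ℂ) : ℂ :=
  ∏ k ∈ N.erase i, ((z - p k) / (p i - p k)) ^ τ

theorem differentiable_hermiteWeight (p : ι → ℂ) (N : Finset ι) (τ : ℕ) (i : ι) :
    Differentiable ℂ (hermiteWeight p N τ i) := by
  unfold hermiteWeight
  fun_prop

theorem half_pow_le_norm_hermiteWeight (hsep : ∀ k ∈ N.erase i, 2 ≤ ‖p i - p k‖) {z : ℂ}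
    (hz : z ∈ Metric.closedBall (p i) 1) :
    (1 / 2) ^ (τ * #(N.erase i)) ≤ ‖hermiteWeight p N τ i z‖ := by
  rw [hermiteWeight, norm_prod, pow_mul, ← prod_const]
  refine prod_le_prod (fun _ _ ↦ by positivity) fun k hk ↦ ?_
  rw [norm_pow, norm_div]
  refine pow_le_pow_left₀ (by norm_num) ?_ τ
  have hk2 := hsep k hk
  have hzi := norm_sub_norm_le (p i - p k) (p i - z)
  rw [sub_sub_sub_cancel_left, norm_sub_rev (p i) z] at hzi
  rw [le_div_iff₀ (by linarith)]
  linarith [mem_closedBall_iff_norm.mp hz]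

theorem hermiteWeight_ne_zero (hsep : ∀ k ∈ N.erase i, 2 ≤ ‖p i - p k‖) {z : ℂ}
    (hz : z ∈ Metric.closedBall (p i) 1) : hermiteWeight p N τ i z ≠ 0 :=
  norm_pos_iff.mp ((by positivity : (0 : ℝ) < _).trans_le (half_pow_le_norm_hermiteWeight hsep hz))

theorem norm_iteratedDeriv_inv_hermiteWeight_le (hsep : ∀ k ∈ N.erase i, 2 ≤ ‖p i - p k‖) (j : ℕ) :
    ‖iteratedDeriv j (hermiteWeight p N τ i)⁻¹ (p i)‖ ≤ j.factorial * 2 ^ (τ * #(N.erase i)) := by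
  have hcauchy := Complex.norm_iteratedDeriv_le_of_forall_mem_sphere_norm_le (c := p i) (R := 1)
    (C := 2 ^ (τ * #(N.erase i))) (f := (hermiteWeight p N τ i)⁻¹) j one_pos ?_ ?_
  · simpa using hcauchy
  · refine DifferentiableOn.diffContOnCl ?_
    rw [closure_ball _ one_ne_zero]
    exact (differentiable_hermiteWeight p N τ i).differentiableOn.inv fun z hz ↦
      hermiteWeight_ne_zero hsep hz
  · intro z hz
    rw [Pi.inv_apply, norm_inv, ← inv_inv (2 ^ _), ← inv_pow, ← one_div 2]
    exact inv_anti₀ (by positivity)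
      (half_pow_le_norm_hermiteWeight hsep (Metric.sphere_subset_closedBall hz))

theorem norm_hermiteWeight_le {z : ℂ} {r : ℝ} (hz : ∀ k ∈ N, ‖z - p k‖ ≤ r) :
    ‖hermiteWeight p N τ i z‖ ≤ (∏ k ∈ N.erase i, r / ‖p i - p k‖) ^ τ := by
  rw [hermiteWeight, prod_pow, norm_pow, norm_prod]
  gcongr with k hk
  rw [norm_div]
  gcongr
  exact hz k (mem_of_mem_erase hk)

/-- The contribution of the node `p i` to the Hermite interpolant of `f`. -/
noncomputable def hermiteTerm (f : ℂ → ℂ) (p : ι → ℂ) (N : Finset ι) (τ : ℕ) (i : ι) : ℂ → ℂ :=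
  hermiteWeight p N τ i * taylorSum (f * (hermiteWeight p N τ i)⁻¹) (p i) τ

theorem differentiable_hermiteTerm (f : ℂ → ℂ) (p : ι → ℂ) (N : Finset ι) (τ : ℕ) (i : ι) :
    Differentiable ℂ (hermiteTerm f p N τ i) :=
  (differentiable_hermiteWeight p N τ i).mul (differentiable_taylorSum _ _ _)

theorem le_analyticOrderAt_sub_hermiteTerm (hf : AnalyticAt ℂ f (p i))
    (hsep : ∀ k ∈ N.erase i, 2 ≤ ‖p i - p k‖) :
    τ ≤ analyticOrderAt (f - hermiteTerm f p N τ i) (p i) := by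
  set Q := hermiteWeight p N τ i with hQ
  have hQa : AnalyticAt ℂ Q (p i) := (differentiable_hermiteWeight p N τ i).analyticAt _
  have hQ0 : Q (p i) ≠ 0 :=
    hermiteWeight_ne_zero hsep (Metric.mem_closedBall_self zero_le_one)
  have hu : AnalyticAt ℂ (f * Q⁻¹) (p i) := hf.mul (hQa.inv hQ0)
  have hfactor : f - hermiteTerm f p N τ i =ᶠ[𝓝 (p i)]
      Q * (f * Q⁻¹ - taylorSum (f * Q⁻¹) (p i) τ) := by
    filter_upwards [hQa.continuousAt.eventually_ne hQ0] with z hz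
    simp only [hermiteTerm, ← hQ, Pi.sub_apply, Pi.mul_apply, Pi.inv_apply]
    field_simp
  rw [analyticOrderAt_congr hfactor,
    analyticOrderAt_mul hQa (hu.sub ((differentiable_taylorSum _ _ _).analyticAt _))]
  exact le_add_left (le_analyticOrderAt_sub_taylorSum hu τ)

theorem le_analyticOrderAt_hermiteTerm (f : ℂ → ℂ) (hk : k ∈ N.erase i) :
    τ ≤ analyticOrderAt (hermiteTerm f p N τ i) (p k) := by
  rw [natCast_le_analyticOrderAt ((differentiable_hermiteTerm f p N τ i).analyticAt _)]
  have hR := differentiable_taylorSum (f * (hermiteWeight p N τ i)⁻¹) (p i) τ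
  refine ⟨fun z ↦ (p i - p k)⁻¹ ^ τ * (∏ l ∈ (N.erase i).erase k,
    ((z - p l) / (p i - p l)) ^ τ) * taylorSum (f * (hermiteWeight p N τ i)⁻¹) (p i) τ z,
    Differentiable.analyticAt (by fun_prop) _, Eventually.of_forall fun z ↦ ?_⟩
  rw [hermiteTerm, Pi.mul_apply, hermiteWeight, ← mul_prod_erase _ _ hk, div_eq_mul_inv, mul_pow,
    smul_eq_mul]
  ring

theorem norm_hermiteTerm_le (hf : AnalyticAt ℂ f (p i)) (hi : i ∈ N)
    (hsep : ∀ k ∈ N.erase i, 2 ≤ ‖p i - p k‖) {ε : ℝ} (hε0 : 0 ≤ ε)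
    (hε : ∀ j < τ, ‖iteratedDeriv j f (p i)‖ ≤ ε) {z : ℂ} {r : ℝ} (hr : 1 ≤ r)
    (hz : ∀ k ∈ N, ‖z - p k‖ ≤ r) :
    ‖hermiteTerm f p N τ i z‖ ≤
      τ ^ 2 * ε * (r * ∏ k ∈ N.erase i, 2 * r / ‖p i - p k‖) ^ τ := by
  have hinv : AnalyticAt ℂ (hermiteWeight p N τ i)⁻¹ (p i) :=
    ((differentiable_hermiteWeight p N τ i).analyticAt _).inv
      (hermiteWeight_ne_zero hsep (Metric.mem_closedBall_self zero_le_one))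
  have hcoeff : ∀ j < τ, ‖iteratedDeriv j (f * (hermiteWeight p N τ i)⁻¹) (p i) / j.factorial‖ ≤
      τ * (ε * 2 ^ (τ * #(N.erase i))) := by
    intro j hj
    refine (norm_iteratedDeriv_mul_div_factorial_le hf hinv (fun a ha ↦ hε a (by omega))
      fun a _ ↦ norm_iteratedDeriv_inv_hermiteWeight_le hsep a).trans ?_
    gcongr
    exact_mod_cast hj
  have htaylor := norm_taylorSum_le hcoeff hr (hz i hi)
  rw [hermiteTerm, Pi.mul_apply, norm_mul]
  refine (mul_le_mul (norm_hermiteWeight_le hz) htaylor (norm_nonneg _) (by positivity)).trans_eq ?_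
  simp only [mul_div_assoc, prod_mul_distrib, prod_const, mul_pow, ← pow_mul]
  ring

/-- The Hermite interpolant of `f`, which agrees with `f` to order `τ` at the nodes `p i`,
`i ∈ N`. -/
noncomputable def hermiteInterpolant (f : ℂ → ℂ) (p : ι → ℂ) (N : Finset ι) (τ : ℕ) : ℂ → ℂ :=
  ∑ i ∈ N, hermiteTerm f p N τ i

theorem differentiable_hermiteInterpolant (f : ℂ → ℂ) (p : ι → ℂ) (N : Finset ι) (τ : ℕ) :
    Differentiable ℂ (hermiteInterpolant f p N τ) :=
  Differentiable.sum fun _ _ ↦ differentiable_hermiteTerm _ _ _ _ _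

theorem le_analyticOrderAt_sum {I : Type*} {s : Finset I} {g : I → ℂ → ℂ} {z : ℂ} {a : ℕ∞}
    (h : ∀ i ∈ s, a ≤ analyticOrderAt (g i) z) : a ≤ analyticOrderAt (∑ i ∈ s, g i) z := by
  refine sum_induction g (a ≤ analyticOrderAt · z)
    (fun _ _ hg hh ↦ (le_min hg hh).trans le_analyticOrderAt_add) ?_ h
  exact le_top.trans_eq (analyticOrderAt_eq_top.mpr (by simp)).symm

theorem le_analyticOrderAt_sub_hermiteInterpolant (hf : AnalyticAt ℂ f (p i)) (hi : i ∈ N)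
    (hsep : ∀ k ∈ N.erase i, 2 ≤ ‖p i - p k‖) :
    τ ≤ analyticOrderAt (f - hermiteInterpolant f p N τ) (p i) := by
  rw [hermiteInterpolant, ← add_sum_erase N _ hi, ← sub_sub]
  refine (le_min (le_analyticOrderAt_sub_hermiteTerm hf hsep) ?_).trans le_analyticOrderAt_sub
  refine le_analyticOrderAt_sum fun k hk ↦ le_analyticOrderAt_hermiteTerm f ?_
  exact mem_erase.mpr ⟨(ne_of_mem_erase hk).symm, hi⟩

end HermiteInterpolation

section ApproximateSchwarz

open Finset Real

theorem prod_erase_abs_sub (i m : ℕ) :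
    ∏ k ∈ (range (i + 1 + m)).erase i, |(i : ℝ) - k| = i.factorial * m.factorial := by
  induction m with
  | zero =>
    rw [add_zero, range_add_one, erase_insert (by simp), ← prod_range_reflect,
      ← prod_range_add_one_eq_factorial]
    push_cast
    rw [Nat.factorial_zero, Nat.cast_one, mul_one]
    refine prod_congr rfl fun k hk ↦ ?_
    have hcast : ((i - 1 - k : ℕ) : ℝ) = i - (k + 1) := by
      rw [Nat.sub_sub, Nat.cast_sub (by have := mem_range.mp hk; omega)]
      push_cast
      ring
    rw [hcast, sub_sub_cancel, abs_of_nonneg (by positivity)]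
  | succ m ih =>
    rw [← add_assoc, range_add_one, erase_insert_of_ne (by omega), prod_insert (by simp), ih,
      Nat.factorial_succ]
    push_cast
    rw [abs_of_nonpos (by linarith)]
    ring

theorem factorial_le_prod_erase {S i : ℕ} (hi : i < S) :
    ((S - 1).factorial : ℝ) ≤ ∏ k ∈ (range S).erase i, 2 * |(i : ℝ) - k| := by
  obtain ⟨m, rfl⟩ := Nat.exists_eq_add_of_le (Nat.succ_le_of_lt hi)
  rw [prod_mul_distrib, prod_const, Nat.succ_eq_add_one, prod_erase_abs_sub,
    card_erase_of_mem (mem_range.mpr (by omega)), card_range, show i + 1 + m - 1 = i + m by omega,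
    ← Nat.add_choose_mul_factorial_mul_factorial i m]
  push_cast
  rw [mul_assoc]
  gcongr
  exact_mod_cast Nat.choose_le_two_pow (i + m) m

theorem norm_odd_sub_odd (i k : ℕ) :
    ‖(2 * i + 1 : ℂ) - (2 * k + 1)‖ = 2 * |(i : ℝ) - k| := by
  rw [show (2 * i + 1 : ℂ) - (2 * k + 1) = ((2 * (i - k) : ℝ) : ℂ) by push_cast; ring,
    Complex.norm_real, norm_mul, norm_ofNat, norm_eq_abs]

theorem two_le_norm_odd_sub_odd {i k : ℕ} (h : k ≠ i) :
    2 ≤ ‖(2 * i + 1 : ℂ) - (2 * k + 1)‖ := by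
  have : (1 : ℤ) ≤ |(i : ℤ) - k| := Int.one_le_abs (by omega)
  have : (1 : ℝ) ≤ |(i : ℝ) - k| := by exact_mod_cast this
  rw [norm_odd_sub_odd]
  linarith

theorem norm_odd_sub_natCast_le {S i : ℕ} (hi : i < S) : ‖(2 * i + 1 : ℂ) - S‖ ≤ S := by
  rw [show (2 * i + 1 : ℂ) - S = ((2 * i + 1 - S : ℤ) : ℂ) by push_cast; ring,
    Complex.norm_intCast]
  exact_mod_cast abs_le.mpr (show -(S : ℤ) ≤ 2 * i + 1 - S ∧ (2 * i + 1 - S : ℤ) ≤ S by omega)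

theorem mul_pow_div_factorial_le_exp {S : ℕ} (hS : 1 ≤ S) :
    (42 * S) ^ S / (S - 1).factorial ≤ exp (5.5 * S) := by
  have hpow : (S : ℝ) ^ S / S.factorial ≤ exp 1 ^ S := by
    rw [exp_one_pow]
    exact pow_div_factorial_le_exp _ (by positivity) _
  have hbase : 84 * exp 1 ≤ exp 5.5 := by
    have hexp : (1.645 : ℝ) ≤ exp 0.5 := by
      have := sum_le_exp_of_nonneg (x := 0.5) (by norm_num) 4
      norm_num [sum_range_succ, Nat.factorial] at this ⊢
      linarith
    calc 84 * exp 1 ≤ 1.645 ^ 9 * exp 1 := by gcongr; norm_num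
      _ ≤ exp 0.5 ^ 9 * exp 1 := by gcongr
      _ = exp 5.5 := by rw [← exp_nat_mul, ← exp_add]; norm_num
  rw [mul_comm 5.5, exp_nat_mul]
  calc (42 * S : ℝ) ^ S / (S - 1).factorial = 42 ^ S * S * (S ^ S / S.factorial) := by
        rw [← Nat.mul_factorial_pred (by omega : S ≠ 0), mul_pow]
        push_cast
        field_simp
    _ ≤ 42 ^ S * 2 ^ S * exp 1 ^ S := by
        gcongr
        exact_mod_cast Nat.lt_two_pow_self.le
    _ = (84 * exp 1) ^ S := by rw [mul_pow, ← mul_pow]; norm_num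
    _ ≤ exp 5.5 ^ S := by gcongr

theorem mul_sq_le_exp {S : ℕ} (hS : 1 ≤ S) (τ : ℕ) :
    (S : ℝ) * τ ^ 2 ≤ exp (1.5 * (S * τ)) := by
  have htwo : (S * τ : ℝ) ≤ 2 ^ (S * τ) := by exact_mod_cast Nat.lt_two_pow_self.le
  have hS1 : (1 : ℝ) ≤ S := by exact_mod_cast hS
  calc (S : ℝ) * τ ^ 2 ≤ S * (S * τ ^ 2) := le_mul_of_one_le_left (by positivity) hS1
    _ = (S * τ) * (S * τ) := by ring
    _ ≤ 2 ^ (S * τ) * 2 ^ (S * τ) := by gcongr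
    _ = 4 ^ (S * τ) := by rw [← mul_pow]; norm_num
    _ ≤ exp 1.5 ^ (S * τ) := by
        gcongr
        have := sum_le_exp_of_nonneg (x := 1.5) (by norm_num) 5
        norm_num [sum_range_succ, Nat.factorial] at this ⊢
        linarith
    _ = exp (1.5 * (S * τ)) := by rw [← exp_nat_mul]; push_cast; ring_nf

theorem mul_prod_erase_odd_le_exp {S i : ℕ} (hi : i < S) :
    21 * S * ∏ k ∈ (range S).erase i, 2 * (21 * S) / ‖(2 * i + 1 : ℂ) - (2 * k + 1)‖ ≤
      exp (5.5 * S) := by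
  refine le_trans ?_ (mul_pow_div_factorial_le_exp (by omega : 1 ≤ S))
  simp only [norm_odd_sub_odd, prod_div_distrib, prod_const]
  rw [card_erase_of_mem (mem_range.mpr hi), card_range, ← mul_div_assoc,
    show 2 * (21 * (S : ℝ)) = 42 * S by ring]
  gcongr
  · calc 21 * (S : ℝ) * (42 * S) ^ (S - 1)
        ≤ (42 * S) * (42 * S) ^ (S - 1) := by gcongr; norm_num
      _ = (42 * S) ^ S := mul_pow_sub_one (by omega) _
  · exact factorial_le_prod_erase hi

theorem norm_hermiteInterpolant_odd_le {f : ℂ → ℂ} (hf : Differentiable ℂ f) {S τ : ℕ}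
    (hS : 1 ≤ S) {ε : ℝ} (hε0 : 0 ≤ ε)
    (hε : ∀ i < S, ∀ j < τ, ‖iteratedDeriv j f (2 * i + 1)‖ ≤ ε) {z : ℂ}
    (hz : ‖z - S‖ ≤ 20 * S) :
    ‖hermiteInterpolant f (fun i : ℕ ↦ (2 * i + 1 : ℂ)) (range S) τ z‖ ≤
      ε * exp (7 * (S * τ)) := by
  have hS1 : (1 : ℝ) ≤ S := by exact_mod_cast hS
  have hnode : ∀ k ∈ range S, ‖z - (2 * k + 1)‖ ≤ 21 * S := fun k hk ↦ by
    rw [← sub_sub_sub_cancel_right z (2 * k + 1) (S : ℂ)]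
    exact (norm_sub_le _ _).trans (by linarith [norm_odd_sub_natCast_le (mem_range.mp hk)])
  have hterm : ∀ i ∈ range S, ‖hermiteTerm f (fun i : ℕ ↦ (2 * i + 1 : ℂ)) (range S) τ i z‖ ≤
      τ ^ 2 * ε * exp (5.5 * S) ^ τ := fun i hi ↦ by
    refine (norm_hermiteTerm_le (hf.analyticAt _) hi
      (fun k hk ↦ two_le_norm_odd_sub_odd (ne_of_mem_erase hk)) hε0 (hε i (mem_range.mp hi))
      (by linarith) hnode).trans ?_
    gcongr
    exact mul_prod_erase_odd_le_exp (mem_range.mp hi)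
  rw [hermiteInterpolant, Finset.sum_apply]
  calc ‖∑ i ∈ range S, hermiteTerm f (fun i : ℕ ↦ (2 * i + 1 : ℂ)) (range S) τ i z‖
      ≤ ∑ _i ∈ range S, τ ^ 2 * ε * exp (5.5 * S) ^ τ := norm_sum_le_of_le _ hterm
    _ = ε * (S * τ ^ 2 * exp (5.5 * S) ^ τ) := by
        rw [sum_const, card_range, nsmul_eq_mul]; ring
    _ ≤ ε * (exp (1.5 * (S * τ)) * exp (5.5 * S) ^ τ) := by
        gcongr
        exact mul_sq_le_exp hS τ
    _ = ε * exp (7 * (S * τ)) := by rw [← exp_nat_mul, ← exp_add]; ring_nf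

theorem two_div_nineteen_pow_le_exp (m : ℕ) : (2 / 19 : ℝ) ^ m ≤ exp (-2 * m) := by
  rw [mul_comm, exp_nat_mul, exp_neg, show (2 / 19 : ℝ) = 9.5⁻¹ by norm_num,
    show (2 : ℝ) = 1 + 1 by norm_num, exp_add]
  gcongr
  nlinarith [exp_one_lt_d9, exp_pos 1]

/-- An approximate Schwarz lemma: subtracting the Hermite interpolant, which is small, turns the
almost-zeros of `f` at the odd integers into genuine zeros of order `τ`. -/
theorem norm_le_of_norm_iteratedDeriv_le {f : ℂ → ℂ} (hf : Differentiable ℂ f) {S τ : ℕ}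
    (hS : 1 ≤ S) {M ε : ℝ} (hε0 : 0 ≤ ε) (hM : ∀ z ∈ Metric.sphere (S : ℂ) (20 * S), ‖f z‖ ≤ M)
    (hε : ∀ i < S, ∀ j < τ, ‖iteratedDeriv j f (2 * i + 1)‖ ≤ ε) {x : ℂ} (hx : ‖x - S‖ ≤ S) :
    ‖f x‖ ≤ exp (-2 * (S * τ)) * M + 2 * (ε * exp (7 * (S * τ))) := by
  have hS1 : (1 : ℝ) ≤ S := by exact_mod_cast hS
  set H := hermiteInterpolant f (fun i : ℕ ↦ (2 * i + 1 : ℂ)) (range S) τ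
  set D := ε * exp (7 * (S * τ))
  have hH : ∀ z : ℂ, ‖z - S‖ ≤ 20 * S → ‖H z‖ ≤ D := fun z hz ↦
    norm_hermiteInterpolant_odd_le hf hS hε0 hε hz
  have hg : ∀ z ∈ Metric.sphere (S : ℂ) (20 * S), ‖(f - H) z‖ ≤ M + D := fun z hz ↦
    (norm_sub_le _ _).trans (add_le_add (hM z hz) (hH z (mem_sphere_iff_norm.mp hz).le))
  have hschwarz := norm_le_pow_mul_of_le_analyticOrderAt
    (fun a _ b _ hab ↦ by simpa using hab) (hf.sub (differentiable_hermiteInterpolant f _ _ τ))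
    (fun i hi ↦ le_analyticOrderAt_sub_hermiteInterpolant (hf.analyticAt _) hi
      fun k hk ↦ two_le_norm_odd_sub_odd (ne_of_mem_erase hk))
    (by linarith : (S : ℝ) < 20 * S) (fun i hi ↦ norm_odd_sub_natCast_le (mem_range.mp hi)) hg hx
  rw [card_range, show 2 * (S : ℝ) / (20 * S - S) = 2 / 19 by field_simp; norm_num] at hschwarz
  have hM0 : 0 ≤ M + D := by
    have hmem : (S + (20 * S : ℝ) : ℂ) ∈ Metric.sphere (S : ℂ) (20 * S) := by simp
    exact (norm_nonneg _).trans (hg _ hmem)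
  have hdecay : (2 / 19 : ℝ) ^ (τ * S) ≤ exp (-2 * (S * τ)) := by
    simpa [mul_comm (S : ℝ)] using two_div_nineteen_pow_le_exp (τ * S)
  have hexp : exp (-2 * (S * τ)) ≤ 1 := exp_le_one_iff.mpr (by nlinarith [τ.cast_nonneg (α := ℝ)])
  have hD0 : 0 ≤ D := by positivity
  calc ‖f x‖ = ‖(f - H) x + H x‖ := by simp
    _ ≤ exp (-2 * (S * τ)) * (M + D) + D :=
        norm_add_le_of_le (hschwarz.trans (by gcongr)) (hH x (by linarith))
    _ ≤ exp (-2 * (S * τ)) * M + 2 * D := by nlinarith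

end ApproximateSchwarz

section ExponentBox

open Finset

theorem two_smul_div_two_add_mod_two {ι : Type*} (v : ι → ℕ) :
    2 • (fun j ↦ v j / 2) + (fun j ↦ v j % 2) = v :=
  funext fun j ↦ Nat.div_add_mod (v j) 2

variable {ι : Type*} [Fintype ι] [DecidableEq ι] {L : ℕ}

/-- The exponent vectors with all coordinates below `L`. -/
def expBox (L : ℕ) : Finset (ι → ℕ) := Fintype.piFinset fun _ ↦ range L

theorem mem_expBox {v : ι → ℕ} : v ∈ expBox L ↔ ∀ j, v j < L := by
  simp [expBox]

theorem card_expBox (L : ℕ) : #(expBox L : Finset (ι → ℕ)) = L ^ Fintype.card ι := by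
  simp [expBox]

theorem zero_mem_expBox (hL : 0 < L) : (0 : ι → ℕ) ∈ expBox L :=
  mem_expBox.mpr fun _ ↦ hL

theorem expBox_mono {L' : ℕ} (h : L ≤ L') : (expBox L : Finset (ι → ℕ)) ⊆ expBox L' :=
  fun _ hv ↦ mem_expBox.mpr fun j ↦ (mem_expBox.mp hv j).trans_le h

theorem two_smul_add_mem_expBox {v m : ι → ℕ} (hv : v ∈ expBox L) (hm : m ∈ expBox 2) :
    2 • v + m ∈ expBox (2 * L) := by
  refine mem_expBox.mpr fun j ↦ ?_
  have hvj := mem_expBox.mp hv j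
  have hmj := mem_expBox.mp hm j
  simp only [Pi.add_apply, Pi.smul_apply, smul_eq_mul]
  omega

theorem mod_two_mem_expBox (v : ι → ℕ) : (fun j ↦ v j % 2) ∈ expBox 2 :=
  mem_expBox.mpr fun _ ↦ Nat.mod_lt _ two_pos

theorem div_two_mem_expBox {v : ι → ℕ} (hv : v ∈ expBox (2 * L)) :
    (fun j ↦ v j / 2) ∈ expBox L :=
  mem_expBox.mpr fun j ↦ Nat.div_lt_of_lt_mul (mem_expBox.mp hv j)

theorem sum_expBox_two_mul {M : Type*} [AddCommMonoid M] (L : ℕ) (F : (ι → ℕ) → M) :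
    ∑ v ∈ expBox (2 * L), F v = ∑ m ∈ expBox 2, ∑ v ∈ expBox L, F (2 • v + m) := by
  rw [← sum_product']
  refine sum_nbij' (fun v ↦ (fun j ↦ v j % 2, fun j ↦ v j / 2)) (fun w ↦ 2 • w.2 + w.1)
    ?_ ?_ ?_ ?_ ?_
  · exact fun v hv ↦ mem_product.mpr ⟨mod_two_mem_expBox v, div_two_mem_expBox hv⟩
  · exact fun w hw ↦ two_smul_add_mem_expBox (mem_product.mp hw).2 (mem_product.mp hw).1
  · exact fun v _ ↦ two_smul_div_two_add_mod_two v
  · intro w hw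
    have hmod := mem_expBox.mp (mem_product.mp hw).1
    refine Prod.ext (funext fun j ↦ ?_) (funext fun j ↦ ?_) <;>
    · have hj := hmod j
      simp only [Pi.add_apply, Pi.smul_apply, smul_eq_mul]
      omega
  · exact fun v _ ↦ congrArg F (two_smul_div_two_add_mod_two v).symm

theorem sum_expBox_two {M : Type*} [AddCommMonoid M] (F : (Fin 3 → ℕ) → M) :
    ∑ m ∈ expBox 2, F m = ∑ i : Fin 2, ∑ j : Fin 2, ∑ k : Fin 2, F ![(i : ℕ), j, k] := by
  have hbox : expBox 2 = ({![0, 0, 0], ![0, 0, 1], ![0, 1, 0], ![0, 1, 1], ![1, 0, 0],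
      ![1, 0, 1], ![1, 1, 0], ![1, 1, 1]} : Finset (Fin 3 → ℕ)) := by decide
  rw [hbox]
  simp [sum_insert, Fin.sum_univ_two, add_assoc]

end ExponentBox

section ExponentialSums

open Finset Real

/-- The logarithms of the three bases `2`, `3` and `φ`. -/
noncomputable def baseLog : Fin 3 → ℝ := ![log 2, log 3, log goldenRatio]

/-- The logarithm of `2 ^ v 0 * 3 ^ v 1 * φ ^ v 2`. -/
noncomputable def logWeight (v : Fin 3 → ℕ) : ℝ := ∑ j, v j * baseLog j

theorem baseLog_nonneg (j : Fin 3) : 0 ≤ baseLog j := by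
  fin_cases j
  exacts [log_nonneg one_le_two, log_nonneg (by norm_num), log_nonneg one_lt_goldenRatio.le]

theorem sum_baseLog_le : ∑ j, baseLog j ≤ 2.28 := by
  have hthree : log 3 ≤ 1.1 := by
    rw [log_le_iff_le_exp three_pos]
    have := sum_le_exp_of_nonneg (x := 1.1) (by norm_num) 7
    norm_num [sum_range_succ, Nat.factorial] at this ⊢
    linarith
  simp only [baseLog, Fin.sum_univ_three, Matrix.cons_val]
  linarith [log_two_lt_d9, log_goldenRatio_lt]

theorem logWeight_nonneg (v : Fin 3 → ℕ) : 0 ≤ logWeight v :=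
  sum_nonneg fun j _ ↦ mul_nonneg (Nat.cast_nonneg _) (baseLog_nonneg j)

theorem logWeight_le {L : ℕ} {v : Fin 3 → ℕ} (hv : v ∈ expBox L) : logWeight v ≤ 2.28 * L := by
  calc logWeight v ≤ ∑ j, L * baseLog j := sum_le_sum fun j _ ↦
        mul_le_mul_of_nonneg_right (by exact_mod_cast (mem_expBox.mp hv j).le) (baseLog_nonneg j)
    _ = (∑ j, baseLog j) * L := by rw [← mul_sum, mul_comm]
    _ ≤ 2.28 * L := by gcongr; exact sum_baseLog_le

theorem logWeight_two_smul_add (v m : Fin 3 → ℕ) :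
    logWeight (2 • v + m) = 2 * logWeight v + logWeight m := by
  simp only [logWeight, mul_sum, ← sum_add_distrib, Pi.add_apply, Pi.smul_apply, smul_eq_mul]
  push_cast
  exact sum_congr rfl fun j _ ↦ by ring

theorem exp_logWeight_mul (v : Fin 3 → ℕ) (m : ℕ) :
    exp (logWeight v * m) = 2 ^ (v 0 * m) * 3 ^ (v 1 * m) * goldenRatio ^ (v 2 * m) := by
  have hexp : logWeight v * m = (v 0 * m : ℕ) * log 2 + (v 1 * m : ℕ) * log 3 +
      (v 2 * m : ℕ) * log goldenRatio := by
    simp only [logWeight, baseLog, Fin.sum_univ_three, Matrix.cons_val]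
    push_cast
    ring
  rw [hexp, exp_add, exp_add, exp_nat_mul, exp_nat_mul, exp_nat_mul, exp_log two_pos,
    exp_log three_pos, exp_log goldenRatio_pos]

theorem exp_logWeight_mul_half (v : Fin 3 → ℕ) (m : ℕ) :
    exp (logWeight v * (m / 2)) =
      √2 ^ (v 0 * m) * √3 ^ (v 1 * m) * √goldenRatio ^ (v 2 * m) := by
  have hsqrt : ∀ {a : ℝ}, 0 ≤ a → ∀ k : ℕ, √(a ^ k) = √a ^ k := by
    intro a ha k
    induction k with
    | zero => simp
    | succ k ih => rw [pow_succ, sqrt_mul (pow_nonneg ha k), ih, pow_succ]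
  rw [show logWeight v * (m / 2) = logWeight v * m / 2 by ring, exp_half, exp_logWeight_mul,
    sqrt_mul (by positivity), sqrt_mul (by positivity), hsqrt zero_le_two, hsqrt zero_le_three,
    hsqrt goldenRatio_pos.le]

theorem exp_logWeight_mul_mem_goldenField (v : Fin 3 → ℕ) (m : ℕ) :
    exp (logWeight v * m) ∈ goldenField := by
  rw [exp_logWeight_mul]
  exact mul_mem (mul_mem (pow_mem (ofNat_mem _ 2) _) (pow_mem (ofNat_mem _ 3) _))
    (pow_mem goldenRatio_mem_goldenField _)

/-- The exponential sum `∑ q v * (2 ^ v 0 * 3 ^ v 1 * φ ^ v 2) ^ x` over the exponent vectors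
below `L`. -/
noncomputable def expSum (L : ℕ) (q : (Fin 3 → ℕ) → ℤ) (x : ℝ) : ℝ :=
  ∑ v ∈ expBox L, q v * exp (logWeight v * x)

/-- The entire function extending `expSum L q`. -/
noncomputable def cexpSum (L : ℕ) (q : (Fin 3 → ℕ) → ℤ) (z : ℂ) : ℂ :=
  ∑ v ∈ expBox L, q v * Complex.exp ((logWeight v : ℝ) * z)

variable {L : ℕ} {q : (Fin 3 → ℕ) → ℤ}

theorem cexpSum_ofReal (L : ℕ) (q : (Fin 3 → ℕ) → ℤ) (x : ℝ) : cexpSum L q x = expSum L q x := by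
  rw [cexpSum, expSum]
  push_cast
  rfl

theorem differentiable_cexpSum (L : ℕ) (q : (Fin 3 → ℕ) → ℤ) :
    Differentiable ℂ (cexpSum L q) := by
  unfold cexpSum
  fun_prop

theorem iteratedDeriv_cexpSum (L : ℕ) (q : (Fin 3 → ℕ) → ℤ) (j : ℕ) (x : ℝ) :
    iteratedDeriv j (cexpSum L q) x =
      (∑ v ∈ expBox L, q v * logWeight v ^ j * exp (logWeight v * x) : ℝ) := by
  unfold cexpSum
  rw [iteratedDeriv_fun_sum fun v _ ↦ ContDiff.contDiffAt (by fun_prop)]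
  push_cast
  refine sum_congr rfl fun v _ ↦ ?_
  rw [iteratedDeriv_const_mul_field, iteratedDeriv_cexp_const_mul]
  ring

theorem norm_cexpSum_le {A r : ℝ} (hA : ∑ v ∈ expBox L, |(q v : ℝ)| ≤ A) {z : ℂ} (hz : ‖z‖ ≤ r) :
    ‖cexpSum L q z‖ ≤ A * exp (2.28 * L * r) := by
  refine (norm_sum_le _ _).trans (le_trans ?_ (mul_le_mul_of_nonneg_right hA (exp_pos _).le))
  rw [sum_mul]
  refine sum_le_sum fun v hv ↦ ?_
  rw [norm_mul, Complex.norm_intCast, Complex.norm_exp]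
  gcongr
  calc ((logWeight v : ℝ) * z).re ≤ ‖(logWeight v : ℝ) * z‖ := Complex.re_le_norm _
    _ = logWeight v * ‖z‖ := by
        rw [norm_mul, Complex.norm_real, norm_of_nonneg (logWeight_nonneg v)]
    _ ≤ 2.28 * L * r := mul_le_mul (logWeight_le hv) hz (norm_nonneg _) (by positivity)

theorem norm_iteratedDeriv_cexpSum_le {y : (Fin 3 → ℕ) → ℝ} {η A : ℝ} (hη1 : η ≤ 1) (hL : 2 ≤ L)
    (hη : ∀ v ∈ expBox L, |logWeight v - y v| ≤ η) (hA : ∑ v ∈ expBox L, |(q v : ℝ)| ≤ A)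
    {j : ℕ} {x : ℝ} (hx : 0 ≤ x)
    (h : ∑ v ∈ expBox L, q v * y v ^ j * exp (logWeight v * x) = 0) :
    ‖iteratedDeriv j (cexpSum L q) x‖ ≤
      A * (η * j * (3 * L) ^ (j - 1) * exp (2.28 * L * x)) := by
  have hL2 : (2 : ℝ) ≤ L := by exact_mod_cast hL
  have hη0 : 0 ≤ η := (abs_nonneg _).trans (hη 0 (zero_mem_expBox (by omega)))
  rw [iteratedDeriv_cexpSum, Complex.norm_real, norm_eq_abs, ← sub_zero (Finset.sum _ _), ← h,
    ← sum_sub_distrib]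
  refine (abs_sum_le_sum_abs _ _).trans
    (le_trans ?_ (mul_le_mul_of_nonneg_right hA (by positivity)))
  rw [sum_mul]
  refine sum_le_sum fun v hv ↦ ?_
  have hw0 := logWeight_nonneg v
  have hw := logWeight_le hv
  have hvη := hη v hv
  have hpow : |logWeight v ^ j - y v ^ j| ≤ η * j * (3 * L) ^ (j - 1) := by
    refine (abs_pow_sub_pow_le _ _ _).trans ?_
    gcongr
    refine max_le ?_ ?_
    · rw [abs_of_nonneg hw0]
      linarith
    · rw [abs_le] at hvη ⊢
      constructor <;> linarith
  rw [← sub_mul, ← mul_sub, abs_mul, abs_mul, abs_exp, mul_assoc]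
  gcongr

theorem one_le_abs_expSum_half_mul_pow {A : ℝ} (hA1 : 1 ≤ A)
    (hA : ∑ v ∈ expBox L, |(q v : ℝ)| ≤ A) {m : ℕ} (h : expSum L q (m / 2) ≠ 0) :
    1 ≤ |expSum L q (m / 2)| * (A * exp (2.28 * L * (m / 2))) ^ 15 := by
  have hsum : expSum L q (m / 2) = ∑ v ∈ expBox L,
      (q v : ℝ) * (√2 ^ (v 0 * m) * √3 ^ (v 1 * m) * √goldenRatio ^ (v 2 * m)) := by
    simp_rw [← exp_logWeight_mul_half]
    rfl
  rw [hsum] at h ⊢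
  refine one_le_abs_sum_mul_pow ?_
    (one_le_mul_of_one_le_of_one_le hA1 (one_le_exp (by positivity))) h
  refine le_trans ?_ (mul_le_mul_of_nonneg_right hA (exp_pos _).le)
  rw [sum_mul]
  refine sum_le_sum fun v hv ↦ ?_
  rw [← exp_logWeight_mul_half]
  gcongr
  exact logWeight_le hv

/-- Kummer descent: at a half-integer, the classes of exponents modulo `2` contribute
`ℚ(√5)`-multiples of the numbers `√2 ^ a * √3 ^ b * √φ ^ c`, which are independent. -/
theorem expSum_two_smul_add_eq_zero {i : ℕ} (h : expSum (2 * L) q ((2 * i + 1 : ℕ) / 2) = 0)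
    {m : Fin 3 → ℕ} (hm : m ∈ expBox 2) :
    expSum L (fun v ↦ q (2 • v + m)) (2 * i + 1 : ℕ) = 0 := by
  set G : (Fin 3 → ℕ) → ℝ := fun m ↦
    exp (logWeight m * i) * expSum L (fun v ↦ q (2 • v + m)) (2 * i + 1 : ℕ) with hG
  have hmem : ∀ m, G m ∈ goldenField := fun m ↦
    mul_mem (exp_logWeight_mul_mem_goldenField m i)
      (sum_mem fun v _ ↦ mul_mem (intCast_mem _ _) (exp_logWeight_mul_mem_goldenField v _))
  have hsum : ∑ m ∈ expBox 2, G m * exp (logWeight m * ((1 : ℕ) / 2)) = 0 := by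
    rw [← h, expSum, sum_expBox_two_mul]
    refine sum_congr rfl fun m _ ↦ ?_
    simp only [hG, expSum, mul_sum, sum_mul]
    refine sum_congr rfl fun v _ ↦ ?_
    rw [show logWeight (2 • v + m) * ((2 * i + 1 : ℕ) / 2) = logWeight m * i +
      logWeight v * (2 * i + 1 : ℕ) + logWeight m * ((1 : ℕ) / 2) by
        rw [logWeight_two_smul_add]; push_cast; ring, exp_add, exp_add]
    ring
  simp only [exp_logWeight_mul_half, mul_one, sum_expBox_two, Matrix.cons_val] at hsum
  rw [mem_expBox] at hm
  have hGm := eq_zero_of_sum_sqrt_eq_zero (C := fun a b c ↦ G ![(a : ℕ), b, c])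
    (fun _ _ _ ↦ hmem _) hsum ⟨m 0, hm 0⟩ ⟨m 1, hm 1⟩ ⟨m 2, hm 2⟩
  have hvec : ![m 0, m 1, m 2] = m := by
    ext j
    fin_cases j <;> rfl
  simp only [hvec] at hGm
  exact (mul_eq_zero.mp hGm).resolve_left (exp_ne_zero _)

end ExponentialSums

section AuxiliaryFunction

open Finset Real

/-- The coefficients `p v * γ₁ v ^ t₁ * γ₂ v ^ t₂` of the exponential sums attached to the auxiliary
polynomial `p`; the exponents `t₁` and `t₂` play the role of orders of differentiation. -/
def auxCoeff (p : (Fin 3 → ℕ) → ℤ) (γ₁ γ₂ : (Fin 3 → ℕ) →+ ℤ) (t₁ t₂ : ℕ) (v : Fin 3 → ℕ) : ℤ :=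
  p v * γ₁ v ^ t₁ * γ₂ v ^ t₂

/-- The auxiliary exponential sums of order below `T` vanish at the first `S` odd integers. -/
def AuxVanishes (p : (Fin 3 → ℕ) → ℤ) (γ₁ γ₂ : (Fin 3 → ℕ) →+ ℤ) (L T S : ℕ) : Prop :=
  ∀ t₁ t₂ i, t₁ + t₂ < T → i < S → expSum L (auxCoeff p γ₁ γ₂ t₁ t₂) (2 * i + 1 : ℕ) = 0

/-- The size conditions of the extrapolation, where `W` is the product of the degree and the number
of zeros: the frequencies `logWeight v` are close to combinations of two integer-valued forms, and
those forms, bounded by `G`, and the coefficients, bounded by `P`, are not too large. -/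
structure AuxBounds (γ₁ γ₂ : (Fin 3 → ℕ) →+ ℤ) (c₁ c₂ P G : ℝ) (L W : ℕ) : Prop where
  approx : ∀ v ∈ expBox L, |logWeight v - (c₁ * γ₁ v + c₂ * γ₂ v)| ≤ exp (-(1100 * W))
  one_le : 1 ≤ G
  abs_le_left : ∀ v ∈ expBox L, |(γ₁ v : ℝ)| ≤ G
  abs_le_right : ∀ v ∈ expBox L, |(γ₂ v : ℝ)| ≤ G
  nonneg : 0 ≤ P
  coeff_le : L ^ 3 * P * G ^ (128 * L) ≤ exp (7 * W)
  degree_le : (3 * L : ℝ) ^ (128 * L) ≤ exp (7 * W)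

variable {p : (Fin 3 → ℕ) → ℤ} {γ₁ γ₂ : (Fin 3 → ℕ) →+ ℤ} {c₁ c₂ P G : ℝ} {L S T t₁ t₂ : ℕ}

theorem AuxBounds.mono {L₀ W : ℕ} (h : AuxBounds γ₁ γ₂ c₁ c₂ P G L₀ W) (hL : 0 < L)
    (hLL₀ : L ≤ L₀) : AuxBounds γ₁ γ₂ c₁ c₂ P G L W where
  approx v hv := h.approx v (expBox_mono hLL₀ hv)
  one_le := h.one_le
  abs_le_left v hv := h.abs_le_left v (expBox_mono hLL₀ hv)
  abs_le_right v hv := h.abs_le_right v (expBox_mono hLL₀ hv)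
  nonneg := h.nonneg
  coeff_le := by
    have := h.nonneg
    have := h.one_le
    refine le_trans ?_ h.coeff_le
    gcongr
  degree_le := by
    have hL1 : (1 : ℝ) ≤ L := by exact_mod_cast hL
    refine le_trans ?_ h.degree_le
    calc (3 * L : ℝ) ^ (128 * L) ≤ (3 * L) ^ (128 * L₀) :=
          pow_le_pow_right₀ (by linarith) (by omega)
      _ ≤ (3 * L₀) ^ (128 * L₀) := by gcongr

theorem AuxBounds.sum_abs_auxCoeff_le {W : ℕ} (h : AuxBounds γ₁ γ₂ c₁ c₂ P G L W)
    (hp : ∀ v ∈ expBox L, |(p v : ℝ)| ≤ P) (ht : t₁ + t₂ ≤ 128 * L) :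
    ∑ v ∈ expBox L, |(auxCoeff p γ₁ γ₂ t₁ t₂ v : ℝ)| ≤ exp (7 * W) := by
  have hP := h.nonneg
  have hG := h.one_le
  calc ∑ v ∈ expBox L, |(auxCoeff p γ₁ γ₂ t₁ t₂ v : ℝ)|
      ≤ ∑ _v ∈ expBox L, P * G ^ (128 * L) := by
        refine sum_le_sum fun v hv ↦ ?_
        simp only [auxCoeff, Int.cast_mul, Int.cast_pow, abs_mul, abs_pow]
        calc |(p v : ℝ)| * |(γ₁ v : ℝ)| ^ t₁ * |(γ₂ v : ℝ)| ^ t₂ ≤ P * G ^ t₁ * G ^ t₂ := by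
              gcongr
              exacts [hp v hv, h.abs_le_left v hv, h.abs_le_right v hv]
          _ = P * G ^ (t₁ + t₂) := by ring
          _ ≤ P * G ^ (128 * L) := by gcongr
    _ = L ^ 3 * P * G ^ (128 * L) := by
        rw [sum_const, card_expBox, Fintype.card_fin, nsmul_eq_mul]
        push_cast
        ring
    _ ≤ exp (7 * W) := h.coeff_le

theorem AuxVanishes.sum_linear_pow_eq_zero (h : AuxVanishes p γ₁ γ₂ L T S) (c₁ c₂ : ℝ) {i j : ℕ}
    (ht : t₁ + t₂ + j < T) (hi : i < S) :
    ∑ v ∈ expBox L, auxCoeff p γ₁ γ₂ t₁ t₂ v * (c₁ * γ₁ v + c₂ * γ₂ v) ^ j *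
      exp (logWeight v * (2 * i + 1 : ℕ)) = 0 := by
  calc _ = ∑ v ∈ expBox L, ∑ k ∈ range (j + 1), c₁ ^ k * c₂ ^ (j - k) * j.choose k *
        (auxCoeff p γ₁ γ₂ (t₁ + k) (t₂ + (j - k)) v * exp (logWeight v * (2 * i + 1 : ℕ))) := by
        refine sum_congr rfl fun v _ ↦ ?_
        rw [add_pow, mul_sum, sum_mul]
        refine sum_congr rfl fun k _ ↦ ?_
        simp only [auxCoeff]
        push_cast
        ring
    _ = ∑ k ∈ range (j + 1), c₁ ^ k * c₂ ^ (j - k) * j.choose k *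
        expSum L (auxCoeff p γ₁ γ₂ (t₁ + k) (t₂ + (j - k))) (2 * i + 1 : ℕ) := by
        rw [sum_comm]
        simp_rw [expSum, mul_sum]
    _ = 0 := by
        refine sum_eq_zero fun k hk ↦ ?_
        have hk := mem_range.mp hk
        rw [h _ _ _ (by omega) hi, mul_zero]

theorem AuxVanishes.norm_iteratedDeriv_le (h : AuxVanishes p γ₁ γ₂ L (256 * L) S)
    (hb : AuxBounds γ₁ γ₂ c₁ c₂ P G L (L * S)) (hp : ∀ v ∈ expBox L, |(p v : ℝ)| ≤ P)
    (hL : 2 ≤ L) (hS : 64 ≤ S) (ht : t₁ + t₂ < 128 * L) {i j : ℕ} (hi : i < S)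
    (hj : j < 128 * L) :
    ‖iteratedDeriv j (cexpSum L (auxCoeff p γ₁ γ₂ t₁ t₂)) (2 * i + 1)‖ ≤
      exp (-(1080 * (L * S))) := by
  have hL' : (2 : ℝ) ≤ L := by exact_mod_cast hL
  have hS' : (64 : ℝ) ≤ S := by exact_mod_cast hS
  have hi' : (i : ℝ) + 1 ≤ S := by exact_mod_cast hi
  have hLS : 64 * (L : ℝ) ≤ L * S := by nlinarith
  have hj' : (j : ℝ) ≤ exp (L * S) := by
    have hj' : (j : ℝ) ≤ 128 * L := by exact_mod_cast hj.le
    have := quadratic_le_exp_of_nonneg (x := L * S) (by linarith)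
    nlinarith
  have happrox := hb.approx
  have hdegree := hb.degree_le
  have hA := hb.sum_abs_auxCoeff_le hp ht.le
  push_cast at happrox hdegree hA
  have hder := norm_iteratedDeriv_cexpSum_le (j := j) (exp_le_one_iff.mpr (by linarith)) hL happrox
    hA (Nat.cast_nonneg (2 * i + 1)) (h.sum_linear_pow_eq_zero c₁ c₂ (by omega) hi)
  push_cast at hder
  calc ‖iteratedDeriv j (cexpSum L (auxCoeff p γ₁ γ₂ t₁ t₂)) (2 * i + 1)‖
      ≤ exp (7 * (L * S)) * (exp (-(1100 * (L * S))) * j * (3 * L) ^ (j - 1) *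
          exp (2.28 * L * (2 * i + 1))) := hder
    _ ≤ exp (7 * (L * S)) * (exp (-(1100 * (L * S))) * exp (L * S) * exp (7 * (L * S)) *
          exp (2.28 * L * (2 * S))) := by
        gcongr
        · exact (pow_le_pow_right₀ (by linarith) (by omega)).trans hdegree
        · linarith
    _ ≤ exp (-(1080 * (L * S))) := by
        simp only [← exp_add]
        exact exp_le_exp.mpr (by linarith)

theorem AuxVanishes.abs_expSum_half_le (h : AuxVanishes p γ₁ γ₂ L (256 * L) S)
    (hb : AuxBounds γ₁ γ₂ c₁ c₂ P G L (L * S)) (hp : ∀ v ∈ expBox L, |(p v : ℝ)| ≤ P)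
    (hL : 2 ≤ L) (hS : 64 ≤ S) (ht : t₁ + t₂ < 128 * L) {m : ℕ} (hm : m ≤ 4 * S) :
    |expSum L (auxCoeff p γ₁ γ₂ t₁ t₂) (m / 2)| ≤ 3 * exp (-(184 * (L * S))) := by
  have hm' : (m : ℝ) ≤ 4 * S := by exact_mod_cast hm
  have hA := hb.sum_abs_auxCoeff_le hp ht.le
  push_cast at hA
  have hsphere : ∀ z ∈ Metric.sphere (S : ℂ) (20 * S),
      ‖cexpSum L (auxCoeff p γ₁ γ₂ t₁ t₂) z‖ ≤
        exp (7 * (L * S)) * exp (2.28 * L * (21 * S)) := by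
    intro z hz
    refine norm_cexpSum_le hA ?_
    have := norm_add_le (z - S) (S : ℂ)
    rw [sub_add_cancel, mem_sphere_iff_norm.mp hz, Complex.norm_natCast] at this
    linarith
  have hnear : ‖((m / 2 : ℝ) : ℂ) - S‖ ≤ S := by
    rw [← Complex.ofReal_natCast S, ← Complex.ofReal_sub, Complex.norm_real, norm_eq_abs, abs_le]
    constructor <;> linarith [(Nat.cast_nonneg m : (0 : ℝ) ≤ m)]
  have hschwarz := norm_le_of_norm_iteratedDeriv_le (differentiable_cexpSum L _) (by omega)
    (exp_pos _).le hsphere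
    (fun i hi j hj ↦ h.norm_iteratedDeriv_le hb hp hL hS ht hi hj) hnear
  rw [cexpSum_ofReal, Complex.norm_real, norm_eq_abs] at hschwarz
  refine hschwarz.trans ?_
  push_cast
  simp only [← exp_add]
  have hmax := exp_le_exp.mpr (show -2 * (S * (128 * L)) + (7 * (L * S) + 2.28 * L * (21 * S)) ≤
    -(184 * (L * S : ℝ)) by nlinarith [(by positivity : (0 : ℝ) ≤ L * S)])
  have hsmall : -(1080 * (L * S : ℝ)) + 7 * (S * (128 * L)) = -(184 * (L * S)) := by ring
  rw [hsmall]
  linarith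

/-- Extrapolation: the analytic upper bound at a half-integer is below the Liouville lower bound for
a nonzero value, since `184 > 15 * (7 + 4.56)`. -/
theorem AuxVanishes.expSum_half_eq_zero (h : AuxVanishes p γ₁ γ₂ L (256 * L) S)
    (hb : AuxBounds γ₁ γ₂ c₁ c₂ P G L (L * S)) (hp : ∀ v ∈ expBox L, |(p v : ℝ)| ≤ P)
    (hL : 2 ≤ L) (hS : 64 ≤ S) (ht : t₁ + t₂ < 128 * L) {m : ℕ} (hm : m ≤ 4 * S) :
    expSum L (auxCoeff p γ₁ γ₂ t₁ t₂) (m / 2) = 0 := by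
  by_contra h0
  have hm' : (m : ℝ) ≤ 4 * S := by exact_mod_cast hm
  have hLS : (1 : ℝ) ≤ L * S := by exact_mod_cast Nat.mul_pos (by omega : 0 < L) (by omega)
  have hA := hb.sum_abs_auxCoeff_le hp ht.le
  push_cast at hA
  have hone : (1 : ℝ) ≤ 3 * exp (-10.6) := by
    calc (1 : ℝ) ≤ |expSum L (auxCoeff p γ₁ γ₂ t₁ t₂) (m / 2)| *
          (exp (7 * (L * S)) * exp (2.28 * L * (m / 2))) ^ 15 :=
          one_le_abs_expSum_half_mul_pow (one_le_exp (by positivity)) hA h0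
      _ ≤ 3 * exp (-(184 * (L * S))) *
          (exp (7 * (L * S)) * exp (2.28 * L * (4 * S / 2))) ^ 15 := by
          gcongr
          exact h.abs_expSum_half_le hb hp hL hS ht hm
      _ = 3 * exp (-10.6 * (L * S)) := by
          rw [← exp_add, ← exp_nat_mul, mul_assoc, ← exp_add]
          congr 2
          push_cast
          ring
      _ ≤ 3 * exp (-10.6) := by gcongr; linarith
  have hlt : exp (-10.6) < 1 / 3 := by
    rw [exp_neg, inv_lt_comm₀ (exp_pos _) (by norm_num)]
    linarith [add_one_le_exp (10.6 : ℝ)]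
  linarith

theorem pow_eq_sum_two_mul_add_pow (b c : ℝ) (t : ℕ) :
    b ^ t = ∑ k ∈ range (t + 1), (1 / 2) ^ t * (-c) ^ (t - k) * t.choose k * (2 * b + c) ^ k := by
  rw [show b = 1 / 2 * ((2 * b + c) + -c) by ring, mul_pow, add_pow, mul_sum]
  exact sum_congr rfl fun k _ ↦ by ring

theorem auxVanishes_of_expSum_half
    (h : ∀ t₁ t₂ i, t₁ + t₂ < T → i < S →
      expSum (2 * L) (auxCoeff p γ₁ γ₂ t₁ t₂) ((2 * i + 1 : ℕ) / 2) = 0)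
    {m : Fin 3 → ℕ} (hm : m ∈ expBox 2) : AuxVanishes (fun v ↦ p (2 • v + m)) γ₁ γ₂ L T S := by
  intro t₁ t₂ i ht hi
  set b₁ : ℕ → ℝ := fun k ↦ (1 / 2) ^ t₁ * (-(γ₁ m : ℝ)) ^ (t₁ - k) * t₁.choose k
  set b₂ : ℕ → ℝ := fun l ↦ (1 / 2) ^ t₂ * (-(γ₂ m : ℝ)) ^ (t₂ - l) * t₂.choose l
  have hγ : ∀ (γ : (Fin 3 → ℕ) →+ ℤ) v, γ (2 • v + m) = 2 * γ v + γ m := fun γ v ↦ by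
    rw [map_add, map_nsmul, two_nsmul, two_mul]
  have hcoeff : ∀ v, (auxCoeff (fun v ↦ p (2 • v + m)) γ₁ γ₂ t₁ t₂ v : ℝ) =
      ∑ k ∈ range (t₁ + 1), ∑ l ∈ range (t₂ + 1),
        b₁ k * b₂ l * auxCoeff p γ₁ γ₂ k l (2 • v + m) := by
    intro v
    simp only [auxCoeff, hγ]
    push_cast
    rw [pow_eq_sum_two_mul_add_pow (γ₁ v) (γ₁ m) t₁, pow_eq_sum_two_mul_add_pow (γ₂ v) (γ₂ m) t₂,
      mul_assoc, sum_mul_sum, mul_sum]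
    refine sum_congr rfl fun k _ ↦ ?_
    rw [mul_sum]
    exact sum_congr rfl fun l _ ↦ by simp only [b₁, b₂]; ring
  calc expSum L (auxCoeff (fun v ↦ p (2 • v + m)) γ₁ γ₂ t₁ t₂) (2 * i + 1 : ℕ)
      = ∑ k ∈ range (t₁ + 1), ∑ l ∈ range (t₂ + 1), b₁ k * b₂ l *
        expSum L (fun v ↦ auxCoeff p γ₁ γ₂ k l (2 • v + m)) (2 * i + 1 : ℕ) := by
        simp only [expSum, hcoeff, sum_mul, mul_sum]
        rw [sum_comm]
        refine sum_congr rfl fun k _ ↦ ?_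
        rw [sum_comm]
        exact sum_congr rfl fun l _ ↦ sum_congr rfl fun v _ ↦ by ring
    _ = 0 := by
        refine sum_eq_zero fun k hk ↦ sum_eq_zero fun l hl ↦ ?_
        rw [mem_range] at hk hl
        rw [expSum_two_smul_add_eq_zero (h k l i (by omega) hi) hm, mul_zero]

/-- The induction halves the degree and doubles the number of zeros at each step. -/
theorem AuxVanishes.coeff_eq_zero {J : ℕ} (h : AuxVanishes p γ₁ γ₂ (2 ^ J) (256 * 2 ^ J) S)
    (hb : AuxBounds γ₁ γ₂ c₁ c₂ P G (2 ^ J) (2 ^ J * S)) (hS : 64 ≤ S)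
    (hp : ∀ v ∈ expBox (2 ^ J), |(p v : ℝ)| ≤ P) {v : Fin 3 → ℕ} (hv : v ∈ expBox (2 ^ J)) :
    p v = 0 := by
  induction J generalizing S p v with
  | zero =>
    have hbox : (expBox (2 ^ 0) : Finset (Fin 3 → ℕ)) = {0} := by decide
    have h0 := h 0 0 0 (by norm_num) (by omega)
    rw [hbox, mem_singleton] at hv
    rw [expSum, hbox] at h0
    simpa [hv, auxCoeff, logWeight] using h0
  | succ J ih =>
    have hL : 2 ≤ 2 ^ (J + 1) := by simpa using Nat.pow_le_pow_right two_pos (Nat.le_add_left 1 J)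
    have hhalf : ∀ t₁ t₂ i, t₁ + t₂ < 256 * 2 ^ J → i < 2 * S →
        expSum (2 * 2 ^ J) (auxCoeff p γ₁ γ₂ t₁ t₂) ((2 * i + 1 : ℕ) / 2) = 0 := by
      intro t₁ t₂ i ht hi
      rw [← pow_succ']
      exact h.expSum_half_eq_zero hb hp hL hS (by rw [pow_succ]; omega) (by omega)
    rw [pow_succ'] at hv hp
    have hm := mod_two_mem_expBox v
    rw [← two_smul_div_two_add_mod_two v]
    refine ih (p := fun u ↦ p (2 • u + _)) (auxVanishes_of_expSum_half hhalf hm) ?_ (by omega)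
      (fun u hu ↦ hp _ (two_smul_add_mem_expBox hu hm)) (div_two_mem_expBox hv)
    rw [show 2 ^ J * (2 * S) = 2 ^ (J + 1) * S by ring]
    exact hb.mono (by positivity) (Nat.pow_le_pow_right two_pos J.le_succ)

end AuxiliaryFunction

section SiegelLemma

open Finset Real

open scoped Matrix

attribute [local instance] Matrix.seminormedAddCommGroup in
theorem exists_ne_zero_mulVec_eq_zero_abs_le {α β : Type*} [Fintype α] [Fintype β]
    (A : Matrix α β ℤ) {R : ℝ} (hR : 1 ≤ R) (hA : ∀ i j, |(A i j : ℝ)| ≤ R)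
    (hα : 0 < Fintype.card α) (hcard : 4 * Fintype.card α ≤ Fintype.card β) :
    ∃ t : β → ℤ, t ≠ 0 ∧ A *ᵥ t = 0 ∧ ∀ j, |(t j : ℝ)| ≤ (Fintype.card β * R) ^ (1 / 3 : ℝ) := by
  obtain ⟨t, ht0, ht, hbound⟩ := Int.Matrix.exists_ne_zero_int_vec_norm_le A (by omega) hα
  refine ⟨t, ht0, ht, fun j ↦ ?_⟩
  have hα' : (1 : ℝ) ≤ Fintype.card α := by exact_mod_cast hα
  have hcard' : 4 * (Fintype.card α : ℝ) ≤ Fintype.card β := by exact_mod_cast hcard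
  have hnorm : max 1 ‖A‖ ≤ R := max_le hR <| (Matrix.norm_le_iff (by linarith)).mpr fun i j ↦ by
    rw [Int.norm_eq_abs]
    exact hA i j
  have hexponent : (Fintype.card α : ℝ) / (Fintype.card β - Fintype.card α) ≤ 1 / 3 := by
    rw [div_le_div_iff₀ (by linarith) (by norm_num)]
    linarith
  calc |(t j : ℝ)| ≤ ‖t‖ := by
        rw [← Int.norm_eq_abs]
        exact norm_le_pi_norm t j
    _ ≤ (Fintype.card β * max 1 ‖A‖) ^
        ((Fintype.card α : ℝ) / (Fintype.card β - Fintype.card α)) := hbound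
    _ ≤ (Fintype.card β * R) ^ ((Fintype.card α : ℝ) / (Fintype.card β - Fintype.card α)) :=
        rpow_le_rpow (by positivity) (by gcongr) (div_nonneg (by linarith) (by linarith))
    _ ≤ (Fintype.card β * R) ^ (1 / 3 : ℝ) :=
        rpow_le_rpow_of_exponent_le
          (one_le_mul_of_one_le_of_one_le (by linarith) hR) hexponent

theorem fib_succ_le_goldenRatio_pow (k : ℕ) : (Nat.fib (k + 1) : ℝ) ≤ goldenRatio ^ k := by
  have h := goldenRatio_mul_fib_succ_add_fib k
  rw [pow_succ'] at h
  exact le_of_mul_le_mul_left (by linarith [(Nat.cast_nonneg (Nat.fib k) : (0 : ℝ) ≤ _)])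
    goldenRatio_pos

variable {p : (Fin 3 → ℕ) → ℤ} {γ₁ γ₂ : (Fin 3 → ℕ) →+ ℤ} {G : ℝ} {L S T : ℕ}

/-- The integral linear system for the coefficients of an auxiliary polynomial. Since
`φ ^ (k + 1) = φ * fib (k + 1) + fib k`, the vanishing at an odd integer follows from two integral
equations; the rows of order at least `T` are zero. -/
def siegelMatrix (γ₁ γ₂ : (Fin 3 → ℕ) →+ ℤ) (L T S : ℕ) :
    Matrix (Fin T × Fin T × Fin S × Fin 2) (expBox L : Finset (Fin 3 → ℕ)) ℤ :=
  .of fun (t₁, t₂, i, c) v ↦ if (t₁ + t₂ : ℕ) < T then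
    γ₁ v ^ (t₁ : ℕ) * γ₂ v ^ (t₂ : ℕ) * (2 ^ (v.1 0 * (2 * i + 1)) * 3 ^ (v.1 1 * (2 * i + 1)) *
      Nat.fib (v.1 2 * (2 * i + 1) + c)) else 0

theorem pow_mul_fib_le_exp {v : Fin 3 → ℕ} (hv : v ∈ expBox L) {i c : ℕ} (hi : i < S)
    (hc : c ≤ 1) :
    (2 : ℝ) ^ (v 0 * (2 * i + 1)) * 3 ^ (v 1 * (2 * i + 1)) * Nat.fib (v 2 * (2 * i + 1) + c) ≤
      exp (4.56 * (L * S)) := by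
  have hi' : (i : ℝ) + 1 ≤ S := by exact_mod_cast hi
  calc (2 : ℝ) ^ (v 0 * (2 * i + 1)) * 3 ^ (v 1 * (2 * i + 1)) * Nat.fib (v 2 * (2 * i + 1) + c)
      ≤ 2 ^ (v 0 * (2 * i + 1)) * 3 ^ (v 1 * (2 * i + 1)) *
          goldenRatio ^ (v 2 * (2 * i + 1)) := by
        gcongr
        refine le_trans ?_ (fib_succ_le_goldenRatio_pow _)
        exact_mod_cast Nat.fib_mono (by omega)
    _ = exp (logWeight v * (2 * i + 1 : ℕ)) := (exp_logWeight_mul v _).symm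
    _ ≤ exp (2.28 * L * (2 * S)) := by
        push_cast
        gcongr
        · exact logWeight_le hv
        · linarith
    _ = exp (4.56 * (L * S)) := by ring_nf

theorem abs_siegelMatrix_le (hG : 1 ≤ G) (hγ₁ : ∀ v ∈ expBox L, |(γ₁ v : ℝ)| ≤ G)
    (hγ₂ : ∀ v ∈ expBox L, |(γ₂ v : ℝ)| ≤ G) (e : Fin T × Fin T × Fin S × Fin 2)
    (v : (expBox L : Finset (Fin 3 → ℕ))) :
    |(siegelMatrix γ₁ γ₂ L T S e v : ℝ)| ≤ G ^ T * exp (4.56 * (L * S)) := by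
  obtain ⟨t₁, t₂, i, c⟩ := e
  obtain ⟨v, hv⟩ := v
  simp only [siegelMatrix, Matrix.of_apply]
  split_ifs with ht
  · push_cast
    rw [abs_mul, abs_mul, abs_pow, abs_pow, abs_of_nonneg (a := _ * (Nat.fib _ : ℝ))
      (by positivity)]
    refine mul_le_mul ?_ (pow_mul_fib_le_exp hv i.2 c.is_le) (by positivity) (by positivity)
    calc |(γ₁ v : ℝ)| ^ (t₁ : ℕ) * |(γ₂ v : ℝ)| ^ (t₂ : ℕ) ≤ G ^ (t₁ : ℕ) * G ^ (t₂ : ℕ) := by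
          gcongr
          exacts [hγ₁ v hv, hγ₂ v hv]
      _ = G ^ (t₁ + t₂ : ℕ) := (pow_add _ _ _).symm
      _ ≤ G ^ T := pow_le_pow_right₀ hG ht.le
  · rw [Int.cast_zero, abs_zero]
    positivity

theorem auxVanishes_of_siegelMatrix_mulVec_eq_zero
    (h : siegelMatrix γ₁ γ₂ L T S *ᵥ (fun v ↦ p v) = 0) : AuxVanishes p γ₁ γ₂ L T S := by
  intro t₁ t₂ i ht hi
  let row (c : Fin 2) : ℝ := ∑ v ∈ expBox L, auxCoeff p γ₁ γ₂ t₁ t₂ v *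
    (2 ^ (v 0 * (2 * i + 1)) * 3 ^ (v 1 * (2 * i + 1)) * Nat.fib (v 2 * (2 * i + 1) + c))
  have hrow : ∀ c, row c = 0 := by
    intro c
    have hc := congrFun h (⟨t₁, by omega⟩, ⟨t₂, by omega⟩, ⟨i, hi⟩, c)
    simp only [Matrix.mulVec, dotProduct, siegelMatrix, Matrix.of_apply, if_pos ht,
      Pi.zero_apply] at hc
    simp only [row]
    rw [← sum_coe_sort, ← Int.cast_zero, ← hc]
    push_cast [auxCoeff]
    exact sum_congr rfl fun v _ ↦ by ring
  have hmul : goldenRatio * expSum L (auxCoeff p γ₁ γ₂ t₁ t₂) (2 * i + 1 : ℕ) =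
      goldenRatio * row 1 + row 0 := by
    simp only [row]
    rw [expSum, mul_sum, mul_sum, ← sum_add_distrib]
    refine sum_congr rfl fun v _ ↦ ?_
    have hφ := goldenRatio_mul_fib_succ_add_fib (v 2 * (2 * i + 1))
    rw [pow_succ] at hφ
    rw [exp_logWeight_mul]
    simp only [Fin.val_zero, Fin.val_one, add_zero]
    linear_combination (-(auxCoeff p γ₁ γ₂ t₁ t₂ v : ℝ) *
      (2 ^ (v 0 * (2 * i + 1)) * 3 ^ (v 1 * (2 * i + 1)))) * hφ
  rw [hrow, hrow, mul_zero, add_zero] at hmul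
  exact (mul_eq_zero.mp hmul).resolve_left goldenRatio_ne_zero

theorem exists_auxVanishes (hG : 1 ≤ G) (hγ₁ : ∀ v ∈ expBox L, |(γ₁ v : ℝ)| ≤ G)
    (hγ₂ : ∀ v ∈ expBox L, |(γ₂ v : ℝ)| ≤ G) (hS : 1 ≤ S) (hLS : 2 ^ 19 * S ≤ L) :
    ∃ p : (Fin 3 → ℕ) → ℤ, (∃ v ∈ expBox L, p v ≠ 0) ∧ AuxVanishes p γ₁ γ₂ L (256 * L) S ∧
      ∀ v ∈ expBox L, |(p v : ℝ)| ≤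
        (L ^ 3 * (G ^ (256 * L) * exp (4.56 * (L * S)))) ^ (1 / 3 : ℝ) := by
  have hbox : Fintype.card (expBox L : Finset (Fin 3 → ℕ)) = L ^ 3 := by
    rw [Fintype.card_coe, card_expBox, Fintype.card_fin]
  have hrows : Fintype.card (Fin (256 * L) × Fin (256 * L) × Fin S × Fin 2) =
      2 ^ 17 * S * L ^ 2 := by
    simp only [Fintype.card_prod, Fintype.card_fin]
    ring
  have hcard : 4 * (2 ^ 17 * S * L ^ 2) ≤ L ^ 3 := by
    calc 4 * (2 ^ 17 * S * L ^ 2) = 2 ^ 19 * S * L ^ 2 := by ring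
      _ ≤ L * L ^ 2 := by gcongr
      _ = L ^ 3 := by ring
  have hL : 1 ≤ L := by omega
  obtain ⟨t, ht0, ht, hbound⟩ := exists_ne_zero_mulVec_eq_zero_abs_le
    (siegelMatrix γ₁ γ₂ L (256 * L) S)
    (one_le_mul_of_one_le_of_one_le (one_le_pow₀ hG) (one_le_exp (by positivity)))
    (abs_siegelMatrix_le hG hγ₁ hγ₂) (by rw [hrows]; positivity) (by rwa [hrows, hbox])
  rw [hbox] at hbound
  let p : (Fin 3 → ℕ) → ℤ := fun v ↦ if hv : v ∈ expBox L then t ⟨v, hv⟩ else 0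
  have hp : (fun v : (expBox L : Finset (Fin 3 → ℕ)) ↦ p v) = t := funext fun v ↦ by simp [p]
  refine ⟨p, ?_, auxVanishes_of_siegelMatrix_mulVec_eq_zero (by rwa [hp]), fun v hv ↦ ?_⟩
  · obtain ⟨v, hv⟩ := Function.ne_iff.mp ht0
    exact ⟨v, v.2, by rwa [congrFun hp v]⟩
  · rw [show p v = t ⟨v, hv⟩ from congrFun hp ⟨v, hv⟩]
    exact_mod_cast hbound ⟨v, hv⟩

end SiegelLemma

section LinearForms

open Finset Real

variable {ι : Type*}

/-- The linear form `v ↦ v a * b r - v r * b a`, a `2 × 2` minor of the rows `v` and `b`. -/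
def minorForm (b : ι → ℤ) (r a : ι) : (ι → ℕ) →+ ℤ where
  toFun v := v a * b r - v r * b a
  map_zero' := by simp
  map_add' v w := by
    simp only [Pi.add_apply, Nat.cast_add]
    ring

theorem minorForm_apply (b : ι → ℤ) (r a : ι) (v : ι → ℕ) :
    minorForm b r a v = v a * b r - v r * b a := rfl

theorem abs_minorForm_le [Fintype ι] [DecidableEq ι] {b : ι → ℤ} {B : ℝ}
    (hb : ∀ j, |(b j : ℝ)| ≤ B) (r a : ι) {L : ℕ} {v : ι → ℕ} (hv : v ∈ expBox L) :
    |(minorForm b r a v : ℝ)| ≤ 2 * L * B := by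
  have hvL : ∀ j, v j ≤ L := fun j ↦ (mem_expBox.mp hv j).le
  rw [minorForm_apply]
  push_cast
  calc |(v a : ℝ) * b r - v r * b a| ≤ v a * |(b r : ℝ)| + v r * |(b a : ℝ)| := by
        refine (abs_sub _ _).trans_eq ?_
        rw [abs_mul, abs_mul, Nat.abs_cast, Nat.abs_cast]
    _ ≤ L * B + L * B := by
        gcongr
        exacts [hvL a, hb r, hvL r, hb a]
    _ = 2 * L * B := by ring

theorem logWeight_sub_minorForm {b : Fin 3 → ℤ} {r : Fin 3} (hr : b r ≠ 0) (v : Fin 3 → ℕ) :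
    logWeight v - (baseLog (r.succAbove 0) / b r * minorForm b r (r.succAbove 0) v +
      baseLog (r.succAbove 1) / b r * minorForm b r (r.succAbove 1) v) =
      v r * ((∑ j, b j * baseLog j) / b r) := by
  have hr' : (b r : ℝ) ≠ 0 := by exact_mod_cast hr
  simp only [logWeight, minorForm_apply, Fin.sum_univ_succAbove _ r, Fin.sum_univ_two]
  push_cast
  field_simp
  ring

theorem abs_logWeight_sub_minorForm_le {b : Fin 3 → ℤ} {r : Fin 3} (hr : b r ≠ 0) {L : ℕ}
    {v : Fin 3 → ℕ} (hv : v ∈ expBox L) :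
    |logWeight v - (baseLog (r.succAbove 0) / b r * minorForm b r (r.succAbove 0) v +
      baseLog (r.succAbove 1) / b r * minorForm b r (r.succAbove 1) v)| ≤
      L * |∑ j, b j * baseLog j| := by
  have hr1 : (1 : ℝ) ≤ |(b r : ℝ)| := by exact_mod_cast Int.one_le_abs hr
  rw [logWeight_sub_minorForm hr, abs_mul, abs_div, Nat.abs_cast]
  gcongr
  · exact_mod_cast (mem_expBox.mp hv r).le
  · exact div_le_self (abs_nonneg _) hr1

theorem two_pow_mul_le_exp {K : ℕ} (hK : 56 ≤ K) : (2 : ℝ) ^ 27 * K ≤ exp (0.45 * K) := by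
  have hK' : (56 : ℝ) ≤ K := by exact_mod_cast hK
  have htwo : (2 : ℝ) ^ 27 ≤ exp 19 := by
    rw [show (19 : ℝ) = (19 : ℕ) * 1 by norm_num, exp_nat_mul]
    calc (2 : ℝ) ^ 27 ≤ 2.7182818283 ^ 19 := by norm_num
      _ ≤ exp 1 ^ 19 := by gcongr; exact exp_one_gt_d9.le
  have hKexp : (K : ℝ) ≤ exp (0.1 * K) := by
    have hquartic := sum_le_exp_of_nonneg (x := 0.1 * K) (by linarith) 5
    norm_num [sum_range_succ, Nat.factorial] at hquartic
    have h3 : 31 * (0.1 * K) ≤ (0.1 * (K : ℝ)) ^ 3 := by nlinarith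
    have h4 : 31 * (0.1 * K) ≤ (0.1 * (K : ℝ)) ^ 4 := by nlinarith
    nlinarith
  calc (2 : ℝ) ^ 27 * K ≤ exp 19 * exp (0.1 * K) := by gcongr
    _ = exp (19 + 0.1 * K) := (exp_add _ _).symm
    _ ≤ exp (0.45 * K) := exp_le_exp.mpr (by linarith)

theorem exists_mul_le_two_pow_le {n : ℕ} (hn : n ≠ 0) : ∃ J, n ≤ 2 ^ J ∧ 2 ^ J ≤ 2 * n :=
  ⟨Nat.log 2 n + 1, (Nat.lt_pow_succ_log_self one_lt_two n).le, by
    rw [pow_succ']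
    exact Nat.mul_le_mul_left 2 (Nat.pow_log_le_self 2 hn)⟩

variable {K L : ℕ}

theorem exp_mul_pow_mul_eq (a : ℝ) (k K L : ℕ) :
    exp (a * K) ^ (k * L) = exp (a * k / 64 * (L * (64 * K) : ℕ)) := by
  rw [← exp_nat_mul]
  congr 1
  push_cast
  ring

theorem pow_three_le_exp (hK : 56 ≤ K) (hLK : 2 ^ 25 * K ≤ L) (hL : L ≤ 2 ^ 26 * K) :
    (L : ℝ) ^ 3 ≤ exp (0.1 * (L * (64 * K) : ℕ)) := by
  have hL' : (L : ℝ) ≤ 2 ^ 26 * K := by exact_mod_cast hL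
  have h1000 : 1000 * (K : ℝ) ≤ (L * (64 * K) : ℕ) := by
    exact_mod_cast (by nlinarith : 1000 * K ≤ L * (64 * K))
  calc (L : ℝ) ^ 3 ≤ exp (0.45 * K) ^ 3 := by
        gcongr
        linarith [two_pow_mul_le_exp hK]
    _ = exp ((3 : ℕ) * (0.45 * K)) := (exp_nat_mul _ _).symm
    _ ≤ exp (0.1 * (L * (64 * K) : ℕ)) := exp_le_exp.mpr (by push_cast at h1000 ⊢; linarith)

theorem mul_exp_neg_le_exp_neg (hK : 56 ≤ K) (hL : L ≤ 2 ^ 26 * K) :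
    L * exp (-(4.73 * 10 ^ 12 * (K : ℝ) ^ 2)) ≤ exp (-(1100 * (L * (64 * K) : ℕ))) := by
  have hK' : (56 : ℝ) ≤ K := by exact_mod_cast hK
  have hL' : (L : ℝ) ≤ 2 ^ 26 * K := by exact_mod_cast hL
  calc L * exp (-(4.73 * 10 ^ 12 * (K : ℝ) ^ 2))
      ≤ exp (0.45 * K) * exp (-(4.73 * 10 ^ 12 * (K : ℝ) ^ 2)) := by
        gcongr
        linarith [two_pow_mul_le_exp hK]
    _ = exp (0.45 * K + -(4.73 * 10 ^ 12 * (K : ℝ) ^ 2)) := (exp_add _ _).symm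
    _ ≤ exp (-(1100 * (L * (64 * K) : ℕ))) := exp_le_exp.mpr (by push_cast; nlinarith)

theorem siegel_bound_le_exp (hK : 56 ≤ K) (hLK : 2 ^ 25 * K ≤ L) (hL : L ≤ 2 ^ 26 * K) :
    ((L : ℝ) ^ 3 * (exp (1.45 * K) ^ (256 * L) * exp (4.56 * (L * (64 * K : ℕ))))) ^ (1 / 3 : ℝ) ≤
      exp (3.49 * (L * (64 * K) : ℕ)) := by
  rw [show 3.49 * ((L * (64 * K) : ℕ) : ℝ) = 10.47 * (L * (64 * K) : ℕ) * (1 / 3) by ring,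
    exp_mul (10.47 * _)]
  refine rpow_le_rpow (by positivity) ?_ (by norm_num)
  rw [exp_mul_pow_mul_eq]
  calc _ ≤ exp (0.1 * (L * (64 * K) : ℕ)) * (exp (1.45 * (256 : ℕ) / 64 * (L * (64 * K) : ℕ)) *
        exp (4.56 * (L * (64 * K : ℕ)))) := by
        gcongr
        exact pow_three_le_exp hK hLK hL
    _ ≤ exp (10.47 * (L * (64 * K) : ℕ)) := by
        rw [← exp_add, ← exp_add]
        exact exp_le_exp.mpr (by push_cast; nlinarith [(by positivity : (0 : ℝ) ≤ L * K)])

theorem auxBounds_minorForm {b : Fin 3 → ℤ} {r : Fin 3} (hr : b r ≠ 0) (hK : 56 ≤ K)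
    (hbK : ∀ j, |(b j : ℝ)| ≤ exp K) (hLK : 2 ^ 25 * K ≤ L) (hL : L ≤ 2 ^ 26 * K)
    (hΛ : |∑ j, b j * baseLog j| ≤ exp (-(4.73 * 10 ^ 12 * (K : ℝ) ^ 2))) :
    AuxBounds (minorForm b r (r.succAbove 0)) (minorForm b r (r.succAbove 1))
      (baseLog (r.succAbove 0) / b r) (baseLog (r.succAbove 1) / b r)
      (exp (3.49 * (L * (64 * K) : ℕ))) (exp (1.45 * K)) L (L * (64 * K)) := by
  have hK' : (56 : ℝ) ≤ K := by exact_mod_cast hK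
  have hLexp : 2 * (L : ℝ) ≤ exp (0.45 * K) := by
    have hL' : (L : ℝ) ≤ 2 ^ 26 * K := by exact_mod_cast hL
    linarith [two_pow_mul_le_exp hK]
  have hG : exp (0.45 * K) * exp K = exp (1.45 * K) := by
    rw [← exp_add]
    ring_nf
  have hminor : ∀ a, ∀ v ∈ expBox L, |(minorForm b r a v : ℝ)| ≤ exp (1.45 * K) :=
    fun a v hv ↦ (abs_minorForm_le hbK r a hv).trans (by rw [← hG]; gcongr)
  refine ⟨fun v hv ↦ ?_, one_le_exp (by positivity), hminor _, hminor _, (exp_pos _).le, ?_, ?_⟩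
  · exact (abs_logWeight_sub_minorForm_le hr hv).trans
      ((mul_le_mul_of_nonneg_left hΛ (Nat.cast_nonneg L)).trans (mul_exp_neg_le_exp_neg hK hL))
  · calc _ ≤ exp (0.1 * (L * (64 * K) : ℕ)) * exp (3.49 * (L * (64 * K) : ℕ)) *
          exp (1.45 * (128 : ℕ) / 64 * (L * (64 * K) : ℕ)) := by
          rw [exp_mul_pow_mul_eq]
          gcongr
          exact pow_three_le_exp hK hLK hL
      _ ≤ exp (7 * (L * (64 * K) : ℕ)) := by
          rw [← exp_add, ← exp_add]
          exact exp_le_exp.mpr (by push_cast; nlinarith [(by positivity : (0 : ℝ) ≤ L * K)])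
  · calc (3 * L : ℝ) ^ (128 * L) ≤ exp (1.45 * K) ^ (128 * L) := by
          gcongr
          have htwo : (2 : ℝ) ≤ exp K := by linarith [add_one_le_exp (K : ℝ)]
          rw [← hG]
          nlinarith [exp_pos (0.45 * K)]
      _ = exp (1.45 * (128 : ℕ) / 64 * (L * (64 * K) : ℕ)) := exp_mul_pow_mul_eq _ _ _ _
      _ ≤ exp (7 * (L * (64 * K) : ℕ)) :=
          exp_le_exp.mpr (by push_cast; nlinarith [(by positivity : (0 : ℝ) ≤ L * K)])

theorem exp_neg_le_abs_sum_mul_baseLog {b : Fin 3 → ℤ} (hb : b ≠ 0) (hK : 56 ≤ K)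
    (hbK : ∀ j, |(b j : ℝ)| ≤ exp K) :
    exp (-(4.73 * 10 ^ 12 * (K : ℝ) ^ 2)) ≤ |∑ j, b j * baseLog j| := by
  by_contra! hΛ
  obtain ⟨r, hr⟩ := Function.ne_iff.mp hb
  obtain ⟨J, hKJ, hJ⟩ := exists_mul_le_two_pow_le (n := 2 ^ 25 * K) (by positivity)
  have hJ' : 2 ^ J ≤ 2 ^ 26 * K := by omega
  have hbounds := auxBounds_minorForm hr hK hbK hKJ hJ' hΛ.le
  obtain ⟨p, ⟨v, hv, hpv⟩, hvanish, hp⟩ := exists_auxVanishes (S := 64 * K) hbounds.one_le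
    hbounds.abs_le_left hbounds.abs_le_right (by omega) (by omega)
  exact hpv <| hvanish.coeff_eq_zero hbounds (by omega)
    (fun u hu ↦ (hp u hu).trans (siegel_bound_le_exp hK hKJ hJ')) hv

end LinearForms

section LucasBounds

open Real

theorem lucas_pos : ∀ n, 0 < lucas n
  | 0 => by norm_num [lucas]
  | 1 => by norm_num [lucas]
  | n + 2 => by
    rw [lucas]
    exact add_pos (lucas_pos (n + 1)) (lucas_pos n)

theorem lucas_lt_lucas {m n : ℕ} (hmn : m < n) (hn : 2 ≤ n) : lucas m < lucas n := by
  have hmono : StrictMono fun k ↦ lucas (k + 1) := strictMono_nat_of_lt_succ fun k ↦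
    lt_add_of_pos_right _ (lucas_pos k)
  obtain ⟨k, rfl⟩ := Nat.exists_eq_add_of_le' (one_le_two.trans hn)
  cases m with
  | zero => exact (by norm_num [lucas] : lucas 0 < lucas 2).trans_le (hmono.monotone (by omega))
  | succ m => exact hmono (by omega)

theorem lucas_injective : Function.Injective lucas := by
  refine .of_lt_imp_ne fun m n hmn ↦ ?_
  rcases Nat.lt_or_ge n 2 with hn | hn
  · obtain ⟨rfl, rfl⟩ : m = 0 ∧ n = 1 := by omega
    norm_num [lucas]
  · exact (lucas_lt_lucas hmn hn).ne

theorem lucas_succ_le_two_pow : ∀ n, lucas (n + 1) ≤ 2 ^ (n + 1)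
  | 0 => by norm_num [lucas]
  | 1 => by norm_num [lucas]
  | n + 2 => by
    have h0 := lucas_succ_le_two_pow n
    have h1 := lucas_succ_le_two_pow (n + 1)
    have hpow : (0 : ℤ) < 2 ^ (n + 1) := by positivity
    rw [lucas]
    rw [pow_succ] at h1 ⊢
    rw [pow_succ]
    linarith

theorem le_of_pow_dvd_lucas_sub {m n p k : ℕ} (hmn : m < n) (hn : 2 ≤ n) (hp : 2 ≤ p)
    (hdvd : (p : ℤ) ^ k ∣ lucas n - lucas m) : k ≤ n := by
  obtain ⟨n, rfl⟩ := Nat.exists_eq_add_of_le' (one_le_two.trans hn)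
  have hle : (p : ℤ) ^ k ≤ 2 ^ (n + 1) := by
    linarith [Int.le_of_dvd (sub_pos.mpr (lucas_lt_lucas hmn hn)) hdvd, lucas_pos m,
      lucas_succ_le_two_pow n]
  have hpow : (2 : ℤ) ^ k ≤ (p : ℤ) ^ k := by gcongr; exact_mod_cast hp
  exact (pow_le_pow_iff_right₀ (one_lt_two (α := ℤ))).mp (hpow.trans hle)

theorem abs_lucas_sub_goldenRatio_pow_le (n : ℕ) : |(lucas n : ℝ) - goldenRatio ^ n| ≤ 1 := by
  rw [lucas_eq_pow_add_pow goldenRatio_add_goldenConj goldenRatio_mul_goldenConj,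
    add_sub_cancel_left, abs_pow]
  exact pow_le_one₀ (abs_nonneg _) abs_goldenConj_lt_one.le

theorem lucas_le_two_mul_goldenRatio_pow {m n : ℕ} (hmn : m ≤ n) :
    (lucas m : ℝ) ≤ 2 * goldenRatio ^ n := by
  have hpow : goldenRatio ^ m ≤ goldenRatio ^ n := pow_le_pow_right₀ one_lt_goldenRatio.le hmn
  have hone : 1 ≤ goldenRatio ^ n := one_le_pow₀ one_lt_goldenRatio.le
  linarith [le_of_abs_le (abs_lucas_sub_goldenRatio_pow_le m)]

theorem abs_lucas_sub_lucas_le {m n : ℕ} (hmn : m ≤ n) :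
    |(lucas n : ℝ) - lucas m| ≤ 2 * goldenRatio ^ n := by
  have hm : (0 : ℝ) < lucas m := by exact_mod_cast lucas_pos m
  have hn : (0 : ℝ) < lucas n := by exact_mod_cast lucas_pos n
  exact abs_sub_le_iff.mpr ⟨by linarith [lucas_le_two_mul_goldenRatio_pow (le_refl n)],
    by linarith [lucas_le_two_mul_goldenRatio_pow hmn]⟩

end LucasBounds

section Growth

open Real Finset

theorem mul_add_one_pow_three_le_exp {t : ℝ} (ht : 55 ≤ t) :
    2 * 10 ^ 15 * (t + 1) ^ 3 ≤ 0.1 * exp t := by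
  have hexp : (10 ^ 23 : ℝ) ≤ exp 55 := by
    rw [show (55 : ℝ) = (55 : ℕ) * 1 by norm_num, exp_nat_mul]
    calc (10 ^ 23 : ℝ) ≤ 2.7182818283 ^ 55 := by norm_num
      _ ≤ exp 1 ^ 55 := by gcongr; exact exp_one_gt_d9.le
  obtain ⟨s, hs, rfl⟩ : ∃ s, 0 ≤ s ∧ t = 55 + s := ⟨t - 55, by linarith, by ring⟩
  have hcubic := sum_le_exp_of_nonneg hs 4
  norm_num [sum_range_succ, Nat.factorial] at hcubic
  calc 2 * 10 ^ 15 * (55 + s + 1) ^ 3 ≤ 10 ^ 22 * (1 + s + s ^ 2 / 2 + s ^ 3 / 6) := by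
        nlinarith [pow_nonneg hs 2, pow_nonneg hs 3]
    _ ≤ 0.1 * (10 ^ 23 * exp s) := by linarith
    _ ≤ 0.1 * exp (55 + s) := by rw [exp_add]; gcongr

theorem lt_log_of_mul_log_pow_four_le {t : ℝ} (ht : 2 ≤ t)
    (h : 2.4 * 10 ^ 17 * log t ^ 4 ≤ t) : 55 < log t := by
  have hexp : ∀ k : ℕ, (2.7182818286 : ℝ) ^ k < t → (k : ℝ) < log t := fun k hk ↦ by
    rw [lt_log_iff_exp_lt (by linarith), ← mul_one (k : ℝ), exp_nat_mul]
    exact (pow_le_pow_left₀ (exp_pos 1).le exp_one_lt_d9.le k).trans_lt hk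
  have himprove : ∀ (a : ℝ) (k : ℕ), 0 ≤ a → (2.7182818286 : ℝ) ^ k < 2.4 * 10 ^ 17 * a ^ 4 →
      a < log t → (k : ℝ) < log t := fun a k ha hk hlog ↦
    hexp k (hk.trans_le (le_trans (by gcongr) h))
  have h0 : 0.69 < log t := by linarith [log_le_log two_pos ht, log_two_gt_d9]
  have h38 := himprove 0.69 38 (by norm_num) (by norm_num) h0
  have h54 := himprove (38 : ℕ) 54 (by norm_num) (by norm_num) h38
  exact_mod_cast himprove (54 : ℕ) 55 (by norm_num) (by norm_num) h54

end Growth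

section ArchimedeanGap

open Real

theorem min_mul_abs_log_sub_log_le {a b : ℝ} (ha : 0 < a) (hb : 0 < b) :
    min a b * |log a - log b| ≤ |a - b| := by
  wlog hab : a ≤ b generalizing a b
  · rw [min_comm, abs_sub_comm, abs_sub_comm a]
    exact this hb ha (le_of_not_ge hab)
  rw [min_eq_left hab, abs_sub_comm, ← log_div hb.ne' ha.ne',
    abs_of_nonneg (log_nonneg ((one_le_div ha).mpr hab)), abs_sub_comm,
    abs_of_nonneg (sub_nonneg.mpr hab)]
  calc a * log (b / a) ≤ a * (b / a - 1) := by
        gcongr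
        exact log_le_sub_one_of_pos (div_pos hb ha)
    _ = b - a := by field_simp

theorem exp_logWeight (x y n : ℕ) :
    exp (logWeight ![x, y, n]) = 2 ^ x * 3 ^ y * goldenRatio ^ n := by
  simpa using exp_logWeight_mul ![x, y, n] 1

variable {K : ℕ}

theorem exp_neg_le_abs_logWeight_sub {u v : Fin 3 → ℕ} (huv : u ≠ v) (hK : 56 ≤ K)
    (hu : ∀ j, (u j : ℝ) ≤ exp K) (hv : ∀ j, (v j : ℝ) ≤ exp K) :
    exp (-(4.73 * 10 ^ 12 * (K : ℝ) ^ 2)) ≤ |logWeight u - logWeight v| := by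
  have hne : (fun j ↦ (u j : ℤ) - v j) ≠ 0 := fun h ↦
    huv (funext fun j ↦ by exact_mod_cast sub_eq_zero.mp (congrFun h j))
  have hform := exp_neg_le_abs_sum_mul_baseLog hne hK fun j ↦ by
    push_cast
    exact abs_sub_le_of_nonneg_of_le (Nat.cast_nonneg _) (hu j) (Nat.cast_nonneg _) (hv j)
  simpa [logWeight, sub_mul] using hform

theorem min_mul_exp_neg_le_abs_sub {x y n x' y' n' : ℕ} (hK : 56 ≤ K)
    (h : ![x, y, n] ≠ ![x', y', n']) (hle : ∀ a ∈ [x, y, n, x', y', n'], (a : ℝ) ≤ exp K) :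
    min ((2 : ℝ) ^ x * 3 ^ y * goldenRatio ^ n) (2 ^ x' * 3 ^ y' * goldenRatio ^ n') *
        exp (-(4.73 * 10 ^ 12 * (K : ℝ) ^ 2)) ≤
      |2 ^ x * 3 ^ y * goldenRatio ^ n - 2 ^ x' * 3 ^ y' * goldenRatio ^ n'| := by
  simp only [← exp_logWeight]
  refine le_trans ?_ (min_mul_abs_log_sub_log_le (exp_pos _) (exp_pos _))
  rw [log_exp, log_exp]
  simp only [List.forall_mem_cons] at hle
  obtain ⟨hx, hy, hn, hx', hy', hn', -⟩ := hle
  gcongr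
  refine exp_neg_le_abs_logWeight_sub h hK ?_ ?_ <;>
    simp only [Fin.forall_fin_succ, Fin.forall_fin_zero, Matrix.cons_val_zero, Matrix.cons_val_succ]
  exacts [⟨hx, hy, hn, trivial⟩, ⟨hx', hy', hn', trivial⟩]

theorem min_two_pow_mul_three_pow_mul_exp_neg_le {x y x' y' : ℕ} (hK : 56 ≤ K)
    (h : (2 : ℝ) ^ x * 3 ^ y ≠ 2 ^ x' * 3 ^ y') (hle : ∀ a ∈ [x, y, x', y'], (a : ℝ) ≤ exp K) :
    min ((2 : ℝ) ^ x * 3 ^ y) (2 ^ x' * 3 ^ y') * exp (-(4.73 * 10 ^ 12 * (K : ℝ) ^ 2)) ≤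
      |2 ^ x * 3 ^ y - 2 ^ x' * 3 ^ y'| := by
  have hne : ![x, y, 0] ≠ ![x', y', 0] := fun heq ↦ h <| by
    obtain ⟨rfl, rfl⟩ : x = x' ∧ y = y' := by simpa using heq
    rfl
  simpa using min_mul_exp_neg_le_abs_sub hK hne
    (by simpa [(exp_pos (K : ℝ)).le, and_assoc] using hle)

theorem two_pow_max_le (x y : ℕ) : (2 : ℝ) ^ max x y ≤ 2 ^ x * 3 ^ y := by
  rcases le_total x y with hxy | hxy
  · rw [max_eq_right hxy]
    calc (2 : ℝ) ^ y ≤ 3 ^ y := by gcongr; norm_num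
      _ ≤ 2 ^ x * 3 ^ y := le_mul_of_one_le_left (by positivity) (one_le_pow₀ one_le_two)
  · rw [max_eq_left hxy]
    exact le_mul_of_one_le_right (by positivity) (one_le_pow₀ (by norm_num))

theorem four_mul_goldenRatio_pow_mul_exp_lt {M : ℕ} (hM : 100 ≤ M) :
    4 * (goldenRatio ^ M * exp (0.001 * M)) < 2 ^ M := by
  have hM' : (100 : ℝ) ≤ M := by exact_mod_cast hM
  have hφ : 0 < goldenRatio ^ M := pow_pos goldenRatio_pos M
  refine (log_lt_log_iff (by positivity) (by positivity)).mp ?_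
  rw [log_mul four_ne_zero (by positivity), log_mul hφ.ne' (exp_pos _).ne', log_exp, log_pow,
    log_pow, show (4 : ℝ) = 2 ^ 2 by norm_num, log_pow, Nat.cast_ofNat]
  nlinarith [log_goldenRatio_lt, log_two_gt_d9, log_two_lt_d9]

theorem two_pow_max_le_of_abs_sub_le {x y x' y' : ℕ} {E B : ℝ}
    (h : (2 : ℝ) ^ x * 3 ^ y ≠ 2 ^ x' * 3 ^ y') (hK : 56 ≤ K)
    (hexp : (max (max x y) (max x' y') : ℕ) ≤ exp K) (hE : 4.73 * 10 ^ 12 * (K : ℝ) ^ 2 ≤ E)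
    (hB : |(2 : ℝ) ^ x * 3 ^ y - 2 ^ x' * 3 ^ y'| ≤ B) :
    (2 : ℝ) ^ max (max x y) (max x' y') ≤ 2 * (B * exp E) := by
  have hgap := min_two_pow_mul_three_pow_mul_exp_neg_le hK h fun a ha ↦
    le_trans (Nat.cast_le.mpr (by
      simp only [List.mem_cons, List.not_mem_nil, or_false] at ha
      omega)) hexp
  have hmin : min ((2 : ℝ) ^ x * 3 ^ y) (2 ^ x' * 3 ^ y') ≤ B * exp E := by
    rw [← div_le_iff₀ (exp_pos E), div_eq_mul_inv, ← exp_neg]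
    exact le_trans (by gcongr) (hgap.trans hB)
  have hBE : B ≤ B * exp E := le_mul_of_one_le_right ((abs_nonneg _).trans hB)
    (one_le_exp (hE.trans' (by positivity)))
  calc (2 : ℝ) ^ max (max x y) (max x' y') ≤ max (2 ^ x * 3 ^ y) (2 ^ x' * 3 ^ y') := by
        rw [(pow_right_mono₀ one_le_two).map_max]
        exact max_le_max (two_pow_max_le x y) (two_pow_max_le x' y')
    _ ≤ 2 * (B * exp E) := by linarith [max_sub_min_eq_abs' ((2 : ℝ) ^ x * 3 ^ y) (2 ^ x' * 3 ^ y')]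

/-- Were the largest exponent `M` bigger than `n`, the larger of the two numbers would be at least
`2 ^ M`, but at most `φ ^ M * exp (o(M))` by the lower bound for their difference. -/
theorem exponents_le_of_abs_sub_le {n x y x' y' : ℕ} (hn : 55 < log n)
    (h : (2 : ℝ) ^ x * 3 ^ y ≠ 2 ^ x' * 3 ^ y')
    (hsub : |(2 : ℝ) ^ x * 3 ^ y - 2 ^ x' * 3 ^ y'| ≤ 2 * goldenRatio ^ n) :
    max (max x y) (max x' y') ≤ n := by
  by_contra! hnM
  set M : ℕ := max (max x y) (max x' y')
  have hn0 : (0 : ℝ) < n := Nat.cast_pos.mpr (Nat.pos_of_ne_zero fun h0 ↦ by norm_num [h0] at hn)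
  have hM0 : (0 : ℝ) < M := hn0.trans (by exact_mod_cast hnM)
  have hlogM : 55 < log M := hn.trans (log_lt_log hn0 (by exact_mod_cast hnM))
  have hgrow := mul_add_one_pow_three_le_exp hlogM.le
  rw [exp_log hM0] at hgrow
  have hM100 : 100 ≤ M := by
    exact_mod_cast (by nlinarith [sq_nonneg (log (M : ℝ) + 1)] : (100 : ℝ) ≤ M)
  have hE : 4.73 * 10 ^ 12 * (⌈log M⌉₊ : ℝ) ^ 2 ≤ 0.001 * M := by
    have hceil := (Nat.ceil_lt_add_one (by linarith : 0 ≤ log M)).le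
    have hsq : (⌈log M⌉₊ : ℝ) ^ 2 ≤ (log M + 1) ^ 2 := by gcongr
    nlinarith [sq_nonneg (log M + 1)]
  have hφ : goldenRatio ^ n ≤ goldenRatio ^ M := pow_le_pow_right₀ one_lt_goldenRatio.le hnM.le
  have hle := two_pow_max_le_of_abs_sub_le h (Nat.lt_ceil.mpr (by exact_mod_cast hlogM))
    ((log_le_iff_le_exp hM0).mp (Nat.le_ceil _)) hE
    (hsub.trans (mul_le_mul_of_nonneg_left hφ two_pos.le))
  exact (four_mul_goldenRatio_pow_mul_exp_lt hM100).not_ge (hle.trans_eq (by ring))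

end ArchimedeanGap

section LucasExponentials

open Real

variable {c : ℤ} {K : ℕ}

theorem two_pow_mul_three_pow_eq {n x y : ℕ} (h : c = lucas n - 2 ^ x * 3 ^ y) :
    (2 : ℝ) ^ x * 3 ^ y = lucas n - c := by
  rw [h]
  push_cast
  ring

theorem two_pow_mul_three_pow_ne {m n x x' y y' : ℕ} (h : c = lucas n - 2 ^ x * 3 ^ y)
    (h' : c = lucas m - 2 ^ x' * 3 ^ y') (hmn : m < n) :
    (2 : ℝ) ^ x * 3 ^ y ≠ 2 ^ x' * 3 ^ y' := by
  rw [two_pow_mul_three_pow_eq h, two_pow_mul_three_pow_eq h']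
  exact fun heq ↦ lucas_injective.ne hmn.ne' (by exact_mod_cast sub_left_injective heq)

theorem abs_two_pow_mul_three_pow_sub_le {m n x x' y y' : ℕ} (h : c = lucas n - 2 ^ x * 3 ^ y)
    (h' : c = lucas m - 2 ^ x' * 3 ^ y') (hmn : m ≤ n) :
    |(2 : ℝ) ^ x * 3 ^ y - 2 ^ x' * 3 ^ y'| ≤ 2 * goldenRatio ^ n := by
  rw [two_pow_mul_three_pow_eq h, two_pow_mul_three_pow_eq h', sub_sub_sub_cancel_right]
  exact abs_lucas_sub_lucas_le hmn

theorem abs_le_two_pow_mul_three_pow_add {m n x y : ℕ} (h : c = lucas m - 2 ^ x * 3 ^ y)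
    (hmn : m ≤ n) : |(c : ℝ)| ≤ 2 ^ x * 3 ^ y + 2 * goldenRatio ^ n := by
  have hm : (0 : ℝ) < lucas m := by exact_mod_cast lucas_pos m
  have hX : (0 : ℝ) < 2 ^ x * 3 ^ y := by positivity
  rw [two_pow_mul_three_pow_eq h] at hX ⊢
  have hle := lucas_le_two_mul_goldenRatio_pow hmn
  exact abs_le.mpr ⟨by linarith, by linarith⟩

theorem goldenRatio_pow_mul_exp_neg_le {n x y : ℕ} (hn : n ≠ 0) (hK : 56 ≤ K)
    (hle : ∀ a ∈ [x, y, n], (a : ℝ) ≤ exp K) (h : c = lucas n - 2 ^ x * 3 ^ y) :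
    goldenRatio ^ n * exp (-(4.73 * 10 ^ 12 * (K : ℝ) ^ 2)) ≤ 2 * (1 + |(c : ℝ)|) := by
  have hne : ![x, y, 0] ≠ ![0, 0, n] := by simp [hn.symm]
  have hgap := min_mul_exp_neg_le_abs_sub hK hne
    (by simpa [(exp_pos (K : ℝ)).le, and_assoc] using hle)
  simp only [pow_zero, mul_one, one_mul] at hgap
  set X : ℝ := 2 ^ x * 3 ^ y with hX
  have hdist : |X - goldenRatio ^ n| ≤ 1 + |(c : ℝ)| := by
    rw [hX, two_pow_mul_three_pow_eq h, sub_right_comm]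
    exact (abs_sub _ _).trans (by gcongr; exact abs_lucas_sub_goldenRatio_pow_le n)
  have hφ : 0 < goldenRatio ^ n := pow_pos goldenRatio_pos n
  rcases le_total (goldenRatio ^ n) (2 * X) with hnear | hfar
  · have hmin : goldenRatio ^ n / 2 ≤ min X (goldenRatio ^ n) :=
      le_min (by linarith) (by linarith)
    linarith [mul_le_mul_of_nonneg_right hmin (exp_pos (-(4.73 * 10 ^ 12 * (K : ℝ) ^ 2))).le]
  · have hexp : exp (-(4.73 * 10 ^ 12 * (K : ℝ) ^ 2)) ≤ 1 :=
      exp_le_one_iff.mpr (neg_nonpos.mpr (by positivity))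
    linarith [mul_le_of_le_one_right hφ.le hexp, neg_abs_le (X - goldenRatio ^ n)]

theorem abs_mul_exp_neg_le {m n x x' y y' : ℕ} (hK : 56 ≤ K)
    (hle : ∀ a ∈ [x, y, x', y'], (a : ℝ) ≤ exp K) (h : c = lucas n - 2 ^ x * 3 ^ y)
    (h' : c = lucas m - 2 ^ x' * 3 ^ y') (hmn : m < n) :
    |(c : ℝ)| * exp (-(4.73 * 10 ^ 12 * (K : ℝ) ^ 2)) ≤ 4 * goldenRatio ^ n := by
  have hgap := (min_two_pow_mul_three_pow_mul_exp_neg_le hK (two_pow_mul_three_pow_ne h h' hmn)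
    hle).trans (abs_two_pow_mul_three_pow_sub_le h h' hmn.le)
  have hexp : exp (-(4.73 * 10 ^ 12 * (K : ℝ) ^ 2)) ≤ 1 :=
    exp_le_one_iff.mpr (neg_nonpos.mpr (by positivity))
  have : 0 < goldenRatio ^ n := pow_pos goldenRatio_pos n
  calc |(c : ℝ)| * exp (-(4.73 * 10 ^ 12 * (K : ℝ) ^ 2))
      ≤ (min (2 ^ x * 3 ^ y) (2 ^ x' * 3 ^ y') + 2 * goldenRatio ^ n) *
        exp (-(4.73 * 10 ^ 12 * (K : ℝ) ^ 2)) := by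
        rw [← min_add_add_right]
        gcongr
        exact le_min (abs_le_two_pow_mul_three_pow_add h le_rfl)
          (abs_le_two_pow_mul_three_pow_add h' hmn.le)
    _ ≤ 2 * goldenRatio ^ n + 2 * goldenRatio ^ n := by
        rw [add_mul]
        exact add_le_add hgap (mul_le_of_le_one_right (by positivity) hexp)
    _ = 4 * goldenRatio ^ n := by ring

variable {n n₁ n₂ x x₁ x₂ y y₁ y₂ : ℕ}

theorem sub_mul_log_goldenRatio_le (h1 : c = lucas n - 2 ^ x * 3 ^ y)
    (h2 : c = lucas n₁ - 2 ^ x₁ * 3 ^ y₁) (h3 : c = lucas n₂ - 2 ^ x₂ * 3 ^ y₂) (hnn : n₁ < n)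
    (hnn' : n₂ < n₁) (hn : 55 < log n) (hK : 56 ≤ K) (hnK : log n ≤ K) :
    ((n : ℝ) - n₁) * log goldenRatio ≤ 2 * (4.73 * 10 ^ 12 * (K : ℝ) ^ 2) + 3 := by
  have hn0 : (0 : ℝ) < n := Nat.cast_pos.mpr (Nat.zero_lt_of_lt hnn)
  have hexp : ∀ a ≤ n, (a : ℝ) ≤ exp K := fun a ha ↦
    (Nat.cast_le.mpr ha).trans ((log_le_iff_le_exp hn0).mp hnK)
  have hmax := exponents_le_of_abs_sub_le hn (two_pow_mul_three_pow_ne h1 h2 hnn)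
    (abs_two_pow_mul_three_pow_sub_le h1 h2 hnn.le)
  have hmax' := exponents_le_of_abs_sub_le hn (two_pow_mul_three_pow_ne h2 h3 hnn')
    ((abs_two_pow_mul_three_pow_sub_le h2 h3 hnn'.le).trans
      (by gcongr; exact one_lt_goldenRatio.le))
  simp only [max_le_iff] at hmax hmax'
  have hupper := goldenRatio_pow_mul_exp_neg_le (Nat.ne_zero_of_lt hnn) hK (by simp_all) h1
  have hc := abs_mul_exp_neg_le hK (by simp_all) h2 h3 hnn'
  set E : ℝ := 4.73 * 10 ^ 12 * (K : ℝ) ^ 2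
  have hE1 : exp (-E) ≤ 1 := exp_le_one_iff.mpr (neg_nonpos.mpr (by positivity))
  have hone : 1 ≤ goldenRatio ^ n₁ := one_le_pow₀ one_lt_goldenRatio.le
  have hφ : 0 < goldenRatio ^ n := pow_pos goldenRatio_pos n
  have hle : goldenRatio ^ n * (exp (-E) * exp (-E)) ≤ 10 * goldenRatio ^ n₁ := by
    calc goldenRatio ^ n * (exp (-E) * exp (-E)) = goldenRatio ^ n * exp (-E) * exp (-E) := by ring
      _ ≤ 2 * (1 + |(c : ℝ)|) * exp (-E) := by gcongr
      _ ≤ 10 * goldenRatio ^ n₁ := by linarith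
  have hlog := log_le_log (by positivity) hle
  rw [← exp_add, log_mul hφ.ne' (exp_pos _).ne', log_exp, log_pow,
    log_mul (by norm_num) (by positivity), log_pow] at hlog
  have hlog10 : log 10 ≤ 3 := by
    have h16 := log_le_log (by norm_num) (show (10 : ℝ) ≤ 2 ^ 4 by norm_num)
    rw [log_pow] at h16
    push_cast at h16
    linarith [log_two_lt_d9]
  linarith

theorem sub_add_one_le (h1 : c = lucas n - 2 ^ x * 3 ^ y)
    (h2 : c = lucas n₁ - 2 ^ x₁ * 3 ^ y₁) (h3 : c = lucas n₂ - 2 ^ x₂ * 3 ^ y₂) (hnn : n₁ < n)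
    (hnn' : n₂ < n₁) (hn : 55 < log n) (hK : 56 ≤ K) (hnK : log n ≤ K) :
    (n : ℝ) - n₁ + 1 ≤ 2 * 10 ^ 13 * (K : ℝ) ^ 2 := by
  have hd := sub_mul_log_goldenRatio_le h1 h2 h3 hnn hnn' hn hK hnK
  have hK56 : (56 : ℝ) ≤ K := by exact_mod_cast hK
  have hnn₁ : (n₁ : ℝ) < n := by exact_mod_cast hnn
  nlinarith [lt_log_goldenRatio]

theorem mul_add_one_mul_le_two_mul {a d k t : ℝ} (ht : 55 ≤ log t) (hk : 1 ≤ k)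
    (hkt : k ≤ log t + 1) (hd : d + 1 ≤ 2 * 10 ^ 13 * k ^ 2) (had : a + d = t) (ht0 : 0 < t) :
    64 * (d + 1) * k ≤ 2 * a := by
  have hgrow := mul_add_one_pow_three_le_exp ht
  rw [exp_log ht0] at hgrow
  have hk3 : k ^ 3 ≤ (log t + 1) ^ 3 := by gcongr
  have hk23 : k ^ 2 ≤ k ^ 3 := pow_le_pow_right₀ hk (by norm_num)
  have hdk : (d + 1) * k ≤ 2 * 10 ^ 13 * k ^ 2 * k := by gcongr
  linarith

theorem mul_sq_add_four_lt {d k t : ℝ} (ht : 55 ≤ t) (hk : 0 ≤ k) (hkt : k ≤ t + 1)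
    (hd : d + 1 ≤ 2 * 10 ^ 13 * k ^ 2) : 4096 * (d + 1) * k ^ 2 + 4 < 2.4 * 10 ^ 17 * t ^ 4 := by
  have hk2 : k ^ 2 ≤ 1.05 * t ^ 2 := by
    calc k ^ 2 ≤ (t + 1) ^ 2 := by gcongr
      _ ≤ 1.05 * t ^ 2 := by nlinarith
  have ht4 : 1 ≤ t ^ 4 := one_le_pow₀ (by linarith)
  calc 4096 * (d + 1) * k ^ 2 + 4 ≤ 4096 * (2 * 10 ^ 13 * k ^ 2) * k ^ 2 + 4 := by gcongr
    _ = 8192 * 10 ^ 13 * (k ^ 2) ^ 2 + 4 := by ring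
    _ ≤ 8192 * 10 ^ 13 * (1.05 * t ^ 2) ^ 2 + 4 := by gcongr
    _ < 2.4 * 10 ^ 17 * t ^ 4 := by linarith

theorem lt_log_pow_four_of_pow_dvd (h1 : c = lucas n - 2 ^ x * 3 ^ y)
    (h2 : c = lucas n₁ - 2 ^ x₁ * 3 ^ y₁) (h3 : c = lucas n₂ - 2 ^ x₂ * 3 ^ y₂) (hnn : n₁ < n)
    (hnn' : n₂ < n₁) {p m : ℕ} (hp : p = 2 ∨ p = 3)
    (hdvd : (p : ℤ) ^ m ∣ lucas n - lucas n₁) : (m : ℝ) < 2.4 * 10 ^ 17 * log n ^ 4 := by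
  by_contra! hm
  have hn2 : 2 ≤ n := by omega
  have hmn : (m : ℝ) ≤ n := by exact_mod_cast le_of_pow_dvd_lucas_sub hnn hn2 (by omega) hdvd
  have hn : 55 < log n := lt_log_of_mul_log_pow_four_le (by exact_mod_cast hn2) (hm.trans hmn)
  refine hm.not_gt ?_
  set K : ℕ := ⌈log n⌉₊
  have hK : 56 ≤ K := Nat.lt_ceil.mpr (by exact_mod_cast hn)
  have hnK : log n ≤ K := Nat.le_ceil _
  have hK' : (K : ℝ) ≤ log n + 1 := (Nat.ceil_lt_add_one (by linarith)).le
  have hgap := sub_add_one_le h1 h2 h3 hnn hnn' hn hK hnK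
  obtain ⟨d, rfl⟩ := Nat.exists_eq_add_of_le hnn.le
  rw [Nat.cast_add, add_sub_cancel_left] at hgap
  have hn₁ : 64 * (d + 1) * K ≤ 2 * n₁ := by
    exact_mod_cast mul_add_one_mul_le_two_mul hn.le (by exact_mod_cast hK.trans' (by norm_num))
      hK' hgap (Nat.cast_add n₁ d).symm (by positivity)
  have hlt := lt_of_pow_dvd_lucas_sub hp (by omega) hdvd hK (by exact_mod_cast hnK) hn₁
  calc (m : ℝ) < 4096 * (d + 1) * K ^ 2 + 4 := by exact_mod_cast hlt
    _ < 2.4 * 10 ^ 17 * log (n₁ + d : ℕ) ^ 4 :=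
      mul_sq_add_four_lt hn.le (Nat.cast_nonneg K) hK' hgap

end LucasExponentials

theorem neg_c_min_bound_general (c : ℤ) (n n₁ n₂ x x₁ x₂ y y₁ y₂ : ℕ)
    (h1 : c = lucas n - 2 ^ x * 3 ^ y) (h2 : c = lucas n₁ - 2 ^ x₁ * 3 ^ y₁)
    (h3 : c = lucas n₂ - 2 ^ x₂ * 3 ^ y₂) (hnn : n₁ < n) (hnn' : n₂ < n₁) :
    (min x x₁ : ℝ) < 2.4 * 10 ^ 17 * Real.log n ^ 4 ∧
    (min y y₁ : ℝ) < 2.4 * 10 ^ 17 * Real.log n ^ 4 := by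
  have hsub : lucas n - lucas n₁ = 2 ^ x * 3 ^ y - 2 ^ x₁ * 3 ^ y₁ := by linarith
  have htwo : (2 : ℤ) ^ min x x₁ ∣ lucas n - lucas n₁ := hsub ▸ dvd_sub
    ((pow_dvd_pow _ (min_le_left _ _)).mul_right _) ((pow_dvd_pow _ (min_le_right _ _)).mul_right _)
  have hthree : (3 : ℤ) ^ min y y₁ ∣ lucas n - lucas n₁ := hsub ▸ dvd_sub
    ((pow_dvd_pow _ (min_le_left _ _)).mul_left _) ((pow_dvd_pow _ (min_le_right _ _)).mul_left _)
  exact_mod_cast And.intro (lt_log_pow_four_of_pow_dvd h1 h2 h3 hnn hnn' (.inl rfl) htwo)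
    (lt_log_pow_four_of_pow_dvd h1 h2 h3 hnn hnn' (.inr rfl) hthree)

theorem neg_c_min_bound (c : ℤ) (hc : c < 0)
    (n n₁ n₂ x x₁ x₂ y y₁ y₂ : ℕ)
    (h1 : c = lucas n - 2 ^ x * 3 ^ y) (h2 : c = lucas n₁ - 2 ^ x₁ * 3 ^ y₁)
    (h3 : c = lucas n₂ - 2 ^ x₂ * 3 ^ y₂)
    (hnn : n₁ < n) (hnn' : n₂ < n₁) (hn₁ : 500 < n₁) (hn : 60000 ≤ n) :
    (min x x₁ : ℝ) < 2.4 * 10 ^ 17 * Real.log n ^ 4 ∧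
    (min y y₁ : ℝ) < 2.4 * 10 ^ 17 * Real.log n ^ 4 :=
  neg_c_min_bound_general c n n₁ n₂ x x₁ x₂ y y₁ y₂ h1 h2 h3 hnn hnn'
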